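/- Let F : ℝ³ × ℝ⁸ → ℝ be given by F(x,y,z,λ) = x³ + y²z + yz² + λ₁ + λ₂x + λ₃y + λ₄z + λ₅xy + λ₆xz + λ₇yz + λ₈xyz. Then there exists ε₀ > 0 such that for every ε with 0 < ε ≤ ε₀ there exists δ > 0 with the following property: writing Σ = {λ ∈ ℝ⁸ : ‖λ‖ < δ and there exists p ∈ ℝ³ with ‖p‖ ≤ ε, F(p,λ) = 0 and the gradient of F(·,λ) vanishes at p}, there exist 7 points of the set {λ ∈ ℝ⁸ : ‖λ‖ < δ} \ Σ lying pairwise in distinct connected components of this set (i.e. the complement of the local discriminant has at least 7 connected components). -/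

import Mathlib

/-!
The quasi-homogeneous structure of the deformation reduces the problem to a global one. The map
`scale s` of the parameters corresponds to the dilation by `s` of `ℝ³`, and the critical points of
`F(·, l)` remain bounded while `l` does and `|l 7| ≤ 1` (`crit_bound`). Hence for small `δ` the
complement of the local discriminant consists of parameters in the set `U` of nonsingular affine
cubic surfaces `F(·, l) = 0` (`exists_delta`), while seven sample surfaces in `U` can be shrunk into
the `δ`-ball without leaving `U`. It remains to show that the samples lie in different connected
components of `U`, which is done by properties of surfaces that are constant on connected subsets
of `U`.

Left lines. Consider the straight lines on the surface along which the tangent plane rotates in the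
positive sense with nonvanishing angular velocity, also at infinity (`Left`). In projective terms
these are the lines which are elliptic in the sense of Segre, with one of the two possible senses
of rotation. Nonsingularity makes this an open and closed condition on a
line (`WLeft.left`), lines on surfaces with bounded parameters form a compact family since the cubic
part of `F` vanishes on no plane, and each left line extends uniquely to nearby surfaces by the
inverse function theorem. Two different left lines are never coplanar (`no_meet`, `no_par`): at a
common point, finite or infinite, the rotations of the tangent plane along the two lines would have
opposite senses. Therefore the sign of the determinant `det (v, v', p' - p)` of two left lines and
the order `Maj` of their directions do not change in a connected family. So the existence `T k σ` of
`k` left lines with increasing directions and signs prescribed by `σ` is an invariant (`T_const`).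

Ovals. The existence `Ep` of a critical point `p` with negative value such that all lines through
`p` meet the surface in the maximal number of real points is an invariant as well (`Ep_const`).

Symmetry. The substitution `F ↦ -F(-·)` acts on the parameters by `sg = scale (-1)` and preserves
`U`, so that each invariant yields another one.

The samples are `x³ + b x + c + k x (y + z) + y z (y + z - h)`. Those with an oval are
`x³ - 3 x + y z (y + z ∓ 3) ± 5 / 2`; they have no left lines and are exchanged by `sg`, and they
differ by `Ep`. The surface `x³ + x + y z (y + z)` has neither left lines nor ovals. The remaining
ones have left lines: `x³ + x + 2 x (y + z) + y z (y + z)` does not have two left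
lines, `x³ - x + y z (y + z)` has three left lines, and the two surfaces
`x³ - x + y z (y + z ∓ √6)` differ by a configuration of four left lines (`sig`) and its image under
the symmetry.
-/

/-- The standard versal deformation of the `P₈¹` singularity `x³ + y²z + yz²`
(normal form with modulus `α = 0`). -/
noncomputable def P81Def (p : EuclideanSpace ℝ (Fin 3)) (l : EuclideanSpace ℝ (Fin 8)) : ℝ :=
  (p 0) ^ 3 + (p 1) ^ 2 * p 2 + p 1 * (p 2) ^ 2
    + l 0 + l 1 * p 0 + l 2 * p 1 + l 3 * p 2
    + l 4 * (p 0 * p 1) + l 5 * (p 0 * p 2) + l 6 * (p 1 * p 2) + l 7 * (p 0 * p 1 * p 2)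

/-- The local discriminant: parameters `l` with `‖l‖ < δ` such that the corresponding
function has a real critical point `p` with `‖p‖ ≤ ε` and critical value `0`. -/
noncomputable def P81Disc (ε δ : ℝ) : Set (EuclideanSpace ℝ (Fin 8)) :=
  {l | ‖l‖ < δ ∧ ∃ p : EuclideanSpace ℝ (Fin 3), ‖p‖ ≤ ε ∧ P81Def p l = 0 ∧
    fderiv ℝ (fun q => P81Def q l) p = 0}

namespace P81
open Set Filter Topology

/-! ### Points, parameters, and the Taylor expansion along lines -/

/-- Points and vectors of `ℝ³`, as triples. -/
abbrev R3 := ℝ × ℝ × ℝ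

/-- Parameters of the deformation. -/
abbrev L8 := Fin 8 → ℝ

/-- Euclidean inner product of triples. -/
def dot (u v : R3) : ℝ := u.1 * v.1 + u.2.1 * v.2.1 + u.2.2 * v.2.2

/-- Determinant of three triples. -/
def det3 (u v w : R3) : ℝ :=
  u.1 * (v.2.1 * w.2.2 - v.2.2 * w.2.1) - u.2.1 * (v.1 * w.2.2 - v.2.2 * w.1)
    + u.2.2 * (v.1 * w.2.1 - v.2.1 * w.1)

/-- The deformation `F(·, l)`. -/
def fF (l : L8) (p : R3) : ℝ :=
  p.1 ^ 3 + p.2.1 ^ 2 * p.2.2 + p.2.1 * p.2.2 ^ 2 + l 0 + l 1 * p.1 + l 2 * p.2.1 + l 3 * p.2.2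
    + l 4 * (p.1 * p.2.1) + l 5 * (p.1 * p.2.2) + l 6 * (p.2.1 * p.2.2)
    + l 7 * (p.1 * p.2.1 * p.2.2)

/-- The gradient of `F(·, l)` at `p`. -/
def fg (l : L8) (p : R3) : R3 :=
  (3 * p.1 ^ 2 + l 1 + l 4 * p.2.1 + l 5 * p.2.2 + l 7 * (p.2.1 * p.2.2),
   2 * p.2.1 * p.2.2 + p.2.2 ^ 2 + l 2 + l 4 * p.1 + l 6 * p.2.2 + l 7 * (p.1 * p.2.2),
   p.2.1 ^ 2 + 2 * p.2.1 * p.2.2 + l 3 + l 5 * p.1 + l 6 * p.2.1 + l 7 * (p.1 * p.2.1))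

/-- The Hessian of `F(·, l)` at `p`, applied to the vector `v`. -/
def fh (l : L8) (p v : R3) : R3 :=
  (6 * p.1 * v.1 + (l 4 + l 7 * p.2.2) * v.2.1 + (l 5 + l 7 * p.2.1) * v.2.2,
   (l 4 + l 7 * p.2.2) * v.1 + 2 * p.2.2 * v.2.1
     + (2 * p.2.1 + 2 * p.2.2 + l 6 + l 7 * p.1) * v.2.2,
   (l 5 + l 7 * p.2.1) * v.1 + (2 * p.2.1 + 2 * p.2.2 + l 6 + l 7 * p.1) * v.2.1
     + 2 * p.2.1 * v.2.2)

/-- The gradient at `v` of the cubic part of `F(·, l)`, which is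
`x³ + y z (y + z + m x)` with `m = l 7`. -/
def fc (l : L8) (v : R3) : R3 :=
  (3 * v.1 ^ 2 + l 7 * (v.2.1 * v.2.2),
   2 * v.2.1 * v.2.2 + v.2.2 ^ 2 + l 7 * (v.1 * v.2.2),
   v.2.1 ^ 2 + 2 * v.2.1 * v.2.2 + l 7 * (v.1 * v.2.1))

/-- The first coefficient `det (v, G₀, G₁)` of the Wronskian of the gradient along a line. -/
def w0 (l : L8) (p v : R3) : ℝ := det3 v (fg l p) (fh l p v)

/-- The middle coefficient `det (v, G₀, G₂)` of the Wronskian of the gradient along a line. -/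
def w1 (l : L8) (p v : R3) : ℝ := det3 v (fg l p) (fc l v)

/-- The last coefficient `det (v, G₁, G₂)` of the Wronskian of the gradient along a line. -/
def w2 (l : L8) (p v : R3) : ℝ := det3 v (fh l p v) (fc l v)

/-- The line `p + ℝ v` lies on the surface `F(·, l) = 0`. -/
def OnS (l : L8) (p v : R3) : Prop :=
  fF l p = 0 ∧ dot (fg l p) v = 0 ∧ dot (fh l p v) v = 0 ∧ dot (fc l v) v = 0

/-- A left line: a line on the surface along which the tangent plane rotates with
nowhere vanishing positive angular velocity. If `G(t) = G₀ + t G₁ + t² G₂` is the gradient at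
`p + t v`, then `det (v, G, G') = w0 + 2 t w1 + t² w2`, and this quadratic polynomial is required
to be positive definite. -/
def Left (l : L8) (p v : R3) : Prop :=
  OnS l p v ∧ 0 < w0 l p v ∧ 0 < w0 l p v * w2 l p v - w1 l p v ^ 2

/-- Parameters with `|l 7| < 1` for which the zero level is a nonsingular surface. -/
def U : Set L8 := {l | |l 7| < 1 ∧ ∀ p, fF l p = 0 → fg l p ≠ 0}

lemma R3.ext {u v : R3} (h1 : u.1 = v.1) (h2 : u.2.1 = v.2.1) (h3 : u.2.2 = v.2.2) : u = v :=
  Prod.ext h1 (Prod.ext h2 h3)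

lemma R3.eq_zero {u : R3} (h1 : u.1 = 0) (h2 : u.2.1 = 0) (h3 : u.2.2 = 0) : u = 0 :=
  R3.ext h1 h2 h3

lemma dot_self_pos {u : R3} (h : u ≠ 0) : 0 < dot u u := by
  by_contra hc
  apply h
  have e : dot u u = u.1 * u.1 + u.2.1 * u.2.1 + u.2.2 * u.2.2 := rfl
  apply R3.eq_zero <;>
  nlinarith [mul_self_nonneg u.1, mul_self_nonneg u.2.1, mul_self_nonneg u.2.2]

lemma eq_zero_of_dot {u : R3} (h : ∀ w, dot u w = 0) : u = 0 := by
  by_contra hc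
  exact (dot_self_pos hc).ne' (h u)

lemma fF_line (l : L8) (p v : R3) (t : ℝ) :
    fF l (p + t • v) = fF l p + t * dot (fg l p) v + t ^ 2 * (dot (fh l p v) v / 2)
      + t ^ 3 * (dot (fc l v) v / 3) := by
  simp only [fF, fg, fh, fc, dot, Prod.fst_add, Prod.snd_add, Prod.smul_fst, Prod.smul_snd,
    smul_eq_mul]
  ring

lemma fg_line (l : L8) (p v : R3) (t : ℝ) :
    fg l (p + t • v) = fg l p + t • fh l p v + t ^ 2 • fc l v := by
  apply R3.ext <;>
  simp only [fg, fh, fc, Prod.fst_add, Prod.snd_add, Prod.smul_fst, Prod.smul_snd,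
    smul_eq_mul] <;> ring

lemma fh_line (l : L8) (p v : R3) (t : ℝ) :
    fh l (p + t • v) v = fh l p v + (2 * t) • fc l v := by
  apply R3.ext <;>
  simp only [fh, fc, Prod.fst_add, Prod.snd_add, Prod.smul_fst, Prod.smul_snd,
    smul_eq_mul] <;> ring

lemma fh_smul (l : L8) (p v : R3) (c : ℝ) : fh l p (c • v) = c • fh l p v := by
  apply R3.ext <;>
  simp only [fh, Prod.smul_fst, Prod.smul_snd, smul_eq_mul] <;> ring

lemma fc_smul (l : L8) (v : R3) (c : ℝ) : fc l (c • v) = c ^ 2 • fc l v := by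
  apply R3.ext <;>
  simp only [fc, Prod.smul_fst, Prod.smul_snd, smul_eq_mul] <;> ring

lemma fh_symm (l : L8) (p v w : R3) : dot (fh l p v) w = dot (fh l p w) v := by
  simp only [fh, dot]; ring

lemma dot_add_left (u v w : R3) : dot (u + v) w = dot u w + dot v w := by
  simp only [dot, Prod.fst_add, Prod.snd_add]; ring

lemma dot_smul_left (c : ℝ) (u w : R3) : dot (c • u) w = c * dot u w := by
  simp only [dot, Prod.smul_fst, Prod.smul_snd, smul_eq_mul]; ring

lemma dot_smul_right (c : ℝ) (u w : R3) : dot u (c • w) = c * dot u w := by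
  simp only [dot, Prod.smul_fst, Prod.smul_snd, smul_eq_mul]; ring

lemma dot_comm (u w : R3) : dot u w = dot w u := by
  simp only [dot]; ring

lemma OnS.shift {l : L8} {p v : R3} (h : OnS l p v) (t : ℝ) : OnS l (p + t • v) v := by
  obtain ⟨h1, h2, h3, h4⟩ := h
  refine ⟨?_, ?_, ?_, h4⟩
  · rw [fF_line, h1, h2, h3, h4]; ring
  · rw [fg_line, dot_add_left, dot_add_left, dot_smul_left, dot_smul_left, h2, h3, h4]; ring
  · rw [fh_line, dot_add_left, dot_smul_left, h3, h4]; ring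

lemma OnS.smul {l : L8} {p v : R3} (h : OnS l p v) (c : ℝ) : OnS l p (c • v) := by
  obtain ⟨h1, h2, h3, h4⟩ := h
  refine ⟨h1, ?_, ?_, ?_⟩
  · rw [dot_smul_right, h2]; ring
  · rw [fh_smul, dot_smul_left, dot_smul_right, h3]; ring
  · rw [fc_smul, dot_smul_left, dot_smul_right, h4]; ring

lemma w0_shift (l : L8) (p v : R3) (t : ℝ) :
    w0 l (p + t • v) v = w0 l p v + 2 * t * w1 l p v + t ^ 2 * w2 l p v := by
  simp only [w0, w1, w2]
  rw [fg_line, fh_line]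
  simp only [det3, Prod.fst_add, Prod.snd_add, Prod.smul_fst, Prod.smul_snd, smul_eq_mul]
  ring

lemma w1_shift (l : L8) (p v : R3) (t : ℝ) :
    w1 l (p + t • v) v = w1 l p v + t * w2 l p v := by
  simp only [w1, w2]
  rw [fg_line]
  simp only [det3, Prod.fst_add, Prod.snd_add, Prod.smul_fst, Prod.smul_snd, smul_eq_mul]
  ring

lemma w2_shift (l : L8) (p v : R3) (t : ℝ) : w2 l (p + t • v) v = w2 l p v := by
  simp only [w2]
  rw [fh_line]
  simp only [det3, Prod.fst_add, Prod.snd_add, Prod.smul_fst, Prod.smul_snd, smul_eq_mul]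
  ring

lemma w0_smul (l : L8) (p v : R3) (c : ℝ) : w0 l p (c • v) = c ^ 2 * w0 l p v := by
  simp only [w0, fh_smul]
  simp only [det3, Prod.smul_fst, Prod.smul_snd, smul_eq_mul]
  ring

lemma w1_smul (l : L8) (p v : R3) (c : ℝ) : w1 l p (c • v) = c ^ 3 * w1 l p v := by
  simp only [w1, fc_smul]
  simp only [det3, Prod.smul_fst, Prod.smul_snd, smul_eq_mul]
  ring

lemma w2_smul (l : L8) (p v : R3) (c : ℝ) : w2 l p (c • v) = c ^ 4 * w2 l p v := by
  simp only [w2, fh_smul, fc_smul]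
  simp only [det3, Prod.smul_fst, Prod.smul_snd, smul_eq_mul]
  ring

lemma Left.w2_pos {l : L8} {p v : R3} (h : Left l p v) : 0 < w2 l p v := by
  obtain ⟨-, h1, h2⟩ := h
  by_contra hc
  nlinarith [sq_nonneg (w1 l p v)]

lemma Left.shift {l : L8} {p v : R3} (h : Left l p v) (t : ℝ) : Left l (p + t • v) v := by
  have hw := h.w2_pos
  obtain ⟨h0, h1, h2⟩ := h
  refine ⟨h0.shift t, ?_, ?_⟩
  · rw [w0_shift]
    by_contra hc
    nlinarith [sq_nonneg (w1 l p v + t * w2 l p v)]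
  · rw [w0_shift, w1_shift, w2_shift]
    linarith

lemma Left.smul {l : L8} {p v : R3} (h : Left l p v) {c : ℝ} (hc : c ≠ 0) :
    Left l p (c • v) := by
  obtain ⟨h0, h1, h2⟩ := h
  refine ⟨h0.smul c, ?_, ?_⟩
  · rw [w0_smul]; positivity
  · rw [w0_smul, w1_smul, w2_smul]
    have : c ^ 2 * w0 l p v * (c ^ 4 * w2 l p v) - (c ^ 3 * w1 l p v) ^ 2
      = c ^ 6 * (w0 l p v * w2 l p v - w1 l p v ^ 2) := by ring
    rw [this]; positivity

lemma Left.ne_zero {l : L8} {p v : R3} (h : Left l p v) : v ≠ 0 := by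
  rintro rfl
  have := h.2.1
  simp [w0, det3] at this

/-- The only critical point of the cubic part is the origin. -/
lemma fc_ne_zero {l : L8} (hl : |l 7| ≤ 1) {v : R3} (hv : fc l v = 0) : v = 0 := by
  obtain ⟨x, y, z⟩ := v
  simp only [fc, Prod.mk_eq_zero] at hv ⊢
  obtain ⟨h1, h2, h3⟩ := hv
  generalize l 7 = m at *
  obtain ⟨hm1, hm2⟩ := abs_le.1 hl
  have hz : z * (2 * y + z + m * x) = 0 := by linarith
  have hy : y * (y + 2 * z + m * x) = 0 := by linarith
  have key : y = 0 ∨ z = 0 → x = 0 ∧ y = 0 ∧ z = 0 := by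
    intro h
    have hx : x = 0 := by
      rcases h with h | h <;> subst h <;> nlinarith
    subst hx
    rcases h with h | h <;> subst h <;> simp_all
  rcases mul_eq_zero.1 hz with h | h
  · exact key (Or.inr h)
  rcases mul_eq_zero.1 hy with h' | h'
  · exact key (Or.inl h')
  have hyz : y = z := by linarith
  subst hyz
  -- here `3 y = -m x`, so `3 x² + m y² = 0` reads `x² (27 + m³) = 0`
  have e : x ^ 2 * (27 + m ^ 3) = 0 := by
    have : 3 * y = - m * x := by linarith
    have : 9 * (y * y) = m ^ 2 * x ^ 2 := by
      linear_combination (3 * y - m * x) * this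
    linear_combination 9 * h1 - m * this
  have hm3 : (27 + m ^ 3) ≠ 0 := by nlinarith [sq_nonneg m, sq_nonneg (m+1)]
  have hx : x = 0 := by
    rcases mul_eq_zero.1 e with h | h
    · exact pow_eq_zero_iff (two_ne_zero) |>.1 h
    · exact absurd h hm3
  subst hx
  refine ⟨rfl, ?_, ?_⟩ <;> linarith

/-! ### Limits of left lines -/

/-- The closed conditions satisfied by limits of left lines. -/
def WLeft (l : L8) (p v : R3) : Prop :=
  OnS l p v ∧ 0 ≤ w0 l p v ∧ 0 ≤ w2 l p v ∧ 0 ≤ w0 l p v * w2 l p v - w1 l p v ^ 2 ∧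
  0 ≤ dot (fh l p v) (fc l v) ^ 2 - 4 * dot (fg l p) (fc l v) * dot (fc l v) (fc l v)

/-- Three vectors orthogonal to `v ≠ 0` are linearly dependent. -/
lemma dep_of_orth {v a b c : R3} (hv : v ≠ 0) (ha : dot a v = 0) (hb : dot b v = 0)
    (hc : dot c v = 0) :
    det3 v a b • c - det3 v a c • b + det3 v b c • a = 0 := by
  have e : det3 v a b • c - det3 v a c • b + det3 v b c • a = det3 a b c • v := by
    apply R3.ext <;>
    simp only [det3, Prod.fst_add, Prod.snd_add, Prod.fst_sub, Prod.snd_sub, Prod.smul_fst,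
      Prod.smul_snd, smul_eq_mul] <;> ring
  have e2 : dot (det3 v a b • c - det3 v a c • b + det3 v b c • a) v = 0 := by
    rw [sub_eq_add_neg, ← neg_smul, dot_add_left, dot_add_left, dot_smul_left, dot_smul_left,
      dot_smul_left, ha, hb, hc]; ring
  rw [e, dot_smul_left] at e2
  rw [e]
  rcases mul_eq_zero.1 e2 with h | h
  · rw [h, zero_smul]
  · exact absurd h (dot_self_pos hv).ne'

lemma Left.wleft {l : L8} {p v : R3} (h : Left l p v) : WLeft l p v := by
  have hw := h.w2_pos
  have hv := h.ne_zero
  obtain ⟨h0, h1, h2⟩ := h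
  refine ⟨h0, h1.le, hw.le, h2.le, ?_⟩
  have dep := dep_of_orth hv h0.2.1 h0.2.2.1 h0.2.2.2
  have e : w0 l p v * dot (fc l v) (fc l v) - w1 l p v * dot (fh l p v) (fc l v)
      + w2 l p v * dot (fg l p) (fc l v) = 0 := by
    have := congrArg (fun u => dot u (fc l v)) dep
    simp only [sub_eq_add_neg, ← neg_smul, dot_add_left, dot_smul_left] at this
    have z : dot 0 (fc l v) = 0 := by simp [dot]
    rw [z] at this
    simp only [w0, w1, w2]
    linarith
  generalize dot (fc l v) (fc l v) = a2 at *
  generalize dot (fh l p v) (fc l v) = a1 at *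
  generalize dot (fg l p) (fc l v) = a0 at *
  generalize w0 l p v = W0 at *
  generalize w1 l p v = W1 at *
  generalize w2 l p v = W2 at *
  have e' : W2 * (a1 ^ 2 - 4 * a0 * a2) = W2 * a1 ^ 2 - 4 * W1 * a1 * a2 + 4 * W0 * a2 ^ 2 := by
    linear_combination (-4 * a2) * e
  have : 0 ≤ W2 * (W2 * (a1 ^ 2 - 4 * a0 * a2)) := by
    rw [e']
    nlinarith [sq_nonneg (W2 * a1 - 2 * W1 * a2), mul_nonneg h2.le (sq_nonneg a2)]
  exact nonneg_of_mul_nonneg_right (nonneg_of_mul_nonneg_right this hw) hw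

/-- Two vectors orthogonal to `v` with `det (v, a, c) = 0` are parallel. -/
lemma par_of_det {v a c : R3} (hv : v ≠ 0) (ha : dot a v = 0) (hc : dot c v = 0)
    (h : det3 v a c = 0) : dot c c • a = dot a c • c := by
  have hp := dot_self_pos hv
  have c1 : a.2.1 * c.2.2 - a.2.2 * c.2.1 = 0 ∧ a.2.2 * c.1 - a.1 * c.2.2 = 0 ∧
      a.1 * c.2.1 - a.2.1 * c.1 = 0 := by
    simp only [det3, dot] at *
    refine ⟨?_, ?_, ?_⟩ <;> refine (mul_eq_zero.1 ?_).resolve_left hp.ne'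
    · linear_combination v.1 * h + (v.2.1 * c.2.2 - v.2.2 * c.2.1) * ha
        - (v.2.1 * a.2.2 - v.2.2 * a.2.1) * hc
    · linear_combination v.2.1 * h + (v.2.2 * c.1 - v.1 * c.2.2) * ha
        - (v.2.2 * a.1 - v.1 * a.2.2) * hc
    · linear_combination v.2.2 * h + (v.1 * c.2.1 - v.2.1 * c.1) * ha
        - (v.1 * a.2.1 - v.2.1 * a.1) * hc
  obtain ⟨e1, e2, e3⟩ := c1
  apply R3.ext <;> simp only [dot, Prod.smul_fst, Prod.smul_snd, smul_eq_mul]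
  · linear_combination c.2.1 * e3 - c.2.2 * e2
  · linear_combination c.2.2 * e1 - c.1 * e3
  · linear_combination c.1 * e2 - c.2.1 * e1

/-- On a nonsingular surface a limit of left lines is a left line. -/
lemma WLeft.left {l : L8} (hl : l ∈ U) {p v : R3} (hv : v ≠ 0) (h : WLeft l p v) :
    Left l p v := by
  obtain ⟨hS, h0, h2, hD, hd⟩ := h
  have hG2 : fc l v ≠ 0 := fun hc => hv (fc_ne_zero hl.1.le hc)
  have nosing : ∀ t : ℝ, fg l p + t • fh l p v + t ^ 2 • fc l v ≠ 0 := by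
    intro t
    rw [← fg_line]
    exact hl.2 _ (hS.shift t).1
  have dep := dep_of_orth hv hS.2.1 hS.2.2.1 hS.2.2.2
  refine ⟨hS, ?_⟩
  change w0 l p v • fc l v - w1 l p v • fh l p v + w2 l p v • fg l p = 0 at dep
  rcases h2.eq_or_lt with h2 | h2
  · exfalso
    have e1 : w1 l p v = 0 := by
      rw [← h2] at hD
      exact pow_eq_zero_iff two_ne_zero |>.1 (by nlinarith [sq_nonneg (w1 l p v)])
    have e0 : w0 l p v = 0 := by
      rw [← h2, e1] at dep
      simp only [zero_smul, sub_zero, add_zero] at dep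
      exact (smul_eq_zero.1 dep).resolve_right hG2
    have p0 := par_of_det hv hS.2.1 hS.2.2.2 e1
    have p1 := par_of_det hv hS.2.2.1 hS.2.2.2 h2.symm
    have hn := dot_self_pos hG2
    generalize dot (fc l v) (fc l v) = N at *
    generalize dot (fh l p v) (fc l v) = b at *
    generalize dot (fg l p) (fc l v) = a at *
    set s := Real.sqrt (b ^ 2 - 4 * a * N) with hs
    have hs2 : s ^ 2 = b ^ 2 - 4 * a * N := Real.sq_sqrt hd
    apply nosing ((-b + s) / (2 * N))
    have : N • (fg l p + ((-b + s) / (2 * N)) • fh l p v + ((-b + s) / (2 * N)) ^ 2 • fc l v)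
        = 0 := by
      rw [smul_add, smul_add, p0, smul_comm, p1, smul_smul, smul_smul, ← add_smul, ← add_smul]
      convert zero_smul ℝ (fc l v) using 2
      field_simp
      linear_combination hs2
    exact (smul_eq_zero.1 this).resolve_left hn.ne'
  · have hD' : 0 < w0 l p v * w2 l p v - w1 l p v ^ 2 := by
      rcases hD.eq_or_lt with hD | hD
      · exfalso
        apply nosing (- w1 l p v / w2 l p v)
        have : w2 l p v • (fg l p + (- w1 l p v / w2 l p v) • fh l p v
            + (- w1 l p v / w2 l p v) ^ 2 • fc l v) = 0 := by
          have e : w2 l p v • fg l p = w1 l p v • fh l p v - w0 l p v • fc l v := by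
            rw [← sub_eq_zero, ← dep]; abel
          rw [smul_add, smul_add, e, smul_smul, smul_smul]
          have e3 : w2 l p v * (-w1 l p v / w2 l p v) = - w1 l p v := by field_simp
          have e4 : w2 l p v * (-w1 l p v / w2 l p v) ^ 2 = w0 l p v := by
            field_simp; linarith
          rw [e3, e4, neg_smul]; abel
        exact (smul_eq_zero.1 this).resolve_left h2.ne'
      · exact hD
    refine ⟨?_, hD'⟩
    by_contra hc
    nlinarith [sq_nonneg (w1 l p v)]

/-! ### Two left lines never meet and are never parallel -/

/-- Cross product of triples. -/
def cross (v w : R3) : R3 :=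
  (v.2.1 * w.2.2 - v.2.2 * w.2.1, v.2.2 * w.1 - v.1 * w.2.2, v.1 * w.2.1 - v.2.1 * w.1)

lemma par_of_cross {v w : R3} (hv : v ≠ 0) (h : cross v w = 0) :
    w = (dot w v / dot v v) • v := by
  have hp := dot_self_pos hv
  simp only [cross, Prod.mk_eq_zero] at h
  obtain ⟨e1, e2, e3⟩ := h
  have : dot v v • w = dot w v • v := by
    apply R3.ext <;> simp only [dot, Prod.smul_fst, Prod.smul_snd, smul_eq_mul]
    · linear_combination v.2.2 * e2 - v.2.1 * e3
    · linear_combination v.1 * e3 - v.2.2 * e1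
    · linear_combination v.2.1 * e1 - v.1 * e2
  rw [div_eq_inv_mul, ← smul_smul, ← this, smul_smul, inv_mul_cancel₀ hp.ne', one_smul]

lemma cramer (v w d : R3) :
    dot (cross v w) (cross v w) • d
      = det3 d w (cross v w) • v + det3 v d (cross v w) • w + det3 v w d • cross v w := by
  apply R3.ext <;>
  simp only [dot, det3, cross, Prod.fst_add, Prod.snd_add, Prod.smul_fst, Prod.smul_snd,
    smul_eq_mul] <;> ring

lemma det3_cross_right (a b v w : R3) :
    det3 a b (cross v w) = dot a v * dot b w - dot a w * dot b v := by
  simp only [dot, det3, cross]; ring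

lemma det3_smul_mid (c : ℝ) (a b d : R3) : det3 a (c • b) d = c * det3 a b d := by
  simp only [det3, Prod.smul_fst, Prod.smul_snd, smul_eq_mul]; ring

lemma det3_smul_right (c : ℝ) (a b d : R3) : det3 a b (c • d) = c * det3 a b d := by
  simp only [det3, Prod.smul_fst, Prod.smul_snd, smul_eq_mul]; ring

lemma det3_swap (a b d : R3) : det3 a b d = - det3 a d b := by
  simp only [det3]; ring

/-- A vector orthogonal to `v` and `w` is a multiple of their cross product. -/
lemma smul_eq_of_orth {v w g : R3} (hv : dot g v = 0) (hw : dot g w = 0) :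
    dot (cross v w) (cross v w) • g = det3 v w g • cross v w := by
  rw [cramer v w g, det3_cross_right, det3_cross_right, hv, hw]
  simp

/-- Left lines through a common point coincide: the two values of `w0` would have
opposite signs. -/
lemma no_meet {l : L8} {p v v' : R3} (h : Left l p v) (h' : Left l p v') : cross v v' = 0 := by
  by_contra hn
  have hN := dot_self_pos hn
  have e := smul_eq_of_orth h.1.2.1 h'.1.2.1
  have a1 : dot (cross v v') (cross v v') * w0 l p v
      = - (det3 v v' (fg l p) * dot v v * dot (fh l p v) v') := by
    rw [w0, ← det3_smul_mid, e, det3_smul_mid, det3_swap v (cross v v'), det3_cross_right, h.1.2.2.1]; ring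
  have a2 : dot (cross v v') (cross v v') * w0 l p v'
      = det3 v v' (fg l p) * dot v' v' * dot (fh l p v) v' := by
    rw [w0, ← det3_smul_mid, e, det3_smul_mid, det3_swap v' (cross v v'), det3_cross_right, h'.1.2.2.1,
      fh_symm l p v v']; ring
  have b1 := mul_pos hN h.2.1
  have b2 := mul_pos hN h'.2.1
  rw [a1] at b1
  rw [a2] at b2
  have c1 := dot_self_pos h.ne_zero
  have c2 := dot_self_pos h'.ne_zero
  have d1 : det3 v v' (fg l p) * dot (fh l p v) v' < 0 := by
    by_contra hc
    push Not at hc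
    nlinarith [mul_nonneg hc c1.le]
  nlinarith [mul_neg_of_neg_of_pos d1 c2]

/-- Parallel left lines coincide: the two values of `w2` would have opposite signs. -/
lemma no_par {l : L8} {p p' v : R3} (h : Left l p v) (h' : Left l p' v) :
    cross v (p' - p) = 0 := by
  by_contra hn
  obtain ⟨d, rfl⟩ : ∃ d, p' = p + d := ⟨p' - p, by abel⟩
  rw [add_sub_cancel_left] at hn
  have hN := dot_self_pos hn
  have f1 : dot (fc l v) d = 0 := by
    have e : dot (fh l (p + d) v) v = dot (fh l p v) v + 2 * dot (fc l v) d := by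
      simp only [fh, fc, dot, Prod.fst_add, Prod.snd_add]; ring
    rw [h.1.2.2.1, h'.1.2.2.1] at e; linarith
  have f2 : dot (fh l p v) d + dot (fc l d) v = 0 := by
    have e : dot (fg l (p + d)) v = dot (fg l p) v + dot (fh l p v) d + dot (fc l d) v := by
      simp only [fg, fh, fc, dot, Prod.fst_add, Prod.snd_add]; ring
    rw [h.1.2.1, h'.1.2.1] at e; linarith
  have f3 : dot (fh l (p + d) v) d = - dot (fh l p v) d := by
    have e : dot (fh l (p + d) v) d = dot (fh l p v) d + 2 * dot (fc l d) v := by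
      simp only [fh, fc, dot, Prod.fst_add, Prod.snd_add]; ring
    rw [e]; linarith
  have e := smul_eq_of_orth h.1.2.2.2 f1
  have a1 : dot (cross v d) (cross v d) * w2 l p v
      = det3 v d (fc l v) * dot v v * dot (fh l p v) d := by
    rw [w2, ← det3_smul_right, e, det3_smul_right, det3_cross_right, h.1.2.2.1]; ring
  have a2 : dot (cross v d) (cross v d) * w2 l (p + d) v
      = - (det3 v d (fc l v) * dot v v * dot (fh l p v) d) := by
    rw [w2, ← det3_smul_right, e, det3_smul_right, det3_cross_right, h'.1.2.2.1, f3]; ring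
  have b1 := mul_pos hN h.w2_pos
  have b2 := mul_pos hN h'.w2_pos
  linarith

/-- Two coplanar left lines coincide. -/
lemma same_line {l : L8} {p v p' v' : R3} (h : Left l p v) (h' : Left l p' v')
    (hd : det3 v v' (p' - p) = 0) : cross v v' = 0 ∧ cross v (p' - p) = 0 := by
  have hc : cross v v' = 0 := by
    by_contra hn
    have hN := dot_self_pos hn
    have e := cramer v v' (p' - p)
    rw [hd, zero_smul, add_zero] at e
    generalize dot (cross v v') (cross v v') = N at *
    generalize det3 (p' - p) v' (cross v v') = a at *
    generalize det3 v (p' - p) (cross v v') = b at *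
    have e2 : p' + (-(N⁻¹ * b)) • v' = p + (N⁻¹ * a) • v := by
      have : p' - p = N⁻¹ • (a • v + b • v') := by
        rw [← e, smul_smul, inv_mul_cancel₀ hN.ne', one_smul]
      rw [smul_add, smul_smul, smul_smul] at this
      rw [neg_smul, ← sub_eq_add_neg, sub_eq_iff_eq_add, add_assoc, ← this]; abel
    have l1 := h.shift (N⁻¹ * a)
    have l2 := h'.shift (-(N⁻¹ * b))
    rw [e2] at l2
    exact hn (no_meet l1 l2)
  refine ⟨hc, ?_⟩
  have e := par_of_cross h.ne_zero hc
  have hne : dot v' v / dot v v ≠ 0 := by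
    intro h0
    rw [h0, zero_smul] at e
    exact h'.ne_zero e
  have h2 := h'.smul (inv_ne_zero hne)
  generalize dot v' v / dot v v = c at *
  rw [e, smul_smul, inv_mul_cancel₀ hne, one_smul] at h2
  exact no_par h h2

/-! ### The cyclic order of directions -/

/-- Majority comparison of directions. The directions of lines at infinity lie on the cubic
`x³ = A B D` with `A = y`, `B = z`, `D = - y - z - m x`. The relation asks two of the three minors
of the pairs `(A, B)`, `(B, D)`, `(D, A)` to be positive. -/
def Maj (m : ℝ) (v v' : R3) : Prop :=
  let c1 := v.2.1 * v'.2.2 - v'.2.1 * v.2.2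
  let c2 := v.2.2 * (-v'.2.1 - v'.2.2 - m * v'.1) - v'.2.2 * (-v.2.1 - v.2.2 - m * v.1)
  let c3 := (-v.2.1 - v.2.2 - m * v.1) * v'.2.1 - (-v'.2.1 - v'.2.2 - m * v'.1) * v.2.1
  (0 < c1 ∧ 0 < c2) ∨ (0 < c2 ∧ 0 < c3) ∨ (0 < c3 ∧ 0 < c1)

lemma maj_aux {m A B D x A' B' D' x' : ℝ} (hm : |m| < 1) (hD : A + B + D = -m * x)
    (hD' : A' + B' + D' = -m * x') (h : x ^ 3 = A * B * D) (h' : x' ^ 3 = A' * B' * D')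
    (c1 : A * B' - A' * B = 0) (c23 : (B * D' - B' * D) * (D * A' - D' * A) ≤ 0) :
    x * A' = x' * A ∧ x * B' = x' * B := by
  by_cases hAB : A = 0 ∧ B = 0
  · obtain ⟨rfl, rfl⟩ := hAB
    have : x = 0 := pow_eq_zero_iff (n := 3) (by norm_num) |>.1 (by rw [h]; ring)
    subst this; simp
  obtain ⟨s, hsA, hsB⟩ : ∃ s, A' = s * A ∧ B' = s * B := by
    have hp : A ^ 2 + B ^ 2 ≠ 0 := by
      intro h0
      exact hAB ⟨by nlinarith, by nlinarith⟩
    refine ⟨(A * A' + B * B') / (A ^ 2 + B ^ 2), ?_, ?_⟩ <;> field_simp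
    · linear_combination -B * c1
    · linear_combination A * c1
  by_cases hs : s = 0
  · subst hs
    have : x' = 0 := pow_eq_zero_iff (n := 3) (by norm_num) |>.1 (by rw [h', hsA]; ring)
    subst this hsA hsB; simp
  obtain ⟨u, rfl⟩ : ∃ u, x' = s * u := ⟨x' / s, by field_simp⟩
  subst hsA hsB
  obtain rfl : D = -A - B - m * x := by linarith
  obtain rfl : D' = -(s * A) - s * B - m * (s * u) := by linarith
  suffices hx : x = u by subst hx; constructor <;> ring
  by_contra hx
  have e1 : x ^ 3 + m * (A * B) * x + A * B * (A + B) = 0 := by linear_combination h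
  have e2 : u ^ 3 + m * (A * B) * u + A * B * (A + B) = 0 := by
    have : s ^ 3 * (u ^ 3 + m * (A * B) * u + A * B * (A + B)) = 0 := by linear_combination h'
    exact (mul_eq_zero.1 this).resolve_left (pow_ne_zero _ hs)
  have e3 : x ^ 2 + x * u + u ^ 2 + m * (A * B) = 0 := by
    have : (x - u) * (x ^ 2 + x * u + u ^ 2 + m * (A * B)) = 0 := by
      linear_combination e1 - e2
    exact (mul_eq_zero.1 this).resolve_left (sub_ne_zero.2 hx)
  have e4 : 0 ≤ m ^ 2 * (A * B) * (s * (x - u)) ^ 2 := by linarith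
  have hsx : 0 < (s * (x - u)) ^ 2 := by
    have := sub_ne_zero.2 hx
    positivity
  have e5 : 0 ≤ m ^ 2 * (A * B) := nonneg_of_mul_nonneg_left e4 hsx
  have hpos : 0 < x ^ 2 + x * u + u ^ 2 := by
    by_contra hc
    push Not at hc
    apply hx
    have : (x - u) ^ 2 ≤ 0 := by nlinarith [sq_nonneg (x + u)]
    have := pow_eq_zero_iff two_ne_zero |>.1 (le_antisymm this (sq_nonneg _))
    linarith
  have hmab : m * (A * B) < 0 := by linarith
  have hm0 : m ≠ 0 := by rintro rfl; simp at hmab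
  have hab0 : A * B ≠ 0 := by intro h; rw [h] at hmab; simp at hmab
  have hab : 0 < A * B := lt_of_le_of_ne
    (nonneg_of_mul_nonneg_right e5 (by positivity)) (Ne.symm hab0)
  have e6 : A * B * (A + B) = x * u * (x + u) := by linear_combination e1 - x * e3
  obtain ⟨hm1, hm2⟩ := abs_lt.1 hm
  have q1 : 27 * (A * B * (A + B)) ^ 2 ≤ 4 * (x ^ 2 + x * u + u ^ 2) ^ 3 := by
    rw [e6]
    nlinarith [sq_nonneg ((x - u) * (2 * x + u) * (x + 2 * u))]
  have q2 : (x ^ 2 + x * u + u ^ 2) ^ 3 ≤ (A * B) ^ 3 := by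
    apply pow_le_pow_left₀ hpos.le
    nlinarith
  have q3 : 4 * (A * B) ≤ (A + B) ^ 2 := by nlinarith [sq_nonneg (A - B)]
  have q4 : (A * B) ^ 2 * (4 * (A * B)) ≤ (A * B) ^ 2 * (A + B) ^ 2 :=
    mul_le_mul_of_nonneg_left q3 (by positivity)
  have : 0 < (A * B) ^ 3 := by positivity
  nlinarith

lemma median {a b c : ℝ} (h : ¬((0 < a ∧ 0 < b) ∨ (0 < b ∧ 0 < c) ∨ (0 < c ∧ 0 < a)))
    (h' : ¬((a < 0 ∧ b < 0) ∨ (b < 0 ∧ c < 0) ∨ (c < 0 ∧ a < 0))) :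
    (a = 0 ∧ b * c ≤ 0) ∨ (b = 0 ∧ c * a ≤ 0) ∨ (c = 0 ∧ a * b ≤ 0) := by
  push Not at h h'
  obtain ⟨h1, h2, h3⟩ := h
  obtain ⟨h4, h5, h6⟩ := h'
  rcases lt_trichotomy a 0 with ha | ha | ha
  · have hb := h4 ha
    have hc : 0 ≤ c := by by_contra hc; linarith [h6 (by linarith)]
    rcases hb.eq_or_lt with hb | hb
    · exact Or.inr (Or.inl ⟨hb.symm, by nlinarith⟩)
    · have : c = 0 := le_antisymm (h2 hb) hc
      exact Or.inr (Or.inr ⟨this, by nlinarith⟩)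
  · refine Or.inl ⟨ha, ?_⟩
    rcases lt_trichotomy b 0 with hb | hb | hb
    · nlinarith [h5 hb]
    · simp [hb]
    · nlinarith [h2 hb]
  · have hb := h1 ha
    have hc : c ≤ 0 := by by_contra hc; linarith [h3 (by linarith)]
    rcases hb.eq_or_lt with hb | hb
    · exact Or.inr (Or.inl ⟨hb, by nlinarith⟩)
    · have : c = 0 := le_antisymm hc (h5 hb)
      exact Or.inr (Or.inr ⟨this, by nlinarith⟩)

/-- Distinct directions at infinity are comparable. -/
lemma maj_or {l : L8} (hl : |l 7| < 1) {v v' : R3} (h : dot (fc l v) v = 0)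
    (h' : dot (fc l v') v' = 0) (hn : cross v v' ≠ 0) :
    Maj (l 7) v v' ∨ Maj (l 7) v' v := by
  by_contra hc
  obtain ⟨hc1, hc2⟩ := not_or.1 hc
  apply hn
  obtain ⟨x, y, z⟩ := v
  obtain ⟨x', y', z'⟩ := v'
  simp only [dot, fc] at h h'
  simp only [Maj] at hc1 hc2
  generalize l 7 = m at *
  have E : x ^ 3 = y * z * (-y - z - m * x) := by linear_combination h / 3
  have E' : x' ^ 3 = y' * z' * (-y' - z' - m * x') := by linear_combination h' / 3
  have med := median hc1 (fun hh => hc2 (by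
    rcases hh with ⟨a, b⟩ | ⟨a, b⟩ | ⟨a, b⟩
    · exact Or.inl ⟨by linarith, by linarith⟩
    · exact Or.inr (Or.inl ⟨by linarith, by linarith⟩)
    · exact Or.inr (Or.inr ⟨by linarith, by linarith⟩)))
  simp only [cross, Prod.mk_eq_zero]
  rcases med with ⟨e, f⟩ | ⟨e, f⟩ | ⟨e, f⟩
  · obtain ⟨g1, g2⟩ := maj_aux hl (by ring : y + z + (-y - z - m * x) = -m * x)
      (by ring : y' + z' + (-y' - z' - m * x') = -m * x') E E' (by linarith) (by linarith)
    exact ⟨by linarith, by linarith, by linarith⟩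
  · obtain ⟨g1, g2⟩ := maj_aux hl (by ring : z + (-y - z - m * x) + y = -m * x)
      (by ring : z' + (-y' - z' - m * x') + y' = -m * x') (by linarith) (by linarith)
      (by linarith) (by linarith)
    exact ⟨by linear_combination e - m * g1, by linear_combination -g1,
      by linear_combination -g1 - g2⟩
  · obtain ⟨g1, g2⟩ := maj_aux hl (by ring : (-y - z - m * x) + y + z = -m * x)
      (by ring : (-y' - z' - m * x') + y' + z' = -m * x') (by linarith) (by linarith)
      (by linarith) (by linarith)
    exact ⟨by linear_combination e + m * g2, by linear_combination g1 + g2,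
      by linear_combination g2⟩

/-! ### Compactness of the space of lines -/

/-- The cubic part vanishes on no plane. -/
lemma no_plane_aux {l : L8} {v w : R3} (hx : v.1 ≠ 0) (h1 : dot (fc l v) v = 0)
    (h2 : dot (fc l v) w = 0) (h3 : dot (fc l w) v = 0) (h4 : dot (fc l w) w = 0) :
    cross v w = 0 := by
  obtain ⟨x, y, z⟩ := v
  obtain ⟨x', y', z'⟩ := w
  simp only [dot, fc] at *
  generalize l 7 = m at *
  -- the vector `x' v - x w = (0, Y, Z)` of the plane
  obtain ⟨Y, hY⟩ : ∃ Y, Y = x' * y - x * y' := ⟨_, rfl⟩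
  obtain ⟨Z, hZ⟩ : ∃ Z, Z = x' * z - x * z' := ⟨_, rfl⟩
  have a1 : Y * Z * (Y + Z) = 0 := by
    rw [hY, hZ]
    linear_combination x' ^ 3 / 3 * h1 - x' ^ 2 * x * h2 + x' * x ^ 2 * h3 - x ^ 3 / 3 * h4
  have a2 : m * (Y * Z) * x + (2 * Y * Z + Z ^ 2) * y + (Y ^ 2 + 2 * Y * Z) * z = 0 := by
    rw [hY, hZ]
    linear_combination x' ^ 2 * h1 + x ^ 2 * h3 - 2 * x' * x * h2
  have a3 : x ^ 3 + y * z * (y + z + m * x) = 0 := by linear_combination h1 / 3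
  have key : y * z * (y + z + m * x) ≠ 0 := by
    intro h
    rw [h, add_zero] at a3
    exact hx (pow_eq_zero_iff (by norm_num) |>.1 a3)
  have hy : y ≠ 0 := by rintro rfl; simp at key
  have hz : z ≠ 0 := by rintro rfl; simp at key
  have hd : y + z + m * x ≠ 0 := by intro h; rw [h] at key; simp at key
  have hYZ : Y = 0 ∧ Z = 0 := by
    rcases mul_eq_zero.1 a1 with h | h
    · rcases mul_eq_zero.1 h with h | h
      · refine ⟨h, ?_⟩
        rw [h] at a2
        have : Z ^ 2 * y = 0 := by linarith
        exact pow_eq_zero_iff two_ne_zero |>.1 ((mul_eq_zero.1 this).resolve_right hy)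
      · refine ⟨?_, h⟩
        rw [h] at a2
        have : Y ^ 2 * z = 0 := by linarith
        exact pow_eq_zero_iff two_ne_zero |>.1 ((mul_eq_zero.1 this).resolve_right hz)
    · have hZ' : Z = -Y := by linarith
      rw [hZ'] at a2
      have : Y ^ 2 * (y + z + m * x) = 0 := by linarith
      have := pow_eq_zero_iff two_ne_zero |>.1 ((mul_eq_zero.1 this).resolve_right hd)
      exact ⟨this, by linarith⟩
  rw [hY, hZ] at hYZ
  obtain ⟨e1, e2⟩ := hYZ
  simp only [cross, Prod.mk_eq_zero]
  refine ⟨?_, by linarith, by linarith⟩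
  have : x * (y * z' - z * y') = 0 := by linear_combination z * e1 - y * e2
  exact (mul_eq_zero.1 this).resolve_left hx

lemma no_plane {l : L8} {v w : R3} (h1 : dot (fc l v) v = 0)
    (h2 : dot (fc l v) w = 0) (h3 : dot (fc l w) v = 0) (h4 : dot (fc l w) w = 0) :
    cross v w = 0 := by
  by_cases hx : v.1 = 0
  · by_cases hx' : w.1 = 0
    · obtain ⟨x, y, z⟩ := v
      obtain ⟨x', y', z'⟩ := w
      simp only [dot, fc] at *
      subst hx hx'
      simp only [cross, Prod.mk_eq_zero]
      refine ⟨?_, by ring, by ring⟩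
      have : (y * z' - z * y') ^ 3 = 0 := by
        linear_combination (z' - y') ^ 3 / 6 * h1 + (z' - y') ^ 2 * (y - z) / 2 * h2
          + (z' - y') * (y - z) ^ 2 / 2 * h3 + (y - z) ^ 3 / 6 * h4
      exact pow_eq_zero_iff (by norm_num) |>.1 this
    · have := no_plane_aux hx' h4 h3 h2 h1
      simp only [cross, Prod.mk_eq_zero] at this ⊢
      exact ⟨by linarith, by linarith, by linarith⟩
  · exact no_plane_aux hx h1 h2 h3 h4

/-- The quasihomogeneous rescaling of the parameters. -/
def scale (s : ℝ) (l : L8) : L8 :=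
  ![s ^ 3 * l 0, s ^ 2 * l 1, s ^ 2 * l 2, s ^ 2 * l 3, s * l 4, s * l 5, s * l 6, l 7]

lemma scale_0 (s : ℝ) (l : L8) : scale s l 0 = s ^ 3 * l 0 := rfl
lemma scale_1 (s : ℝ) (l : L8) : scale s l 1 = s ^ 2 * l 1 := rfl
lemma scale_2 (s : ℝ) (l : L8) : scale s l 2 = s ^ 2 * l 2 := rfl
lemma scale_3 (s : ℝ) (l : L8) : scale s l 3 = s ^ 2 * l 3 := rfl
lemma scale_4 (s : ℝ) (l : L8) : scale s l 4 = s * l 4 := rfl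
lemma scale_5 (s : ℝ) (l : L8) : scale s l 5 = s * l 5 := rfl
lemma scale_6 (s : ℝ) (l : L8) : scale s l 6 = s * l 6 := rfl
lemma scale_7 (s : ℝ) (l : L8) : scale s l 7 = l 7 := rfl

lemma fF_scale (s : ℝ) (l : L8) (p : R3) : fF (scale s l) (s • p) = s ^ 3 * fF l p := by
  simp only [fF, scale_0, scale_1, scale_2, scale_3, scale_4, scale_5, scale_6, scale_7,
    Prod.smul_fst, Prod.smul_snd, smul_eq_mul]
  ring

lemma fg_scale (s : ℝ) (l : L8) (p : R3) : fg (scale s l) (s • p) = s ^ 2 • fg l p := by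
  apply R3.ext <;>
  simp only [fg, scale_1, scale_2, scale_3, scale_4, scale_5, scale_6, scale_7,
    Prod.smul_fst, Prod.smul_snd, smul_eq_mul] <;>
  ring

lemma fh_scale (s : ℝ) (l : L8) (p v : R3) : fh (scale s l) (s • p) v = s • fh l p v := by
  apply R3.ext <;>
  simp only [fh, scale_4, scale_5, scale_6, scale_7,
    Prod.smul_fst, Prod.smul_snd, smul_eq_mul] <;>
  ring

lemma fc_scale (s : ℝ) (l : L8) (v : R3) : fc (scale s l) v = fc l v := rfl

lemma OnS.scale {l : L8} {p v : R3} (h : OnS l p v) (s : ℝ) : OnS (scale s l) (s • p) v := by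
  obtain ⟨h1, h2, h3, h4⟩ := h
  refine ⟨?_, ?_, ?_, h4⟩
  · rw [fF_scale, h1, mul_zero]
  · rw [fg_scale, dot_smul_left, h2, mul_zero]
  · rw [fh_scale, dot_smul_left, h3, mul_zero]

section cont
variable {α : Type*} [TopologicalSpace α] {l : α → L8} {p v w : α → R3} {s : α → ℝ}

@[fun_prop]
lemma cont_dot (hv : Continuous v) (hw : Continuous w) :
    Continuous fun a => dot (v a) (w a) := by
  unfold dot; fun_prop

@[fun_prop]
lemma cont_det3 {u : α → R3} (hu : Continuous u) (hv : Continuous v) (hw : Continuous w) :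
    Continuous fun a => det3 (u a) (v a) (w a) := by
  unfold det3; fun_prop

@[fun_prop]
lemma cont_fF (hl : Continuous l) (hp : Continuous p) : Continuous fun a => fF (l a) (p a) := by
  unfold fF; fun_prop

@[fun_prop]
lemma cont_fg (hl : Continuous l) (hp : Continuous p) : Continuous fun a => fg (l a) (p a) := by
  unfold fg; fun_prop

@[fun_prop]
lemma cont_fh (hl : Continuous l) (hp : Continuous p) (hv : Continuous v) :
    Continuous fun a => fh (l a) (p a) (v a) := by
  unfold fh; fun_prop

@[fun_prop]
lemma cont_fc (hl : Continuous l) (hv : Continuous v) :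
    Continuous fun a => fc (l a) (v a) := by
  unfold fc; fun_prop

@[fun_prop]
lemma cont_w0 (hl : Continuous l) (hp : Continuous p) (hv : Continuous v) :
    Continuous fun a => w0 (l a) (p a) (v a) := by
  unfold w0; fun_prop

@[fun_prop]
lemma cont_w1 (hl : Continuous l) (hp : Continuous p) (hv : Continuous v) :
    Continuous fun a => w1 (l a) (p a) (v a) := by
  unfold w1; fun_prop

@[fun_prop]
lemma cont_w2 (hl : Continuous l) (hp : Continuous p) (hv : Continuous v) :
    Continuous fun a => w2 (l a) (p a) (v a) := by
  unfold w2; fun_prop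

@[fun_prop]
lemma cont_scale (hs : Continuous s) (hl : Continuous l) :
    Continuous fun a => scale (s a) (l a) := by
  refine continuous_pi fun i => ?_
  fin_cases i
  · exact ((hs.pow 3).mul ((continuous_apply 0).comp hl))
  · exact ((hs.pow 2).mul ((continuous_apply 1).comp hl))
  · exact ((hs.pow 2).mul ((continuous_apply 2).comp hl))
  · exact ((hs.pow 2).mul ((continuous_apply 3).comp hl))
  · exact (hs.mul ((continuous_apply 4).comp hl))
  · exact (hs.mul ((continuous_apply 5).comp hl))
  · exact (hs.mul ((continuous_apply 6).comp hl))
  · change Continuous fun a => l a 7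
    fun_prop

end cont

lemma isClosed_OnS {α : Type*} [TopologicalSpace α] {l : α → L8} {p v : α → R3}
    (hl : Continuous l) (hp : Continuous p) (hv : Continuous v) :
    IsClosed {a | OnS (l a) (p a) (v a)} := by
  unfold OnS
  refine IsClosed.and ?_ (IsClosed.and ?_ (IsClosed.and ?_ ?_)) <;>
  exact isClosed_eq (by fun_prop) (by fun_prop)

lemma norm_le_of_dot {v : R3} (h : dot v v = 1) : ‖v‖ ≤ 1 := by
  simp only [dot] at h
  rw [Prod.norm_def, Prod.norm_def, max_le_iff, max_le_iff]
  simp only [Real.norm_eq_abs]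
  refine ⟨?_, ?_, ?_⟩ <;> refine abs_le_one_iff_mul_self_le_one.2 ?_ <;>
  nlinarith [mul_self_nonneg v.1, mul_self_nonneg v.2.1, mul_self_nonneg v.2.2]

/-- Lines on the surfaces stay in a compact set as long as the parameters do. -/
lemma line_bound (B : ℝ) : ∃ R : ℝ, ∀ (l : L8) (p v : R3), ‖l‖ ≤ B → |l 7| ≤ 1 → OnS l p v →
    dot v v = 1 → dot p v = 0 → ‖p‖ ≤ R := by
  let K : Set (L8 × R3 × R3 × ℝ) := {a | ‖a.1‖ ≤ B ∧ |a.1 7| ≤ 1 ∧ dot a.2.1 a.2.1 = 1 ∧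
    ‖a.2.2.1‖ = 1 ∧ dot a.2.2.1 a.2.1 = 0 ∧ 0 ≤ a.2.2.2 ∧ a.2.2.2 ≤ 1 ∧
    OnS (scale a.2.2.2 a.1) a.2.2.1 a.2.1}
  have hK : IsCompact K := by
    apply Metric.isCompact_of_isClosed_isBounded
    · refine IsClosed.and (isClosed_le (by fun_prop) (by fun_prop))
        (IsClosed.and (isClosed_le (by fun_prop) (by fun_prop))
        (IsClosed.and (isClosed_eq (by fun_prop) (by fun_prop))
        (IsClosed.and (isClosed_eq (by fun_prop) (by fun_prop))
        (IsClosed.and (isClosed_eq (by fun_prop) (by fun_prop))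
        (IsClosed.and (isClosed_le (by fun_prop) (by fun_prop))
        (IsClosed.and (isClosed_le (by fun_prop) (by fun_prop)) ?_))))))
      exact isClosed_OnS (by fun_prop) (by fun_prop) (by fun_prop)
    · refine (Metric.isBounded_closedBall (x := (0 : L8 × R3 × R3 × ℝ)) (r := max B 1)).subset ?_
      rintro ⟨l, v, w, s⟩ ⟨h1, -, h2, h3, -, h4, h5, -⟩
      rw [mem_closedBall_zero_iff]
      simp only at *
      refine norm_prod_le_iff.2 ⟨h1.trans (le_max_left _ _), norm_prod_le_iff.2
        ⟨(norm_le_of_dot h2).trans (le_max_right _ _), norm_prod_le_iff.2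
        ⟨h3.le.trans (le_max_right _ _), ?_⟩⟩⟩
      refine le_trans ?_ (le_max_right _ _)
      simp only [Real.norm_eq_abs, abs_of_nonneg h4]; exact h5
  have hpos : ∀ a ∈ K, 0 < a.2.2.2 := by
    rintro ⟨l, v, w, s⟩ ⟨-, h7, h2, h3, h0, h4, -, h6⟩
    simp only at *
    rcases h4.eq_or_lt with h | h
    · exfalso
      subst h
      obtain ⟨e1, e2, e3, e4⟩ := h6
      have f1 : dot (fc l v) w = 0 := by
        simp only [dot, fh, fc, scale_4, scale_5, scale_6, scale_7] at e3 ⊢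
        linear_combination e3 / 2
      have f2 : dot (fc l w) v = 0 := by
        simp only [dot, fg, fc, scale_1, scale_2, scale_3, scale_4, scale_5, scale_6,
          scale_7] at e2 ⊢
        linear_combination e2
      have f3 : dot (fc l w) w = 0 := by
        simp only [dot, fF, fc, scale_0, scale_1, scale_2, scale_3, scale_4, scale_5, scale_6,
          scale_7] at e1 ⊢
        linear_combination 3 * e1
      have hv : v ≠ 0 := by rintro rfl; simp [dot] at h2
      have := par_of_cross hv (no_plane e4 f1 f2 f3)
      rw [h0, zero_div, zero_smul] at this
      subst this
      simp at h3
    · exact h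
  obtain ⟨s0, hs0, hmin⟩ := hK.exists_forall_le' (f := fun a => a.2.2.2) (a := 0)
    (by fun_prop) hpos
  refine ⟨max 1 (1 / s0), fun l p v hl h7 hS hv hpv => ?_⟩
  by_contra hc
  push Not at hc
  obtain ⟨hp1, hp2⟩ := max_lt_iff.1 hc
  have hp0 : 0 < ‖p‖ := by linarith
  have := hmin (l, v, ‖p‖⁻¹ • p, ‖p‖⁻¹) ⟨hl, h7, hv, by
    rw [norm_smul, norm_inv, norm_norm, inv_mul_cancel₀ hp0.ne'], by
    rw [dot_smul_left, hpv, mul_zero], by positivity, inv_le_one_of_one_le₀ hp1.le,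
    hS.scale _⟩
  simp only at this
  rw [div_lt_iff₀ hs0] at hp2
  rw [le_inv_comm₀ hs0 hp0, inv_eq_one_div, le_div_iff₀ hs0] at this
  linarith

/-- Critical points stay in a compact set as long as the parameters do. -/
lemma crit_bound (B : ℝ) : ∃ R : ℝ, ∀ (l : L8) (p : R3), ‖l‖ ≤ B → |l 7| ≤ 1 → fg l p = 0 →
    ‖p‖ ≤ R := by
  let K : Set (L8 × R3 × ℝ) := {a | ‖a.1‖ ≤ B ∧ |a.1 7| ≤ 1 ∧
    ‖a.2.1‖ = 1 ∧ 0 ≤ a.2.2 ∧ a.2.2 ≤ 1 ∧ fg (scale a.2.2 a.1) a.2.1 = 0}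
  have hK : IsCompact K := by
    apply Metric.isCompact_of_isClosed_isBounded
    · exact IsClosed.and (isClosed_le (by fun_prop) (by fun_prop))
        (IsClosed.and (isClosed_le (by fun_prop) (by fun_prop))
        (IsClosed.and (isClosed_eq (by fun_prop) (by fun_prop))
        (IsClosed.and (isClosed_le (by fun_prop) (by fun_prop))
        (IsClosed.and (isClosed_le (by fun_prop) (by fun_prop))
          (isClosed_eq (by fun_prop) (by fun_prop))))))
    · refine (Metric.isBounded_closedBall (x := (0 : L8 × R3 × ℝ)) (r := max B 1)).subset ?_
      rintro ⟨l, w, s⟩ ⟨h1, -, h3, h4, h5, -⟩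
      rw [mem_closedBall_zero_iff]
      simp only at *
      refine norm_prod_le_iff.2 ⟨h1.trans (le_max_left _ _), norm_prod_le_iff.2
        ⟨h3.le.trans (le_max_right _ _), ?_⟩⟩
      refine le_trans ?_ (le_max_right _ _)
      simp only [Real.norm_eq_abs, abs_of_nonneg h4]; exact h5
  have hpos : ∀ a ∈ K, 0 < a.2.2 := by
    rintro ⟨l, w, s⟩ ⟨-, h7, h3, h4, -, h6⟩
    simp only at *
    rcases h4.eq_or_lt with h | h
    · exfalso
      subst h
      have : fc l w = 0 := by
        rw [← h6]
        apply R3.ext <;> simp only [fg, fc, scale_1, scale_2, scale_3, scale_4, scale_5, scale_6,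
          scale_7] <;> ring
      rw [fc_ne_zero h7 this] at h3
      simp at h3
    · exact h
  obtain ⟨s0, hs0, hmin⟩ := hK.exists_forall_le' (f := fun a => a.2.2) (a := 0)
    (by fun_prop) hpos
  refine ⟨max 1 (1 / s0), fun l p hl h7 hg => ?_⟩
  by_contra hc
  push Not at hc
  obtain ⟨hp1, hp2⟩ := max_lt_iff.1 hc
  have hp0 : 0 < ‖p‖ := by linarith
  have := hmin (l, ‖p‖⁻¹ • p, ‖p‖⁻¹) ⟨hl, h7, by
    rw [norm_smul, norm_inv, norm_norm, inv_mul_cancel₀ hp0.ne'], by positivity,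
    inv_le_one_of_one_le₀ hp1.le, by rw [fg_scale, hg, smul_zero]⟩
  simp only at this
  rw [div_lt_iff₀ hs0] at hp2
  rw [le_inv_comm₀ hs0 hp0, inv_eq_one_div, le_div_iff₀ hs0] at this
  linarith

/-! ### Lines deform uniquely with the parameters -/

lemma local_homeo {E : Type*} [NormedAddCommGroup E] [NormedSpace ℝ E] [FiniteDimensional ℝ E]
    {f : E → E} (hf : ContDiff ℝ 1 f) (x : E) (hinj : ∀ d, fderiv ℝ f x d = 0 → d = 0) :
    map f (𝓝 x) = 𝓝 (f x) ∧ ∃ W ∈ 𝓝 x, InjOn f W := by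
  have : CompleteSpace E := FiniteDimensional.complete ℝ E
  have hs : HasStrictFDerivAt f (fderiv ℝ f x) x :=
    (hf.contDiffAt).hasStrictFDerivAt one_ne_zero
  let e : E ≃L[ℝ] E := (LinearEquiv.ofInjectiveEndo (fderiv ℝ f x : E →ₗ[ℝ] E)
    ((injective_iff_map_eq_zero _).2 hinj)).toContinuousLinearEquiv
  have he : (e : E →L[ℝ] E) = fderiv ℝ f x := by
    ext d; rfl
  rw [← he] at hs
  refine ⟨hs.map_nhds_eq_of_equiv, (hs.toOpenPartialHomeomorph f).source,
    (hs.toOpenPartialHomeomorph f).open_source.mem_nhds hs.mem_toOpenPartialHomeomorph_source, ?_⟩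
  exact (hs.toOpenPartialHomeomorph f).injOn

/-- The derivative at `0` of a cubic polynomial function, the coefficients of higher order being
expressed through the values at `-1`, `0`, `1`. -/
lemma cubic_deriv {f : ℝ → ℝ} {a : ℝ} (h : ∀ s, f s = f 0 + a * s
    + ((f 1 + f (-1)) / 2 - f 0) * s ^ 2 + ((f 1 - f (-1)) / 2 - a) * s ^ 3) :
    HasDerivAt f a 0 := by
  generalize (f 1 + f (-1)) / 2 - f 0 = b at h
  generalize (f 1 - f (-1)) / 2 - a = c at h
  generalize f 0 = k at h
  rw [show f = fun s => k + a * s + b * s ^ 2 + c * s ^ 3 from funext h]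
  have h1 : HasDerivAt (fun s : ℝ => s) 1 0 := hasDerivAt_id 0
  have := (((h1.const_mul a).const_add k).add ((h1.pow 2).const_mul b)).add
    ((h1.pow 3).const_mul c)
  exact this.congr_deriv (by simp)

/-- The space of parameters and lines. -/
abbrev X := L8 × R3 × R3

/-- The equations of a line on the surface, together with a normalization of the pair `(p, v)`
representing it. -/
noncomputable def Phi (a : X) : X :=
  (a.1, (fF a.1 a.2.1, dot (fg a.1 a.2.1) a.2.2, dot (fh a.1 a.2.1 a.2.2) a.2.2),
   (dot (fc a.1 a.2.2) a.2.2, dot a.2.2 a.2.2, dot a.2.1 a.2.2))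

lemma contDiff_Phi : ContDiff ℝ 1 Phi := by
  unfold Phi fF dot fg fh fc
  fun_prop

lemma deriv_along {E : Type*} [NormedAddCommGroup E] [NormedSpace ℝ E]
    {G : Type*} [NormedAddCommGroup G] [NormedSpace ℝ G] {f : E → G} {x d : E}
    (hf : DifferentiableAt ℝ f x) {a : G} (h : HasDerivAt (fun s : ℝ => f (x + s • d)) a 0) :
    fderiv ℝ f x d = a := by
  have h2 : HasDerivAt (fun s : ℝ => x + s • d) d 0 := by
    have := ((hasDerivAt_id (0 : ℝ)).smul_const d).const_add x
    simpa using this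
  have h3 : HasFDerivAt f (fderiv ℝ f x) (x + (0 : ℝ) • d) := by
    simpa using hf.hasFDerivAt
  exact (h3.comp_hasDerivAt (0 : ℝ) h2).unique h

lemma lin_sol {v G0 G1 G2 a b p : R3} {W0 W1 W2 : ℝ}
    (hW0 : det3 v G0 G1 = W0) (hW : 0 < W0 * W2 - W1 ^ 2) (h0 : W0 ≠ 0)
    (dep : W0 • G2 - W1 • G1 + W2 • G0 = 0)
    (e1 : dot G0 a = 0) (e2 : dot G1 a + dot G0 b = 0) (e3 : dot G2 a + dot G1 b = 0)
    (e4 : dot G2 b = 0) (e5 : dot v b = 0) (e6 : dot p b + dot v a = 0) : a = 0 ∧ b = 0 := by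
  have fa : W0 * dot G2 a = W1 * dot G1 a - W2 * dot G0 a := by
    have := congrArg (fun u => dot u a) dep
    simp only [sub_eq_add_neg, ← neg_smul, dot_add_left, dot_smul_left] at this
    rw [show dot 0 a = 0 by simp [dot]] at this; linarith
  have fb : W0 * dot G2 b = W1 * dot G1 b - W2 * dot G0 b := by
    have := congrArg (fun u => dot u b) dep
    simp only [sub_eq_add_neg, ← neg_smul, dot_add_left, dot_smul_left] at this
    rw [show dot 0 b = 0 by simp [dot]] at this; linarith
  have key : ∀ u : R3, dot v u = 0 → dot G0 u = 0 → dot G1 u = 0 → u = 0 := by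
    intro u q0 q1 q2
    simp only [dot, det3] at *
    apply R3.eq_zero
    · refine (mul_eq_zero.1 ?_).resolve_left h0
      rw [← hW0]
      linear_combination (G0.2.1 * G1.2.2 - G0.2.2 * G1.2.1) * q0
        - (v.2.1 * G1.2.2 - v.2.2 * G1.2.1) * q1 + (v.2.1 * G0.2.2 - v.2.2 * G0.2.1) * q2
    · refine (mul_eq_zero.1 ?_).resolve_left h0
      rw [← hW0]
      linear_combination (G0.2.2 * G1.1 - G0.1 * G1.2.2) * q0
        - (v.2.2 * G1.1 - v.1 * G1.2.2) * q1 + (v.2.2 * G0.1 - v.1 * G0.2.2) * q2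
    · refine (mul_eq_zero.1 ?_).resolve_left h0
      rw [← hW0]
      linear_combination (G0.1 * G1.2.1 - G0.2.1 * G1.1) * q0
        - (v.1 * G1.2.1 - v.2.1 * G1.1) * q1 + (v.1 * G0.2.1 - v.2.1 * G0.1) * q2
  have x1 : dot G1 a = 0 := by
    have : (W0 * W2 - W1 ^ 2) * dot G1 a = 0 := by
      rw [e1] at fa
      rw [e4] at fb
      linear_combination W0 * W2 * e2 - W0 * fb + W1 * fa - W0 * W1 * e3
    exact (mul_eq_zero.1 this).resolve_left hW.ne'
  have x2 : dot G0 b = 0 := by linarith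
  have x3 : dot G1 b = 0 := by
    have : W0 * dot G1 b = 0 := by
      rw [e1, x1] at fa
      linear_combination W0 * e3 - fa
    exact (mul_eq_zero.1 this).resolve_left h0
  have hb := key b e5 x2 x3
  subst hb
  refine ⟨key a ?_ e1 x1, rfl⟩
  rw [← e6]; simp [dot]

/-- Near a left line, the map `Phi` is a local homeomorphism. -/
lemma phi_local {l : L8} {p v : R3} (h : Left l p v) :
    map Phi (𝓝 (l, p, v)) = 𝓝 (Phi (l, p, v)) ∧ ∃ W ∈ 𝓝 (l, p, v), InjOn Phi W := by
  apply local_homeo contDiff_Phi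
  rintro ⟨dl, a, b⟩ hd
  have hdiff : DifferentiableAt ℝ Phi (l, p, v) := contDiff_Phi.differentiable one_ne_zero _
  have H := hdiff.hasFDerivAt
  have hcomp : ∀ φ : X →L[ℝ] ℝ, fderiv ℝ (fun x => φ (Phi x)) (l, p, v) (dl, a, b) = 0 := by
    intro φ
    have := (φ.hasFDerivAt.comp (l, p, v) H).fderiv
    change fderiv ℝ (fun x => φ (Phi x)) (l, p, v) = _ at this
    rw [this, ContinuousLinearMap.comp_apply, hd, map_zero]
  have hdl : dl = 0 := by
    have h1 : HasFDerivAt (fun x : X => (Phi x).1) (ContinuousLinearMap.fst ℝ L8 (R3 × R3))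
        (l, p, v) := hasFDerivAt_fst
    have h2 := H.fst.unique h1
    have := congrArg (fun T => T (dl, a, b)) h2
    simp only [ContinuousLinearMap.comp_apply, hd, map_zero] at this
    exact this.symm
  subst hdl
  have comp : ∀ (φ : X →L[ℝ] ℝ) (c : ℝ),
      (∀ s : ℝ, φ (Phi (l, p + s • a, v + s • b)) = φ (Phi (l, p + (0 : ℝ) • a, v + (0 : ℝ) • b)) + c * s
        + ((φ (Phi (l, p + (1 : ℝ) • a, v + (1 : ℝ) • b))
          + φ (Phi (l, p + (-1 : ℝ) • a, v + (-1 : ℝ) • b))) / 2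
          - φ (Phi (l, p + (0 : ℝ) • a, v + (0 : ℝ) • b))) * s ^ 2
        + ((φ (Phi (l, p + (1 : ℝ) • a, v + (1 : ℝ) • b))
          - φ (Phi (l, p + (-1 : ℝ) • a, v + (-1 : ℝ) • b))) / 2 - c) * s ^ 3) → c = 0 := by
    intro φ c hc
    have h1 : DifferentiableAt ℝ (fun x => φ (Phi x)) (l, p, v) :=
      φ.differentiableAt.comp _ hdiff
    have h2 : HasDerivAt (fun s : ℝ => φ (Phi ((l, p, v) + s • ((0 : L8), a, b)))) c 0 := by
      have e : (fun s : ℝ => φ (Phi ((l, p, v) + s • ((0 : L8), a, b))))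
          = fun s : ℝ => φ (Phi (l, p + s • a, v + s • b)) := by
        funext s; simp
      rw [e]
      exact cubic_deriv hc
    rw [← deriv_along h1 h2]
    exact hcomp φ
  let π1 : X →L[ℝ] R3 := (ContinuousLinearMap.fst ℝ R3 R3).comp
    (ContinuousLinearMap.snd ℝ L8 (R3 × R3))
  let π2 : X →L[ℝ] R3 := (ContinuousLinearMap.snd ℝ R3 R3).comp
    (ContinuousLinearMap.snd ℝ L8 (R3 × R3))
  let q1 : R3 →L[ℝ] ℝ := ContinuousLinearMap.fst ℝ ℝ (ℝ × ℝ)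
  let q2 : R3 →L[ℝ] ℝ := (ContinuousLinearMap.fst ℝ ℝ ℝ).comp (ContinuousLinearMap.snd ℝ ℝ (ℝ × ℝ))
  let q3 : R3 →L[ℝ] ℝ := (ContinuousLinearMap.snd ℝ ℝ ℝ).comp (ContinuousLinearMap.snd ℝ ℝ (ℝ × ℝ))
  have e1 : dot (fg l p) a = 0 := by
    refine comp (q1.comp π1) _ fun s => ?_
    change fF l (p + s • a) = fF l (p + (0 : ℝ) • a) + _ * s + ((fF l (p + (1 : ℝ) • a)
      + fF l (p + (-1 : ℝ) • a)) / 2 - fF l (p + (0 : ℝ) • a)) * s ^ 2 + ((fF l (p + (1 : ℝ) • a)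
      - fF l (p + (-1 : ℝ) • a)) / 2 - _) * s ^ 3
    simp only [fF_line]; ring
  have e2 : dot (fh l p v) a + dot (fg l p) b = 0 := by
    refine comp (q2.comp π1) _ fun s => ?_
    simp only [q2, π1, Phi, ContinuousLinearMap.comp_apply, ContinuousLinearMap.coe_fst',
      ContinuousLinearMap.coe_snd']
    simp only [dot, fg, fh, Prod.fst_add, Prod.snd_add, Prod.smul_fst, Prod.smul_snd,
      smul_eq_mul]; ring
  have e3 : 2 * (dot (fc l v) a + dot (fh l p v) b) = 0 := by
    refine comp (q3.comp π1) _ fun s => ?_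
    simp only [q3, π1, Phi, ContinuousLinearMap.comp_apply, ContinuousLinearMap.coe_fst',
      ContinuousLinearMap.coe_snd']
    simp only [dot, fc, fh, Prod.fst_add, Prod.snd_add, Prod.smul_fst, Prod.smul_snd,
      smul_eq_mul]; ring
  have e4 : 3 * dot (fc l v) b = 0 := by
    refine comp (q1.comp π2) _ fun s => ?_
    simp only [q1, π2, Phi, ContinuousLinearMap.comp_apply, ContinuousLinearMap.coe_fst',
      ContinuousLinearMap.coe_snd']
    simp only [dot, fc, Prod.fst_add, Prod.snd_add, Prod.smul_fst, Prod.smul_snd,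
      smul_eq_mul]; ring
  have e5 : 2 * dot v b = 0 := by
    refine comp (q2.comp π2) _ fun s => ?_
    simp only [q2, π2, Phi, ContinuousLinearMap.comp_apply, ContinuousLinearMap.coe_fst',
      ContinuousLinearMap.coe_snd']
    simp only [dot, Prod.fst_add, Prod.snd_add, Prod.smul_fst, Prod.smul_snd,
      smul_eq_mul]; ring
  have e6 : dot p b + dot v a = 0 := by
    refine comp (q3.comp π2) _ fun s => ?_
    simp only [q3, π2, Phi, ContinuousLinearMap.comp_apply,
      ContinuousLinearMap.coe_snd']
    simp only [dot, Prod.fst_add, Prod.snd_add, Prod.smul_fst, Prod.smul_snd,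
      smul_eq_mul]; ring
  have dep := dep_of_orth h.ne_zero h.1.2.1 h.1.2.2.1 h.1.2.2.2
  obtain ⟨ha, hb⟩ := lin_sol (W0 := w0 l p v) (W1 := w1 l p v) (W2 := w2 l p v)
    rfl h.2.2 h.2.1.ne' dep e1 e2 (by linarith) (by linarith) (by linarith) e6
  simp [ha, hb]

lemma isOpen_pos {l : L8} {p v : R3} (h : Left l p v) :
    ∀ᶠ a : X in 𝓝 (l, p, v), 0 < w0 a.1 a.2.1 a.2.2 ∧
      0 < w0 a.1 a.2.1 a.2.2 * w2 a.1 a.2.1 a.2.2 - w1 a.1 a.2.1 a.2.2 ^ 2 := by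
  refine Filter.Eventually.and ?_ ?_
  · exact (isOpen_lt continuous_const (by fun_prop :
      Continuous fun a : X => w0 a.1 a.2.1 a.2.2)).mem_nhds h.2.1
  · exact (isOpen_lt continuous_const (by fun_prop :
      Continuous fun a : X => w0 a.1 a.2.1 a.2.2 * w2 a.1 a.2.1 a.2.2
        - w1 a.1 a.2.1 a.2.2 ^ 2)).mem_nhds h.2.2

/-- Left lines persist under small changes of the parameters. -/
lemma left_persist {l : L8} {p v : R3} (h : Left l p v) {W : Set (R3 × R3)}
    (hW : W ∈ 𝓝 (p, v)) : ∀ᶠ l' in 𝓝 l, ∃ q ∈ W, Left l' q.1 q.2 := by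
  have hW' : {a : X | a.2 ∈ W ∧ (0 < w0 a.1 a.2.1 a.2.2 ∧
      0 < w0 a.1 a.2.1 a.2.2 * w2 a.1 a.2.1 a.2.2 - w1 a.1 a.2.1 a.2.2 ^ 2)} ∈ 𝓝 (l, p, v) :=
    inter_mem (continuousAt_snd.preimage_mem_nhds hW) (isOpen_pos h)
  have him := image_mem_map (m := Phi) hW'
  rw [(phi_local h).1] at him
  have hc : Continuous fun l' : L8 => (l', (Phi (l, p, v)).2) := by fun_prop
  have := hc.continuousAt.preimage_mem_nhds (x := l) (t := Phi '' _) him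
  filter_upwards [this] with l' hl'
  obtain ⟨⟨l2, q⟩, ⟨hq, hpos⟩, hq2⟩ := hl'
  have hl2 : l2 = l' := congrArg Prod.fst hq2
  subst hl2
  refine ⟨q, hq, ?_, hpos⟩
  have e := congrArg Prod.snd hq2
  simp only [Phi, Prod.mk.injEq] at e
  obtain ⟨⟨e1, e2, e3⟩, e4, -, -⟩ := e
  exact ⟨e1.trans h.1.1, e2.trans h.1.2.1, e3.trans h.1.2.2.1, e4.trans h.1.2.2.2⟩

/-! ### Configurations of left lines -/

/-- `T k σ l`: the surface with parameter `l` carries `k` left lines with increasing directions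
and linking signs prescribed by `σ`. -/
def T (k : ℕ) (σ : Fin k → Fin k → ℝ) (l : L8) : Prop :=
  ∃ L : Fin k → R3 × R3, (∀ i, Left l (L i).1 (L i).2) ∧ ∀ i j, i < j →
    Maj (l 7) (L i).2 (L j).2 ∧ 0 < σ i j * det3 (L i).2 (L j).2 ((L j).1 - (L i).1)

lemma isOpen_Maj {α : Type*} [TopologicalSpace α] {m : α → ℝ} {v v' : α → R3}
    (hm : Continuous m) (hv : Continuous v) (hv' : Continuous v') :
    IsOpen {a | Maj (m a) (v a) (v' a)} := by
  simp only [Maj, ofPred_or]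
  refine IsOpen.union ?_ (IsOpen.union ?_ ?_) <;> refine IsOpen.and ?_ ?_ <;>
    exact isOpen_lt (by fun_prop) (by fun_prop)

lemma T_open {k : ℕ} {σ : Fin k → Fin k → ℝ} {l : L8} (h : T k σ l) : ∀ᶠ l' in 𝓝 l, T k σ l' := by
  obtain ⟨L, hL, hp⟩ := h
  have hO : IsOpen {a : L8 × (Fin k → R3 × R3) | ∀ i j, i < j →
      Maj (a.1 7) (a.2 i).2 (a.2 j).2 ∧
      0 < σ i j * det3 (a.2 i).2 (a.2 j).2 ((a.2 j).1 - (a.2 i).1)} := by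
    simp only [ofPred_forall]
    refine isOpen_iInter_of_finite fun i => isOpen_iInter_of_finite fun j =>
      isOpen_iInter_of_finite fun hij => ?_
    exact IsOpen.and (isOpen_Maj (by fun_prop) (by fun_prop) (by fun_prop))
      (isOpen_lt (by fun_prop) (by fun_prop))
  obtain ⟨r, hr, hball⟩ := Metric.isOpen_iff.1 hO (l, L) hp
  have h1 : ∀ᶠ l' in 𝓝 l, ∀ i, ∃ q ∈ Metric.ball (L i) r, Left l' q.1 q.2 :=
    eventually_all.2 fun i => left_persist (hL i) (Metric.ball_mem_nhds _ hr)
  filter_upwards [h1, Metric.ball_mem_nhds l hr] with l' hl' hl2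
  choose L' hL' hL2 using hl'
  refine ⟨L', hL2, ?_⟩
  have : (l', L') ∈ Metric.ball (l, L) r := by
    rw [Metric.mem_ball, Prod.dist_eq, max_lt_iff]
    exact ⟨hl2, (dist_pi_lt_iff hr).2 hL'⟩
  exact hball this

/-- The representative of a line with unit direction vector and base point closest to the
origin. -/
noncomputable def nrm (q : R3 × R3) : R3 × R3 :=
  (q.1 + (-(dot q.1 q.2 / dot q.2 q.2)) • q.2, (Real.sqrt (dot q.2 q.2))⁻¹ • q.2)

lemma nrm_left {l : L8} {q : R3 × R3} (h : Left l q.1 q.2) : Left l (nrm q).1 (nrm q).2 :=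
  (h.shift _).smul (inv_ne_zero (Real.sqrt_pos.2 (dot_self_pos h.ne_zero)).ne')

lemma nrm_unit {q : R3 × R3} (h : q.2 ≠ 0) : dot (nrm q).2 (nrm q).2 = 1 := by
  have hp := dot_self_pos h
  simp only [nrm, dot_smul_left, dot_smul_right]
  rw [← mul_assoc, ← mul_inv, Real.mul_self_sqrt hp.le, inv_mul_cancel₀ hp.ne']

lemma nrm_orth {q : R3 × R3} (h : q.2 ≠ 0) : dot (nrm q).1 (nrm q).2 = 0 := by
  have hp := dot_self_pos h
  simp only [nrm, dot_smul_right, dot_add_left, dot_smul_left]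
  field_simp
  ring

lemma nrm_maj {m : ℝ} {q q' : R3 × R3} (h : q.2 ≠ 0) (h' : q'.2 ≠ 0) (hm : Maj m q.2 q'.2) :
    Maj m (nrm q).2 (nrm q').2 := by
  have hp := inv_pos.2 (Real.sqrt_pos.2 (dot_self_pos h))
  have hp' := inv_pos.2 (Real.sqrt_pos.2 (dot_self_pos h'))
  simp only [nrm]
  generalize (Real.sqrt (dot q.2 q.2))⁻¹ = c at *
  generalize (Real.sqrt (dot q'.2 q'.2))⁻¹ = c' at *
  have hcc := mul_pos hp hp'
  simp only [Maj, Prod.smul_fst, Prod.smul_snd, smul_eq_mul] at hm ⊢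
  rcases hm with ⟨a, b⟩ | ⟨a, b⟩ | ⟨a, b⟩
  · exact Or.inl ⟨by nlinarith [mul_pos hcc a], by nlinarith [mul_pos hcc b]⟩
  · exact Or.inr (Or.inl ⟨by nlinarith [mul_pos hcc a], by nlinarith [mul_pos hcc b]⟩)
  · exact Or.inr (Or.inr ⟨by nlinarith [mul_pos hcc a], by nlinarith [mul_pos hcc b]⟩)

lemma nrm_det {s : ℝ} {q q' : R3 × R3} (h : q.2 ≠ 0) (h' : q'.2 ≠ 0)
    (hm : 0 < s * det3 q.2 q'.2 (q'.1 - q.1)) :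
    0 < s * det3 (nrm q).2 (nrm q').2 ((nrm q').1 - (nrm q).1) := by
  have hp := inv_pos.2 (Real.sqrt_pos.2 (dot_self_pos h))
  have hp' := inv_pos.2 (Real.sqrt_pos.2 (dot_self_pos h'))
  simp only [nrm]
  generalize (Real.sqrt (dot q.2 q.2))⁻¹ = c at *
  generalize (Real.sqrt (dot q'.2 q'.2))⁻¹ = c' at *
  generalize -(dot q.1 q.2 / dot q.2 q.2) = t
  generalize -(dot q'.1 q'.2 / dot q'.2 q'.2) = t'
  have : s * det3 (c • q.2) (c' • q'.2) (q'.1 + t' • q'.2 - (q.1 + t • q.2))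
      = c * c' * (s * det3 q.2 q'.2 (q'.1 - q.1)) := by
    simp only [det3, Prod.fst_add, Prod.snd_add, Prod.fst_sub, Prod.snd_sub, Prod.smul_fst,
      Prod.smul_snd, smul_eq_mul]
    ring
  rw [this]
  exact mul_pos (mul_pos hp hp') hm

lemma isClosed_WLeft {α : Type*} [TopologicalSpace α] {l : α → L8} {p v : α → R3}
    (hl : Continuous l) (hp : Continuous p) (hv : Continuous v) :
    IsClosed {a | WLeft (l a) (p a) (v a)} := by
  unfold WLeft
  exact IsClosed.and (isClosed_OnS hl hp hv)
    (IsClosed.and (isClosed_le (by fun_prop) (by fun_prop))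
    (IsClosed.and (isClosed_le (by fun_prop) (by fun_prop))
    (IsClosed.and (isClosed_le (by fun_prop) (by fun_prop))
      (isClosed_le (by fun_prop) (by fun_prop)))))

/-- Distinct left lines do not have a common limit. -/
lemma no_collision {l : L8} {p v : R3} (h : Left l p v) {ln : ℕ → L8} {a b : ℕ → R3 × R3}
    (hl : Tendsto ln atTop (𝓝 l)) (ha : Tendsto a atTop (𝓝 (p, v)))
    (hb : Tendsto b atTop (𝓝 (p, v))) (hΦ : ∀ n, Phi (ln n, a n) = Phi (ln n, b n)) :
    ∃ n, a n = b n := by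
  obtain ⟨W, hW, hinj⟩ := (phi_local h).2
  have h1 := (hl.prodMk_nhds ha).eventually hW
  have h2 := (hl.prodMk_nhds hb).eventually hW
  obtain ⟨n, hn1, hn2⟩ := (h1.and h2).exists
  exact ⟨n, congrArg Prod.snd (hinj hn1 hn2 (hΦ n))⟩

lemma phi_val {l : L8} {q : R3 × R3} (h : OnS l q.1 q.2) (hu : dot q.2 q.2 = 1)
    (ho : dot q.1 q.2 = 0) : Phi (l, q) = (l, (0, 0, 0), (0, 1, 0)) := by
  obtain ⟨h1, h2, h3, h4⟩ := h
  simp only [Phi, h1, h2, h3, h4, hu, ho]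

/-- In the limit, distinct left lines remain skew. -/
lemma det_limit_ne {l : L8} {q q' : R3 × R3} (h : Left l q.1 q.2)
    (h' : Left l q'.1 q'.2) (hu : dot q.2 q.2 = 1) (ho : dot q.1 q.2 = 0)
    (hu' : dot q'.2 q'.2 = 1) (ho' : dot q'.1 q'.2 = 0)
    {ln : ℕ → L8} {a b : ℕ → R3 × R3}
    (hl : Tendsto ln atTop (𝓝 l)) (ha : Tendsto a atTop (𝓝 q))
    (hb : Tendsto b atTop (𝓝 q'))
    (hla : ∀ n, OnS (ln n) (a n).1 (a n).2 ∧ dot (a n).2 (a n).2 = 1 ∧ dot (a n).1 (a n).2 = 0)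
    (hlb : ∀ n, OnS (ln n) (b n).1 (b n).2 ∧ dot (b n).2 (b n).2 = 1 ∧ dot (b n).1 (b n).2 = 0)
    (hd : ∀ n, det3 (a n).2 (b n).2 ((b n).1 - (a n).1) ≠ 0) :
    det3 q.2 q'.2 (q'.1 - q.1) ≠ 0 := by
  intro h0
  obtain ⟨c1, c2⟩ := same_line h h' h0
  obtain ⟨p, v⟩ := q
  obtain ⟨p', v'⟩ := q'
  simp only at *
  have e1 := par_of_cross h.ne_zero c1
  have e2 := par_of_cross h.ne_zero c2
  rw [hu, div_one] at e1 e2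
  generalize dot v' v = c at *
  have hcc : c * c = 1 := by
    rw [e1, dot_smul_left, dot_smul_right, hu] at hu'; linarith
  have hp : p' = p := by
    have e3 : dot p' v = 0 := by
      rw [e1, dot_smul_right] at ho'
      refine (mul_eq_zero.1 ho').resolve_left ?_
      rintro rfl
      simp at hcc
    have e4 : dot (p' - p) v = 0 := by
      rw [sub_eq_add_neg, ← neg_one_smul ℝ p, dot_add_left, dot_smul_left, e3, ho]; ring
    rw [e4, zero_smul, sub_eq_zero] at e2
    exact e2
  subst hp
  rcases mul_self_eq_one_iff.1 hcc with rfl | rfl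
  · rw [one_smul] at e1
    subst e1
    obtain ⟨n, hn⟩ := no_collision h hl ha hb fun n => by
      rw [phi_val (hla n).1 (hla n).2.1 (hla n).2.2, phi_val (hlb n).1 (hlb n).2.1 (hlb n).2.2]
    apply hd n
    rw [hn]
    simp only [det3]; ring
  · have hb' : Tendsto (fun n => ((b n).1, (-1 : ℝ) • (b n).2)) atTop (𝓝 (p', v)) := by
      have hcont : Continuous fun q : R3 × R3 => (q.1, (-1 : ℝ) • q.2) := by fun_prop
      have := (hcont.tendsto (p', v')).comp hb
      simp only [e1, smul_smul] at this
      simpa [Function.comp_def] using this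
    obtain ⟨n, hn⟩ := no_collision h hl ha hb' fun n => by
      rw [phi_val (hla n).1 (hla n).2.1 (hla n).2.2, phi_val ((hlb n).1.smul _)]
      · simp only [dot_smul_left, dot_smul_right, (hlb n).2.1]; ring
      · simp only [dot_smul_right, (hlb n).2.2]; ring
    apply hd n
    rw [hn]
    simp only [det3, Prod.smul_fst, Prod.smul_snd, smul_eq_mul]; ring

lemma T_closed {k : ℕ} {σ : Fin k → Fin k → ℝ} {l : L8} (hl : l ∈ U)
    (h : ∃ᶠ l' in 𝓝[U] l, T k σ l') : T k σ l := by
  have h' : ∃ᶠ l' in 𝓝[U] l, T k σ l' ∧ l' ∈ U :=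
    h.and_eventually self_mem_nhdsWithin
  obtain ⟨ln, hln, hT⟩ := exists_seq_forall_of_frequently h'
  have hlim : Tendsto ln atTop (𝓝 l) := hln.mono_right nhdsWithin_le_nhds
  choose L hL hp using fun n => (hT n).1
  obtain ⟨B, hB⟩ := (Metric.isBounded_range_of_tendsto ln hlim).exists_norm_le
  obtain ⟨R, hR⟩ := line_bound B
  let M : ℕ → Fin k → R3 × R3 := fun n i => nrm (L n i)
  have hM : ∀ n i, Left (ln n) (M n i).1 (M n i).2 := fun n i => nrm_left (hL n i)
  have hMu : ∀ n i, dot (M n i).2 (M n i).2 = 1 := fun n i => nrm_unit (hL n i).ne_zero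
  have hMo : ∀ n i, dot (M n i).1 (M n i).2 = 0 := fun n i => nrm_orth (hL n i).ne_zero
  have hmem : ∀ n, M n ∈ Set.pi univ fun _ : Fin k => Metric.closedBall (0 : R3 × R3) (max R 1) := by
    intro n i _
    rw [mem_closedBall_zero_iff, norm_prod_le_iff]
    exact ⟨(hR _ _ _ (hB _ (mem_range_self n)) (hT n).2.1.le (hM n i).1 (hMu n i)
      (hMo n i)).trans (le_max_left _ _), (norm_le_of_dot (hMu n i)).trans (le_max_right _ _)⟩
  obtain ⟨N, -, φ, hφ, hN⟩ := (isCompact_univ_pi fun _ =>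
    isCompact_closedBall (0 : R3 × R3) (max R 1)).tendsto_subseq hmem
  have hNi : ∀ i, Tendsto (fun n => M (φ n) i) atTop (𝓝 (N i)) := fun i =>
    (tendsto_pi_nhds.1 hN) i
  have hlφ : Tendsto (fun n => ln (φ n)) atTop (𝓝 l) := hlim.comp hφ.tendsto_atTop
  have hu : ∀ i, dot (N i).2 (N i).2 = 1 := fun i => by
    have hc : IsClosed {q : R3 × R3 | dot q.2 q.2 = 1} :=
      isClosed_eq (by fun_prop) (by fun_prop)
    exact hc.mem_of_tendsto (hNi i) (Eventually.of_forall fun n => hMu _ _)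
  have ho : ∀ i, dot (N i).1 (N i).2 = 0 := fun i => by
    have hc : IsClosed {q : R3 × R3 | dot q.1 q.2 = 0} :=
      isClosed_eq (by fun_prop) (by fun_prop)
    exact hc.mem_of_tendsto (hNi i) (Eventually.of_forall fun n => hMo _ _)
  have hleft : ∀ i, Left l (N i).1 (N i).2 := fun i => by
    have hc : IsClosed {q : X | WLeft q.1 q.2.1 q.2.2} :=
      isClosed_WLeft (by fun_prop) (by fun_prop) (by fun_prop)
    have := hc.mem_of_tendsto (hlφ.prodMk_nhds (hNi i))
      (Eventually.of_forall fun n => (hM (φ n) i).wleft)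
    refine WLeft.left hl ?_ this
    intro h0
    have := hu i
    rw [h0] at this
    simp [dot] at this
  refine ⟨N, hleft, fun i j hij => ?_⟩
  have hne : det3 (N i).2 (N j).2 ((N j).1 - (N i).1) ≠ 0 :=
    det_limit_ne (hleft i) (hleft j) (hu i) (ho i) (hu j) (ho j) hlφ (hNi i) (hNi j)
      (fun n => ⟨(hM _ i).1, hMu _ i, hMo _ i⟩) (fun n => ⟨(hM _ j).1, hMu _ j, hMo _ j⟩)
      fun n h0 => by
        have := nrm_det (hL (φ n) i).ne_zero (hL (φ n) j).ne_zero (hp (φ n) i j hij).2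
        change 0 < σ i j * det3 (M (φ n) i).2 (M (φ n) j).2 ((M (φ n) j).1 - (M (φ n) i).1) at this
        rw [h0, mul_zero] at this
        exact lt_irrefl _ this
  constructor
  · have hcross : cross (N i).2 (N j).2 ≠ 0 := by
      intro h0
      apply hne
      rw [par_of_cross (hleft i).ne_zero h0]
      simp only [det3, Prod.smul_fst, Prod.smul_snd, smul_eq_mul]; ring
    refine (maj_or hl.1 (hleft i).1.2.2.2 (hleft j).1.2.2.2 hcross).resolve_right fun hbad => ?_
    have hO : IsOpen {q : L8 × (R3 × R3) × (R3 × R3) | Maj (q.1 7) q.2.2.2 q.2.1.2} :=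
      isOpen_Maj (by fun_prop) (by fun_prop) (by fun_prop)
    have hev := (hlφ.prodMk_nhds ((hNi i).prodMk_nhds (hNi j))).eventually (hO.mem_nhds hbad)
    obtain ⟨n, hn⟩ := hev.exists
    have := nrm_maj (hL (φ n) i).ne_zero (hL (φ n) j).ne_zero (hp (φ n) i j hij).1
    change Maj _ (M (φ n) i).2 (M (φ n) j).2 at this
    change Maj (ln (φ n) 7) (M (φ n) j).2 (M (φ n) i).2 at hn
    simp only [Maj] at hn this
    rcases hn with ⟨a, b⟩ | ⟨a, b⟩ | ⟨a, b⟩ <;> rcases this with ⟨c, d⟩ | ⟨c, d⟩ | ⟨c, d⟩ <;>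
      linarith
  · have hc : IsClosed {q : (R3 × R3) × (R3 × R3) |
        0 ≤ σ i j * det3 q.1.2 q.2.2 (q.2.1 - q.1.1)} :=
      isClosed_le (by fun_prop) (by fun_prop)
    have h0 : 0 ≤ σ i j * det3 (N i).2 (N j).2 ((N j).1 - (N i).1) :=
      hc.mem_of_tendsto ((hNi i).prodMk_nhds (hNi j)) (Eventually.of_forall fun n =>
        (nrm_det (hL (φ n) i).ne_zero (hL (φ n) j).ne_zero (hp (φ n) i j hij).2).le)
    refine lt_of_le_of_ne h0 (Ne.symm (mul_ne_zero ?_ hne))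
    intro hs
    have := (hp 0 i j hij).2
    rw [hs, zero_mul] at this
    exact lt_irrefl _ this

/-- A predicate which is open and closed relative to `U` takes a single truth value on every
connected subset of `U`. -/
lemma const_of_clopen {P : L8 → Prop} (hopen : ∀ l ∈ U, P l → ∀ᶠ l' in 𝓝[U] l, P l')
    (hclosed : ∀ l ∈ U, (∃ᶠ l' in 𝓝[U] l, P l') → P l) {K : Set L8} (hK : IsPreconnected K)
    (hKU : K ⊆ U) {a b : L8} (ha : a ∈ K) (hb : b ∈ K) : P a ↔ P b := by
  refine hK.induction₂ (fun x y => P x ↔ P y) (fun x hx => ?_) ?_ ?_ ha hb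
  · by_cases hP : P x
    · filter_upwards [(hopen x (hKU hx) hP).filter_mono (nhdsWithin_mono _ hKU)] with y hy
      exact iff_of_true hP hy
    · have := not_frequently.1 (mt (hclosed x (hKU hx)) hP)
      filter_upwards [this.filter_mono (nhdsWithin_mono _ hKU)] with y hy
      exact iff_of_false hP hy
  · intro x y z _ _ _ h1 h2
    exact h1.trans h2
  · intro x y _ _ h
    exact h.symm

lemma T_const {k : ℕ} {σ : Fin k → Fin k → ℝ} {K : Set L8} (hK : IsPreconnected K)
    (hKU : K ⊆ U) {a b : L8} (ha : a ∈ K) (hb : b ∈ K) : T k σ a ↔ T k σ b :=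
  const_of_clopen (fun _ _ h => (T_open h).filter_mono nhdsWithin_le_nhds)
    (fun _ hl h => T_closed hl h) hK hKU ha hb

/-! ### Spherical components -/

/-- The quadratic term of the Taylor expansion of `F(·, l)` at `p`. -/
noncomputable def qH (l : L8) (p v : R3) : ℝ := dot (fh l p v) v / 2

/-- The cubic part of `F(·, l)`. -/
noncomputable def qC (l : L8) (v : R3) : ℝ := dot (fc l v) v / 3

/-- There is a critical point `p` with negative value such that on every line through `p` the
restriction of `F` has three distinct zeros or two distinct zeros (counting a zero at infinity),
so that `p` is surrounded by an oval sphere. The condition is the positivity of the discriminant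
of the cubic polynomial `F(p) + H t² + C t³`. -/
def Ep (l : L8) : Prop :=
  ∃ p, fg l p = 0 ∧ fF l p < 0 ∧ ∀ v, v ≠ 0 → 27 * (-fF l p) * qC l v ^ 2 < 4 * qH l p v ^ 3

lemma qH_smul (l : L8) (p v : R3) (c : ℝ) : qH l p (c • v) = c ^ 2 * qH l p v := by
  simp only [qH, fh_smul, dot_smul_left, dot_smul_right]; ring

lemma qC_smul (l : L8) (v : R3) (c : ℝ) : qC l (c • v) = c ^ 3 * qC l v := by
  simp only [qC, fc_smul, dot_smul_left, dot_smul_right]; ring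

lemma qH_add (l : L8) (p v u : R3) (s : ℝ) :
    qH l p (v + s • u) = qH l p v + s * dot (fh l p v) u + s ^ 2 * qH l p u := by
  simp only [qH, fh, dot, Prod.fst_add, Prod.snd_add, Prod.smul_fst, Prod.smul_snd, smul_eq_mul]
  ring

lemma qC_add (l : L8) (v u : R3) (s : ℝ) :
    qC l (v + s • u) = qC l v + s * dot (fc l v) u + s ^ 2 * dot (fc l u) v + s ^ 3 * qC l u := by
  simp only [qC, fc, dot, Prod.fst_add, Prod.snd_add, Prod.smul_fst, Prod.smul_snd, smul_eq_mul]
  ring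

@[fun_prop]
lemma cont_qH {α : Type*} [TopologicalSpace α] {l : α → L8} {p v : α → R3}
    (hl : Continuous l) (hp : Continuous p) (hv : Continuous v) :
    Continuous fun a => qH (l a) (p a) (v a) := by
  unfold qH; fun_prop

@[fun_prop]
lemma cont_qC {α : Type*} [TopologicalSpace α] {l : α → L8} {v : α → R3}
    (hl : Continuous l) (hv : Continuous v) : Continuous fun a => qC (l a) (v a) := by
  unfold qC; fun_prop

lemma isCompact_sphere3 : IsCompact {v : R3 | dot v v = 1} := by
  apply Metric.isCompact_of_isClosed_isBounded
  · exact isClosed_eq (by fun_prop) (by fun_prop)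
  · refine (Metric.isBounded_closedBall (x := (0 : R3)) (r := 1)).subset fun v hv => ?_
    rw [mem_closedBall_zero_iff]
    exact norm_le_of_dot hv

/-- The map whose fibres record the critical points. -/
def Psi (a : L8 × R3) : L8 × R3 := (a.1, fg a.1 a.2)

lemma contDiff_Psi : ContDiff ℝ 1 Psi := by
  unfold Psi fg
  fun_prop

lemma psi_local {l : L8} {p : R3} (h : ∀ v, v ≠ 0 → 0 < qH l p v) :
    map Psi (𝓝 (l, p)) = 𝓝 (Psi (l, p)) := by
  refine (local_homeo contDiff_Psi _ ?_).1
  rintro ⟨dl, a⟩ hd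
  have hdiff : DifferentiableAt ℝ Psi (l, p) := contDiff_Psi.differentiable one_ne_zero _
  have H := hdiff.hasFDerivAt
  have hdl : dl = 0 := by
    have h1 : HasFDerivAt (fun x : L8 × R3 => (Psi x).1) (ContinuousLinearMap.fst ℝ L8 R3)
        (l, p) := hasFDerivAt_fst
    have h2 := H.fst.unique h1
    have := congrArg (fun T => T (dl, a)) h2
    simp only [ContinuousLinearMap.comp_apply, hd, map_zero] at this
    exact this.symm
  subst hdl
  have h1 : HasDerivAt (fun s : ℝ => Psi ((l, p) + s • ((0 : L8), a))) (0, fh l p a) 0 := by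
    have e : (fun s : ℝ => Psi ((l, p) + s • ((0 : L8), a)))
        = fun s : ℝ => (l, fg l p + s • fh l p a + s ^ 2 • fc l a) := by
      funext s
      simp [Psi, fg_line]
    rw [e]
    have hid : HasDerivAt (fun s : ℝ => s) 1 0 := hasDerivAt_id 0
    have := ((hid.smul_const (fh l p a)).const_add (fg l p)).add
      ((hid.pow 2).smul_const (fc l a))
    exact (hasDerivAt_const (0 : ℝ) l).prodMk (this.congr_deriv (by simp))
  have h2 := deriv_along hdiff h1
  rw [hd] at h2
  have h3 : fh l p a = 0 := (congrArg Prod.snd h2).symm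
  by_contra hne
  have ha : a ≠ 0 := by rintro rfl; exact hne rfl
  have := h a ha
  rw [qH, h3] at this
  simp [dot] at this

lemma Ep_open {l : L8} (h : Ep l) : ∀ᶠ l' in 𝓝 l, Ep l' := by
  obtain ⟨p, hg, hF, hq⟩ := h
  have hpos : ∀ v, v ≠ 0 → 0 < qH l p v := by
    intro v hv
    have := hq v hv
    by_contra hc
    push Not at hc
    have h1 : 0 ≤ 27 * (-fF l p) * qC l v ^ 2 := by
      have : 0 ≤ - fF l p := by linarith
      positivity
    have h2 : qH l p v ^ 3 ≤ 0 := by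
      have := pow_nonneg (neg_nonneg.2 hc) 3
      have e : (-qH l p v) ^ 3 = - qH l p v ^ 3 := by ring
      linarith
    linarith
  have ev1 : ∀ᶠ a : L8 × R3 in 𝓝 (l, p), fF a.1 a.2 < 0 :=
    (isOpen_lt (by fun_prop : Continuous fun a : L8 × R3 => fF a.1 a.2)
      continuous_const).mem_nhds hF
  have ev2 : ∀ᶠ a : L8 × R3 in 𝓝 (l, p), ∀ v ∈ {v : R3 | dot v v = 1},
      27 * (-fF a.1 a.2) * qC a.1 v ^ 2 < 4 * qH a.1 a.2 v ^ 3 := by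
    refine isCompact_sphere3.eventually_forall_of_forall_eventually fun v hv => ?_
    have hv0 : v ≠ 0 := by
      rintro rfl
      simp [dot] at hv
    exact (isOpen_lt (by fun_prop) (by fun_prop) : IsOpen {z : (L8 × R3) × R3 |
      27 * (-fF z.1.1 z.1.2) * qC z.1.1 z.2 ^ 2 < 4 * qH z.1.1 z.1.2 z.2 ^ 3}).mem_nhds
        (hq v hv0)
  have him := image_mem_map (m := Psi) (ev1.and ev2)
  rw [psi_local hpos] at him
  have hc : Continuous fun l' : L8 => (l', fg l p) := by fun_prop
  have := hc.continuousAt.preimage_mem_nhds (x := l) (t := Psi '' _) him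
  filter_upwards [this] with l' hl'
  obtain ⟨⟨l2, q⟩, ⟨h1, h2⟩, hq2⟩ := hl'
  have hl2 : l2 = l' := congrArg Prod.fst hq2
  subst hl2
  refine ⟨q, (congrArg Prod.snd hq2).trans hg, h1, fun v hv => ?_⟩
  have hs := Real.sqrt_pos.2 (dot_self_pos hv)
  have := h2 ((Real.sqrt (dot v v))⁻¹ • v) (nrm_unit (q := (q, v)) hv)
  simp only [qC_smul, qH_smul] at this
  have hc6 : 0 < ((Real.sqrt (dot v v))⁻¹) ^ 6 := by positivity
  generalize (Real.sqrt (dot v v))⁻¹ = c at *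
  refine lt_of_mul_lt_mul_left ?_ hc6.le
  calc c ^ 6 * (27 * -fF l2 q * qC l2 v ^ 2) = 27 * -fF l2 q * (c ^ 3 * qC l2 v) ^ 2 := by ring
    _ < 4 * (c ^ 2 * qH l2 q v) ^ 3 := this
    _ = _ := by ring

/-- A nonnegative function of the form `s ↦ a s + s² g(s)`, with `g` continuous, has `a = 0`. -/
lemma slope_zero {a : ℝ} {g : ℝ → ℝ} (hg : Continuous g) (h : ∀ s, 0 ≤ a * s + s ^ 2 * g s) :
    a = 0 := by
  have hd : HasDerivAt (fun s => a * s + s ^ 2 * g s) a 0 := by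
    have h1 : HasDerivAt (fun s : ℝ => a * s) a 0 := by
      simpa using (hasDerivAt_id (0 : ℝ)).const_mul a
    have h2 : HasDerivAt (fun s : ℝ => s ^ 2 * g s) 0 0 := by
      rw [hasDerivAt_iff_tendsto_slope]
      have e : ∀ s : ℝ, s ≠ 0 → s * g s = slope (fun s : ℝ => s ^ 2 * g s) 0 s := by
        intro s hs
        simp only [slope_def_field]
        field_simp
        ring
      have ht : Tendsto (fun s => s * g s) (𝓝[≠] 0) (𝓝 0) := by
        have : Continuous fun s => s * g s := by fun_prop
        have := this.tendsto 0
        simp only [zero_mul] at this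
        exact this.mono_left nhdsWithin_le_nhds
      refine ht.congr' ?_
      filter_upwards [self_mem_nhdsWithin] with s hs
      exact e s hs
    exact (h1.add h2).congr_deriv (by simp)
  have hmin : IsLocalMin (fun s => a * s + s ^ 2 * g s) 0 :=
    Eventually.of_forall fun s => by simpa using h s
  exact hmin.hasDerivAt_eq_zero hd

/-- On a nonsingular surface the weak form of the discriminant inequality implies the strict
one: equality would produce a singular point on the line in the corresponding direction. -/
lemma Ep_strict {l : L8} (hl : l ∈ U) {p : R3} (hg : fg l p = 0) (hF : fF l p < 0)
    (hq : ∀ v, 27 * (-fF l p) * qC l v ^ 2 ≤ 4 * qH l p v ^ 3) (v : R3) (hv : v ≠ 0) :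
    27 * (-fF l p) * qC l v ^ 2 < 4 * qH l p v ^ 3 := by
  refine lt_of_le_of_ne (hq v) fun heq => ?_
  obtain ⟨f, hf⟩ : ∃ f, f = - fF l p := ⟨_, rfl⟩
  have hfpos : 0 < f := by linarith
  rw [← hf] at heq
  have hH0 : ∀ u, 0 ≤ qH l p u := by
    intro u
    have h1 := hq u
    rw [← hf] at h1
    by_contra hc
    push Not at hc
    have h2 : 0 ≤ 27 * f * qC l u ^ 2 := by positivity
    have h3 := pow_pos (neg_pos.2 hc) 3
    have e : (-qH l p u) ^ 3 = - qH l p u ^ 3 := by ring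
    linarith
  have hqs : ∀ u (s : ℝ), 27 * f * (qC l v + s * dot (fc l v) u + s ^ 2 * dot (fc l u) v
      + s ^ 3 * qC l u) ^ 2 ≤ 4 * (qH l p v + s * dot (fh l p v) u + s ^ 2 * qH l p u) ^ 3 := by
    intro u s
    rw [← qH_add, ← qC_add, hf]
    exact hq _
  by_cases hC : qC l v = 0
  · have hHv : qH l p v = 0 := by
      rw [hC] at heq
      exact pow_eq_zero_iff (n := 3) (by norm_num) |>.1 (by linarith)
    apply hv
    apply fc_ne_zero hl.1.le
    apply eq_zero_of_dot
    intro u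
    have hh : dot (fh l p v) u = 0 := by
      refine slope_zero (g := fun _ => qH l p u) continuous_const fun s => ?_
      have := hH0 (v + s • u)
      rw [qH_add, hHv] at this
      linarith
    have key : ∀ s : ℝ, s ≠ 0 → 27 * f * (dot (fc l v) u + s * dot (fc l u) v
        + s ^ 2 * qC l u) ^ 2 ≤ 4 * s ^ 4 * qH l p u ^ 3 := by
      intro s hs
      have := hqs u s
      rw [hC, hHv, hh] at this
      have hs2 : 0 < s ^ 2 := by positivity
      refine le_of_mul_le_mul_left ?_ hs2
      linarith
    have hlim : 27 * f * (dot (fc l v) u + 0 * dot (fc l u) v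
        + 0 ^ 2 * qC l u) ^ 2 ≤ 4 * 0 ^ 4 * qH l p u ^ 3 := by
      have c1 : Continuous fun s : ℝ => 27 * f * (dot (fc l v) u + s * dot (fc l u) v
        + s ^ 2 * qC l u) ^ 2 := by fun_prop
      have c2 : Continuous fun s : ℝ => 4 * s ^ 4 * qH l p u ^ 3 := by fun_prop
      refine le_of_tendsto_of_tendsto ((c1.tendsto 0).mono_left nhdsWithin_le_nhds)
        ((c2.tendsto 0).mono_left (nhdsWithin_le_nhds (s := {0}ᶜ))) ?_
      filter_upwards [self_mem_nhdsWithin] with s hs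
      exact key s hs
    have h2 : 27 * f * (dot (fc l v) u) ^ 2 ≤ 0 := by simpa using hlim
    have h3 : (dot (fc l v) u) ^ 2 ≤ 0 := by
      by_contra hc
      push Not at hc
      have : 0 < 27 * f * (dot (fc l v) u) ^ 2 := by positivity
      linarith
    exact pow_eq_zero_iff two_ne_zero |>.1 (le_antisymm h3 (sq_nonneg _))
  · have hH : qH l p v ≠ 0 := by
      intro h0
      rw [h0] at heq
      have : 0 < 27 * f * qC l v ^ 2 := by positivity
      norm_num at heq
      rcases heq with h | h
      · exact hfpos.ne' h
      · exact hC h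
    obtain ⟨t, ht⟩ : ∃ t, t = -2 * qH l p v / (3 * qC l v) := ⟨_, rfl⟩
    have ht' : 3 * qC l v * t = -2 * qH l p v := by rw [ht]; field_simp
    have hFq : fF l (p + t • v) = 0 := by
      have e := fF_line l p v t
      have e2 : fF l (p + t • v) = - f + t ^ 2 * qH l p v + t ^ 3 * qC l v := by
        rw [e, hg, hf, qH, qC]
        simp only [dot, Prod.fst_zero, Prod.snd_zero]
        ring
      rw [e2]
      refine (mul_eq_zero.1 ?_).resolve_left (pow_ne_zero 2 hC)
      have : qC l v * t = -(2 / 3) * qH l p v := by linarith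
      have e4 : qC l v ^ 2 * (-f + t ^ 2 * qH l p v + t ^ 3 * qC l v)
        = - f * qC l v ^ 2 + (qC l v * t) ^ 2 * qH l p v + (qC l v * t) ^ 3 := by ring
      rw [e4, this]
      linear_combination - heq / 27
    apply hl.2 _ hFq
    apply eq_zero_of_dot
    intro u
    rw [fg_line, hg, zero_add, dot_add_left, dot_smul_left, dot_smul_left]
    -- the first variation of the discriminant in the direction `u` vanishes
    have hvar : 12 * qH l p v ^ 2 * dot (fh l p v) u
        - 54 * f * qC l v * dot (fc l v) u = 0 := by
      have hu := hqs u
      clear hqs hH0 hq ht ht' hFq hC hH hf hF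
      generalize dot (fh l p v) u = b at heq hu ⊢
      generalize dot (fc l v) u = c at heq hu ⊢
      generalize dot (fc l u) v = d at heq hu ⊢
      generalize qH l p u = h at heq hu ⊢
      generalize qC l u = k at heq hu ⊢
      generalize qH l p v = η at heq hu ⊢
      generalize qC l v = κ at heq hu ⊢
      refine slope_zero (g := fun s => 4 * (3 * η ^ 2 * h + 3 * η * (b + s * h) ^ 2
        + s * (b + s * h) ^ 3) - 27 * f * (2 * κ * (d + s * k) + (c + s * d + s ^ 2 * k) ^ 2))
        (by fun_prop) fun s => ?_
      linarith [hu s]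
    have h2 : qH l p v ^ 2 * (dot (fh l p v) u + t * dot (fc l v) u) = 0 := by
      refine (mul_eq_zero.1 ?_).resolve_left hC
      linear_combination qC l v / 12 * hvar + dot (fc l v) u / 6 * heq
        + qH l p v ^ 2 * dot (fc l v) u / 3 * ht'
    have h3 := (mul_eq_zero.1 h2).resolve_left (pow_ne_zero 2 hH)
    linear_combination t * h3

lemma Ep_closed {l : L8} (hl : l ∈ U) (h : ∃ᶠ l' in 𝓝[U] l, Ep l') : Ep l := by
  have h' : ∃ᶠ l' in 𝓝[U] l, Ep l' ∧ l' ∈ U := h.and_eventually self_mem_nhdsWithin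
  obtain ⟨ln, hln, hT⟩ := exists_seq_forall_of_frequently h'
  have hlim : Tendsto ln atTop (𝓝 l) := hln.mono_right nhdsWithin_le_nhds
  choose p hp hF hq using fun n => (hT n).1
  obtain ⟨B, hB⟩ := (Metric.isBounded_range_of_tendsto ln hlim).exists_norm_le
  obtain ⟨R, hR⟩ := crit_bound B
  have hmem : ∀ n, p n ∈ Metric.closedBall (0 : R3) R := by
    intro n
    rw [mem_closedBall_zero_iff]
    exact hR _ _ (hB _ (mem_range_self n)) (hT n).2.1.le (hp n)
  obtain ⟨q, -, φ, hφ, hN⟩ := (isCompact_closedBall (0 : R3) R).tendsto_subseq hmem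
  have hlφ : Tendsto (fun n => ln (φ n)) atTop (𝓝 l) := hlim.comp hφ.tendsto_atTop
  have hN' : Tendsto (fun n => p (φ n)) atTop (𝓝 q) := hN
  have hpair : Tendsto (fun n => (ln (φ n), p (φ n))) atTop (𝓝 (l, q)) := hlφ.prodMk_nhds hN'
  have c1 : fg l q = 0 := by
    have hc : Continuous fun a : L8 × R3 => fg a.1 a.2 := by fun_prop
    have h1 := (hc.tendsto (l, q)).comp hpair
    refine tendsto_nhds_unique h1 ?_
    simp only [Function.comp_def, hp]
    exact tendsto_const_nhds
  have c2 : fF l q ≤ 0 := by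
    have hc : Continuous fun a : L8 × R3 => fF a.1 a.2 := by fun_prop
    have h1 := (hc.tendsto (l, q)).comp hpair
    exact le_of_tendsto' h1 fun n => (hF (φ n)).le
  have c3 : ∀ v, 27 * (-fF l q) * qC l v ^ 2 ≤ 4 * qH l q v ^ 3 := by
    intro v
    have hc : Continuous fun a : L8 × R3 => 27 * (-fF a.1 a.2) * qC a.1 v ^ 2 := by fun_prop
    have hc' : Continuous fun a : L8 × R3 => 4 * qH a.1 a.2 v ^ 3 := by fun_prop
    have h1 := (hc.tendsto (l, q)).comp hpair
    have h2 := (hc'.tendsto (l, q)).comp hpair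
    refine le_of_tendsto_of_tendsto' h1 h2 fun n => ?_
    simp only [Function.comp_def]
    by_cases hv : v = 0
    · subst hv
      simp [qC, qH, dot]
    · exact (hq (φ n) v hv).le
  have c2' : fF l q < 0 := lt_of_le_of_ne c2 fun h0 => hl.2 q h0 c1
  exact ⟨q, c1, c2', Ep_strict hl c1 c2' c3⟩

lemma Ep_const {K : Set L8} (hK : IsPreconnected K)
    (hKU : K ⊆ U) {a b : L8} (ha : a ∈ K) (hb : b ∈ K) : Ep a ↔ Ep b :=
  const_of_clopen (fun _ _ h => (Ep_open h).filter_mono nhdsWithin_le_nhds)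
    (fun _ hl h => Ep_closed hl h) hK hKU ha hb

/-! ### The antipodal symmetry and rescaling -/

/-- The action on parameters of the symmetry `F ↦ -F(-·)`. -/
def sg (l : L8) : L8 := ![-l 0, l 1, l 2, l 3, -l 4, -l 5, -l 6, l 7]

lemma sg_eq (l : L8) : sg l = scale (-1) l := by
  funext i
  fin_cases i <;> (simp [sg, scale]; try norm_num)

lemma scale_mem {s : ℝ} (hs : s ≠ 0) {l : L8} (hl : l ∈ U) : scale s l ∈ U := by
  refine ⟨hl.1, fun p hp hg => ?_⟩
  obtain ⟨q, rfl⟩ : ∃ q, p = s • q := ⟨s⁻¹ • p, by rw [smul_smul, mul_inv_cancel₀ hs, one_smul]⟩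
  rw [fF_scale] at hp
  rw [fg_scale] at hg
  exact hl.2 q ((mul_eq_zero.1 hp).resolve_left (pow_ne_zero _ hs))
    ((smul_eq_zero.1 hg).resolve_left (pow_ne_zero _ hs))

lemma isPreconnected_scale {P : L8 → Prop}
    (hP : ∀ K, IsPreconnected K → K ⊆ U → ∀ a ∈ K, ∀ b ∈ K, P a ↔ P b) {l : L8} (hl : l ∈ U)
    {t : ℝ} (ht : 0 < t) : P (scale t l) ↔ P l := by
  have h1 : scale 1 l = l := by
    funext i
    fin_cases i <;> simp [scale]
  have hK : IsPreconnected ((fun s => scale s l) '' Ioi 0) :=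
    (isPreconnected_Ioi).image _ (by fun_prop)
  have := hP _ hK (by
    rintro _ ⟨s, hs, rfl⟩
    exact scale_mem (ne_of_gt hs) hl) (scale t l) ⟨t, ht, rfl⟩ (scale 1 l)
    ⟨1, by simp, rfl⟩
  rwa [h1] at this

/-! ### Lines on the sample surfaces -/

/-- The sample parameters: `F = x³ + b x + c + k x (y + z) + y z (y + z - h)`. -/
def smp (c b k h : ℝ) : L8 := ![c, b, 0, 0, k, k, -h, 0]

section values
variable (c b k h : ℝ)
lemma smp_0 : smp c b k h 0 = c := rfl
lemma smp_1 : smp c b k h 1 = b := rfl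
lemma smp_2 : smp c b k h 2 = 0 := rfl
lemma smp_3 : smp c b k h 3 = 0 := rfl
lemma smp_4 : smp c b k h 4 = k := rfl
lemma smp_5 : smp c b k h 5 = k := rfl
lemma smp_6 : smp c b k h 6 = -h := rfl
lemma smp_7 : smp c b k h 7 = 0 := rfl
end values

lemma sg_smp (c b h : ℝ) : sg (smp c b 0 h) = smp (-c) b 0 (-h) := by
  funext i
  fin_cases i <;> simp [sg, smp]

/-- The data `((y₀, z₀), (y₁, z₁))` of the line `y = y₀ + y₁ x`, `z = z₀ + z₁ x`. -/
abbrev Ln := (ℝ × ℝ) × (ℝ × ℝ)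

/-- The line with data `q` is a left line. -/
def NL (l : L8) (q : Ln) : Prop := Left l (0, q.1) (1, q.2)

/-- The minor of two directions which governs `Maj 0`. -/
def cc (q q' : Ln) : ℝ := q.2.1 * q'.2.2 - q'.2.1 * q.2.2

/-- The determinant which measures the mutual position of two lines. -/
def dd (q q' : Ln) : ℝ :=
  (q'.2.1 - q.2.1) * (q'.1.2 - q.1.2) - (q'.2.2 - q.2.2) * (q'.1.1 - q.1.1)

lemma maj_zero (v v' : R3) : Maj 0 v v' ↔ 0 < v.2.1 * v'.2.2 - v'.2.1 * v.2.2 := by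
  have e2 : v.2.2 * (-v'.2.1 - v'.2.2 - 0 * v'.1) - v'.2.2 * (-v.2.1 - v.2.2 - 0 * v.1)
    = v.2.1 * v'.2.2 - v'.2.1 * v.2.2 := by ring
  have e3 : (-v.2.1 - v.2.2 - 0 * v.1) * v'.2.1 - (-v'.2.1 - v'.2.2 - 0 * v'.1) * v.2.1
    = v.2.1 * v'.2.2 - v'.2.1 * v.2.2 := by ring
  simp only [Maj, e2, e3]
  tauto

lemma det3_norm (q q' : Ln) (a a' t t' : ℝ) :
    det3 (a • ((1 : ℝ), q.2)) (a' • ((1 : ℝ), q'.2))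
      (((0 : ℝ), q'.1) + t' • ((1 : ℝ), q'.2) - (((0 : ℝ), q.1) + t • ((1 : ℝ), q.2)))
      = a * a' * dd q q' := by
  simp only [det3, dd, Prod.fst_add, Prod.snd_add, Prod.fst_sub, Prod.snd_sub, Prod.smul_fst,
    Prod.smul_snd, smul_eq_mul]
  ring

lemma Left.norm_form {l : L8} {p v : R3} (h : Left l p v) (hv : v.1 ≠ 0) :
    ∃ (q : Ln) (a t : ℝ), NL l q ∧ v = a • ((1 : ℝ), q.2) ∧
      p = ((0 : ℝ), q.1) + t • ((1 : ℝ), q.2) := by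
  obtain ⟨p1, p2, p3⟩ := p
  obtain ⟨v1, v2, v3⟩ := v
  simp only at hv
  have h1 := (h.smul (inv_ne_zero hv)).shift (-p1)
  refine ⟨((p2 - p1 * (v2 / v1), p3 - p1 * (v3 / v1)), (v2 / v1, v3 / v1)), v1, p1, ?_, ?_, ?_⟩
  · have e1 : v1⁻¹ • ((v1, v2, v3) : R3) = (1, v2 / v1, v3 / v1) := by
      apply R3.ext <;> simp [hv, div_eq_inv_mul]
    have e2 : ((p1, p2, p3) : R3) + (-p1) • ((1, v2 / v1, v3 / v1) : R3)
        = (0, p2 - p1 * (v2 / v1), p3 - p1 * (v3 / v1)) := by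
      apply R3.ext <;> simp <;> ring
    rw [e1, e2] at h1
    exact h1
  · apply R3.ext <;> simp <;> field_simp
  · apply R3.ext <;> simp

lemma T_norm {l : L8} (h7 : l 7 = 0) (hx : ∀ p v, Left l p v → v.1 ≠ 0) {k : ℕ}
    {σ : Fin k → Fin k → ℝ} (h : T k σ l) :
    ∃ (q : Fin k → Ln) (a : Fin k → ℝ), (∀ i, NL l (q i)) ∧ ∀ i j, i < j →
      0 < a i * a j * cc (q i) (q j) ∧ 0 < σ i j * (a i * a j * dd (q i) (q j)) := by
  obtain ⟨L, hL, hT⟩ := h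
  choose q a t hq hv hp using fun i => (hL i).norm_form (hx _ _ (hL i))
  refine ⟨q, a, hq, fun i j hij => ?_⟩
  obtain ⟨h1, h2⟩ := hT i j hij
  rw [h7, maj_zero, hv i, hv j] at h1
  rw [hv i, hv j, hp i, hp j, det3_norm] at h2
  refine ⟨?_, h2⟩
  simp only [Prod.smul_snd, Prod.smul_fst, smul_eq_mul] at h1
  unfold cc
  linarith

lemma T_of_norm {l : L8} (h7 : l 7 = 0) {k : ℕ} {σ : Fin k → Fin k → ℝ} (q : Fin k → Ln)
    (a : Fin k → ℝ) (ha : ∀ i, a i ≠ 0) (hq : ∀ i, NL l (q i))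
    (h : ∀ i j, i < j → 0 < a i * a j * cc (q i) (q j) ∧
      0 < σ i j * (a i * a j * dd (q i) (q j))) : T k σ l := by
  refine ⟨fun i => ((0, (q i).1), a i • (1, (q i).2)), fun i => (hq i).smul (ha i),
    fun i j hij => ?_⟩
  obtain ⟨h1, h2⟩ := h i j hij
  constructor
  · rw [h7, maj_zero]
    simp only [Prod.smul_snd, Prod.smul_fst, smul_eq_mul]
    unfold cc at h1
    linarith
  · have := det3_norm (q i) (q j) (a i) (a j) 0 0
    simp only [zero_smul, add_zero] at this
    rw [← this] at h2
    exact h2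

/-- Two left lines in general position give `T 2`. -/
lemma T2_of {l : L8} (h7 : l 7 = 0) {q q' : Ln} (h : NL l q) (h' : NL l q')
    (hc : 0 < cc q q' * dd q q') : T 2 (fun _ _ => 1) l := by
  have hne : cc q q' ≠ 0 := by
    intro h0
    rw [h0] at hc
    simp at hc
  refine T_of_norm h7 ![q, q'] ![1, cc q q'] ?_ ?_ ?_
  · intro i
    fin_cases i <;> simp [hne]
  · intro i
    fin_cases i
    · exact h
    · exact h'
  · intro i j hij
    obtain rfl : i = 0 := by omega
    obtain rfl : j = 1 := by omega
    simp only [Matrix.cons_val_zero, Matrix.cons_val_one, one_mul]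
    exact ⟨mul_self_pos.2 hne, hc⟩

lemma det3_orth {v g g' : R3} (hv : v.1 = 1) (h : dot g v = 0) (h' : dot g' v = 0) :
    det3 v g g' = dot v v * (g.2.1 * g'.2.2 - g.2.2 * g'.2.1) := by
  obtain ⟨g1, g2, g3⟩ := g
  obtain ⟨g1', g2', g3'⟩ := g'
  obtain ⟨v1, v2, v3⟩ := v
  simp only [dot, det3] at *
  subst hv
  have e : g1 = -(g2 * v2 + g3 * v3) := by linarith
  have e' : g1' = -(g2' * v2 + g3' * v3) := by linarith
  subst e e'
  ring

/-- The conditions for a line to be a left line of a sample surface. The first four equations say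
that the line lies on the surface; the inequalities use the `(y, z)`-minors of the coefficients of
the gradient along the line. -/
lemma NL_iff (c b k h y0 z0 y1 z1 : ℝ) : NL (smp c b k h) ((y0, z0), (y1, z1)) ↔
    (c + y0 * z0 * (y0 + z0 - h) = 0 ∧
    b + k * (y0 + z0) + y1 * z0 * (2 * y0 + z0 - h) + z1 * y0 * (y0 + 2 * z0 - h) = 0 ∧
    k * (y1 + z1) + y1 ^ 2 * z0 + z1 ^ 2 * y0 + 2 * y1 * z1 * (y0 + z0) - h * y1 * z1 = 0 ∧
    1 + y1 * z1 * (y1 + z1) = 0) ∧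
    0 < (2 * y0 * z0 + z0 ^ 2 - h * z0) * (k + 2 * y0 * y1 + 2 * y1 * z0 + 2 * y0 * z1 - h * y1)
      - (y0 ^ 2 + 2 * y0 * z0 - h * y0) * (k + 2 * y1 * z0 + 2 * y0 * z1 + 2 * z0 * z1 - h * z1) ∧
    0 < ((2 * y0 * z0 + z0 ^ 2 - h * z0) * (k + 2 * y0 * y1 + 2 * y1 * z0 + 2 * y0 * z1 - h * y1)
      - (y0 ^ 2 + 2 * y0 * z0 - h * y0) * (k + 2 * y1 * z0 + 2 * y0 * z1 + 2 * z0 * z1 - h * z1))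
      * ((k + 2 * y1 * z0 + 2 * y0 * z1 + 2 * z0 * z1 - h * z1) * (y1 ^ 2 + 2 * y1 * z1)
        - (k + 2 * y0 * y1 + 2 * y1 * z0 + 2 * y0 * z1 - h * y1) * (2 * y1 * z1 + z1 ^ 2))
      - ((2 * y0 * z0 + z0 ^ 2 - h * z0) * (y1 ^ 2 + 2 * y1 * z1)
        - (y0 ^ 2 + 2 * y0 * z0 - h * y0) * (2 * y1 * z1 + z1 ^ 2)) ^ 2 := by
  have hon : OnS (smp c b k h) (0, y0, z0) (1, y1, z1) ↔ (c + y0 * z0 * (y0 + z0 - h) = 0 ∧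
    b + k * (y0 + z0) + y1 * z0 * (2 * y0 + z0 - h) + z1 * y0 * (y0 + 2 * z0 - h) = 0 ∧
    k * (y1 + z1) + y1 ^ 2 * z0 + z1 ^ 2 * y0 + 2 * y1 * z1 * (y0 + z0) - h * y1 * z1 = 0 ∧
    1 + y1 * z1 * (y1 + z1) = 0) := by
    simp only [OnS, fF, fg, fh, fc, dot, smp_0, smp_1, smp_2, smp_3, smp_4, smp_5, smp_6, smp_7]
    constructor
    · rintro ⟨h0, h1, h2, h3⟩
      refine ⟨?_, ?_, ?_, ?_⟩ <;> linarith
    · rintro ⟨h0, h1, h2, h3⟩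
      refine ⟨?_, ?_, ?_, ?_⟩ <;> linarith
  rw [← hon]
  unfold NL Left
  refine and_congr_right fun hs => ?_
  obtain ⟨-, s1, s2, s3⟩ := hs
  have hn : 0 < dot ((1, y1, z1) : R3) (1, y1, z1) := dot_self_pos (by simp)
  rw [w0, w1, w2, det3_orth rfl s1 s2, det3_orth rfl s1 s3, det3_orth rfl s2 s3]
  generalize dot ((1, y1, z1) : R3) (1, y1, z1) = n at hn
  simp only [fg, fh, fc, smp_2, smp_3, smp_4, smp_5, smp_6, smp_7]
  refine and_congr ?_ ?_
  · rw [mul_pos_iff_of_pos_left hn]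
    refine iff_of_eq (congrArg _ ?_)
    ring
  · refine Iff.trans ?_ (mul_pos_iff_of_pos_left (pow_pos hn 2))
    refine iff_of_eq (congrArg _ ?_)
    ring

/-- Lines in the planes `x = const` are not left lines when `k = 0`. -/
lemma fst_ne_zero {c b h : ℝ} (p v : R3) (hL : Left (smp c b 0 h) p v) : v.1 ≠ 0 := by
  intro hv
  have := hL.w2_pos
  simp [w2, det3, fh, fc, hv, smp_4, smp_5, smp_7] at this

/-! ### The surfaces `x³ - x + y z (y + z - h) = 0` -/

lemma NL_iff_of {c b k h y0 z0 y1 z1 m0 m1 m2 : ℝ}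
    (h0 : c + y0 * z0 * (y0 + z0 - h) = 0)
    (h1 : b + k * (y0 + z0) + y1 * z0 * (2 * y0 + z0 - h) + z1 * y0 * (y0 + 2 * z0 - h) = 0)
    (h2 : k * (y1 + z1) + y1 ^ 2 * z0 + z1 ^ 2 * y0 + 2 * y1 * z1 * (y0 + z0) - h * y1 * z1 = 0)
    (h3 : 1 + y1 * z1 * (y1 + z1) = 0)
    (e0 : (2 * y0 * z0 + z0 ^ 2 - h * z0) *
        (k + 2 * y0 * y1 + 2 * y1 * z0 + 2 * y0 * z1 - h * y1)
      - (y0 ^ 2 + 2 * y0 * z0 - h * y0) *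
        (k + 2 * y1 * z0 + 2 * y0 * z1 + 2 * z0 * z1 - h * z1) = m0)
    (e1 : (2 * y0 * z0 + z0 ^ 2 - h * z0) * (y1 ^ 2 + 2 * y1 * z1)
        - (y0 ^ 2 + 2 * y0 * z0 - h * y0) * (2 * y1 * z1 + z1 ^ 2) = m1)
    (e2 : (k + 2 * y1 * z0 + 2 * y0 * z1 + 2 * z0 * z1 - h * z1) * (y1 ^ 2 + 2 * y1 * z1)
        - (k + 2 * y0 * y1 + 2 * y1 * z0 + 2 * y0 * z1 - h * y1) * (2 * y1 * z1 + z1 ^ 2) = m2) :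
    NL (smp c b k h) ((y0, z0), (y1, z1)) ↔ 0 < m0 ∧ 0 < m0 * m2 - m1 ^ 2 := by
  rw [NL_iff, e0, e1, e2]
  exact ⟨fun h => h.2, fun h => ⟨⟨h0, h1, h2, h3⟩, h⟩⟩

/-- The six lines on the surface `x³ - x + y z (y + z - h) = 0`, attached to the root `k` of
`k³ - h² k = 4`. The zeros of `y`, `z`, `h - y - z` on the line are `-1, 0, 1` in some order; `k`
is the slope of the form vanishing at `0`, and `(-k - h) / 2`, `(-k + h) / 2` are the slopes of
those vanishing at `1` and at `-1`. -/
noncomputable def gl (k h : ℝ) : Fin 6 → Ln :=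
  ![(((-k + h) / 2, 0), ((-k + h) / 2, k)),
    ((0, -((-k - h) / 2)), (k, (-k - h) / 2)),
    ((-((-k - h) / 2), (-k + h) / 2), ((-k - h) / 2, (-k + h) / 2)),
    ((0, (-k + h) / 2), (k, (-k + h) / 2)),
    ((-((-k - h) / 2), 0), ((-k - h) / 2, k)),
    (((-k + h) / 2, -((-k - h) / 2)), ((-k + h) / 2, (-k - h) / 2))]

lemma gl_even {k h : ℝ} (hk : k ^ 3 - h ^ 2 * k = 4) (i : Fin 6) (hi : i < 3) :
    NL (smp 0 (-1) 0 h) (gl k h i) ↔ 0 < k ∧ h ^ 2 < 3 * k ^ 2 := by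
  have key : (0 < k ∧ 0 < k * (3 * k) - (-h) ^ 2) ↔ 0 < k ∧ h ^ 2 < 3 * k ^ 2 := by
    refine and_congr_right fun _ => ?_
    constructor <;> intro h <;> linarith
  rw [← key]
  have hi' : i = 0 ∨ i = 1 ∨ i = 2 := by omega
  rcases hi' with rfl | rfl | rfl
  all_goals
    refine NL_iff_of ?_ ?_ ?_ ?_ ?_ ?_ ?_
    · ring
    · linear_combination hk / 4
    · ring
    · linear_combination -hk / 4
    · linear_combination k / 4 * hk
    · linear_combination -h / 4 * hk
    · linear_combination 3 * k / 4 * hk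

lemma gl_odd {k h : ℝ} (hk : k ^ 3 - h ^ 2 * k = 4) (i : Fin 6) (hi : 3 ≤ i) :
    NL (smp 0 (-1) 0 h) (gl k h i) ↔ k < 0 ∧ h ^ 2 < 3 * k ^ 2 := by
  have key : (0 < -k ∧ 0 < -k * (-(3 * k)) - h ^ 2) ↔ k < 0 ∧ h ^ 2 < 3 * k ^ 2 := by
    refine and_congr (by simp) ?_
    constructor <;> intro h <;> linarith
  rw [← key]
  have hi' : i = 3 ∨ i = 4 ∨ i = 5 := by omega
  rcases hi' with rfl | rfl | rfl
  all_goals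
    refine NL_iff_of ?_ ?_ ?_ ?_ ?_ ?_ ?_
    · ring
    · linear_combination hk / 4
    · ring
    · linear_combination -hk / 4
    · linear_combination -k / 4 * hk
    · linear_combination h / 4 * hk
    · linear_combination -3 * k / 4 * hk

/-- Every left line of `x³ - x + y z (y + z - h) = 0` is one of the lines `gl k h i`. -/
lemma gl_all {h : ℝ} {q : Ln} (hq : NL (smp 0 (-1) 0 h) q) :
    ∃ k, k ^ 3 - h ^ 2 * k = 4 ∧ h ^ 2 < 3 * k ^ 2 ∧
      ∃ i : Fin 6, q = gl k h i ∧ ((i < 3 ∧ 0 < k) ∨ (3 ≤ i ∧ k < 0)) := by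
  suffices H : ∃ k, k ^ 3 - h ^ 2 * k = 4 ∧ ∃ i, q = gl k h i by
    obtain ⟨k, hk, i, rfl⟩ := H
    rcases lt_or_ge i 3 with hi | hi
    · have := (gl_even hk i hi).1 hq
      exact ⟨k, hk, this.2, i, rfl, Or.inl ⟨hi, this.1⟩⟩
    · have := (gl_odd hk i hi).1 hq
      exact ⟨k, hk, this.2, i, rfl, Or.inr ⟨hi, this.1⟩⟩
  obtain ⟨⟨y0, z0⟩, y1, z1⟩ := q
  obtain ⟨⟨h0, h1, h2, h3⟩, -⟩ := (NL_iff _ _ _ _ _ _ _ _).1 hq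
  have a0 : y0 * z0 * (h - y0 - z0) = 0 := by linarith
  have a1 : (y0 + y1) * (z0 + z1) * (h - (y0 + y1) - (z0 + z1)) = 0 := by linarith
  have a2 : (y0 - y1) * (z0 - z1) * (h - (y0 - y1) - (z0 - z1)) = 0 := by linarith
  have hy : y1 ≠ 0 := by rintro rfl; norm_num at h3
  have hz : z1 ≠ 0 := by rintro rfl; norm_num at h3
  have hs : y1 + z1 ≠ 0 := by intro e; rw [e] at h3; norm_num at h3
  have ext : ∀ {q q' : Ln}, q.1.1 = q'.1.1 → q.1.2 = q'.1.2 → q.2.1 = q'.2.1 →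
    q.2.2 = q'.2.2 → q = q' := fun h1 h2 h3 h4 => Prod.ext (Prod.ext h1 h2) (Prod.ext h3 h4)
  rw [mul_eq_zero, mul_eq_zero] at a0 a1 a2
  rcases a0 with (a0 | a0) | a0 <;> rcases a1 with (a1 | a1) | a1 <;>
    rcases a2 with (a2 | a2) | a2
  all_goals first
    | exact absurd (by linarith : y1 = 0) hy
    | exact absurd (by linarith : z1 = 0) hz
    | exact absurd (by linarith : y1 + z1 = 0) hs
    | skip
  · have e : h = -2 * z1 - y1 := by linarith
    subst e
    refine ⟨y1, by linear_combination -4 * h3, 1, ext ?_ ?_ ?_ ?_⟩ <;> simp [gl] <;> linarith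
  · have e : h = 2 * z1 + y1 := by linarith
    subst e
    refine ⟨y1, by linear_combination -4 * h3, 3, ext ?_ ?_ ?_ ?_⟩ <;> simp [gl] <;> linarith
  · have e : h = -2 * y1 - z1 := by linarith
    subst e
    refine ⟨z1, by linear_combination -4 * h3, 4, ext ?_ ?_ ?_ ?_⟩ <;> simp [gl] <;> linarith
  · have e : h = 2 * y1 + z1 := by linarith
    subst e
    refine ⟨z1, by linear_combination -4 * h3, 0, ext ?_ ?_ ?_ ?_⟩ <;> simp [gl] <;> linarith
  · have e : h = z1 - y1 := by linarith
    subst e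
    refine ⟨-y1 - z1, by linear_combination -4 * h3, 2, ext ?_ ?_ ?_ ?_⟩ <;> simp [gl] <;> linarith
  · have e : h = y1 - z1 := by linarith
    subst e
    refine ⟨-y1 - z1, by linear_combination -4 * h3, 5, ext ?_ ?_ ?_ ?_⟩ <;> simp [gl] <;> linarith


lemma exists_root4 : ∃ k : ℝ, 0 < k ∧ k ^ 3 = 4 :=
  ⟨4 ^ ((1 : ℝ) / 3), by positivity, by
    rw [← Real.rpow_natCast, ← Real.rpow_mul (by norm_num)]; norm_num⟩

lemma T2_gl {k h : ℝ} (hk : k ^ 3 - h ^ 2 * k = 4) (h0 : 0 < k) (h3 : h ^ 2 < 3 * k ^ 2) :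
    T 2 (fun _ _ => 1) (smp 0 (-1) 0 h) := by
  refine T2_of rfl ((gl_even hk 1 (by decide)).2 ⟨h0, h3⟩) ((gl_even hk 0 (by decide)).2 ⟨h0, h3⟩)
    ?_
  have e1 : cc (gl k h 1) (gl k h 0) = (3 * k ^ 2 + h ^ 2) / 4 := by
    simp [cc, gl]; ring
  have e2 : dd (gl k h 1) (gl k h 0) = (3 * k ^ 2 - h ^ 2) / 2 := by
    simp [dd, gl]; ring
  rw [e1, e2]
  have : 0 < 3 * k ^ 2 - h ^ 2 := by linarith
  positivity

lemma T1_of_NL {l : L8} {q : Ln} (h : NL l q) : T 1 (fun _ _ => 1) l :=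
  ⟨fun _ => (_, _), fun _ => h, fun i j hij => absurd hij (by simp [Subsingleton.elim i j])⟩

lemma T1_of_T2 {l : L8} (h : T 2 (fun _ _ => 1) l) : T 1 (fun _ _ => 1) l := by
  obtain ⟨L, hL, -⟩ := h
  exact ⟨fun _ => L 0, fun _ => hL 0, fun i j hij => absurd hij (by simp [Subsingleton.elim i j])⟩

/-- The signs of the configuration of four lines which distinguishes two components. -/
def sig : Fin 4 → Fin 4 → ℝ := ![![0, 1, -1, 1], ![0, 0, 1, 1], ![0, 0, 0, -1], ![0, 0, 0, 0]]

/-- For `h = 0` there are only three left lines. -/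
lemma not_T4_g2 (σ : Fin 4 → Fin 4 → ℝ) : ¬ T 4 σ (smp 0 (-1) 0 0) := by
  intro hT
  obtain ⟨q, a, hq, hs⟩ := T_norm rfl (fun p v => fst_ne_zero p v) hT
  obtain ⟨k0, hk0, hk4⟩ := exists_root4
  have H : ∀ i, ∃ j : Fin 3, q i = gl k0 0 (j.castLE (by norm_num)) := by
    intro i
    obtain ⟨k, hk, -, j, hj, h⟩ := gl_all (hq i)
    have hk' : k ^ 3 = k0 ^ 3 := by rw [hk4]; linarith
    have e : k = k0 := (Odd.strictMono_pow (by decide : Odd 3)).injective hk'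
    subst e
    rcases h with ⟨hj3, -⟩ | ⟨-, hneg⟩
    · exact ⟨⟨j, hj3⟩, hj⟩
    · linarith
  choose e he using H
  obtain ⟨i, j, hij, hne⟩ := Fintype.exists_ne_map_eq_of_card_lt e (by simp)
  have hqe : q i = q j := by rw [he i, he j, hne]
  rcases lt_or_gt_of_ne hij with h | h
  · have := (hs i j h).1
    rw [hqe] at this
    simp [cc] at this
  · have := (hs j i h).1
    rw [hqe] at this
    simp [cc] at this

/-! ### The case `h² = 6` -/

/-- Numerical values of `√3`, `√6` and of their product. -/
lemma sqrt_bounds : ∃ s h : ℝ, s ^ 2 = 3 ∧ h ^ 2 = 6 ∧ h = √6 ∧ 1.732 < s ∧ s < 1.7321 ∧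
    2.449 < h ∧ h < 2.4495 ∧ 4.242 < s * h ∧ s * h < 4.243 := by
  have hs : √(3 : ℝ) ^ 2 = 3 := Real.sq_sqrt (by norm_num)
  have hh : √(6 : ℝ) ^ 2 = 6 := Real.sq_sqrt (by norm_num)
  have h1 : (1.732 : ℝ) < √3 := Real.lt_sqrt_of_sq_lt (by norm_num)
  have h2 : √(3 : ℝ) < 1.7321 := (Real.sqrt_lt' (by norm_num)).2 (by norm_num)
  have h3 : (2.449 : ℝ) < √6 := Real.lt_sqrt_of_sq_lt (by norm_num)
  have h4 : √(6 : ℝ) < 2.4495 := (Real.sqrt_lt' (by norm_num)).2 (by norm_num)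
  have e : √(3 : ℝ) * √6 = √18 := by
    rw [← Real.sqrt_mul (by norm_num)]; norm_num
  have h5 : (4.242 : ℝ) < √18 := Real.lt_sqrt_of_sq_lt (by norm_num)
  have h6 : √(18 : ℝ) < 4.243 := (Real.sqrt_lt' (by norm_num)).2 (by norm_num)
  exact ⟨√3, √6, hs, hh, rfl, h1, h2, h3, h4, e ▸ h5, e ▸ h6⟩

lemma cubic_even {s h : ℝ} (hs : s ^ 2 = 3) (hh : h ^ 2 = 6) :
    (1 + s) ^ 3 - h ^ 2 * (1 + s) = 4 := by
  rw [hh]; linear_combination (s + 3) * hs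

lemma cubic_odd {h : ℝ} (hh : h ^ 2 = 6) : (-2) ^ 3 - h ^ 2 * (-2) = (4 : ℝ) := by
  rw [hh]; norm_num

lemma T2_g3 {h : ℝ} (hh : h ^ 2 = 6) : T 2 (fun _ _ => 1) (smp 0 (-1) 0 h) := by
  obtain ⟨s, -, hs, -, -, h1, h2, -⟩ := sqrt_bounds
  refine T2_gl (cubic_even hs hh) (by linarith) ?_
  nlinarith

lemma T4_g3 : T 4 sig (smp 0 (-1) 0 (√6)) := by
  obtain ⟨s, h, hs, hh, e, h1, h2, h3, h4, h5, h6⟩ := sqrt_bounds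
  rw [← e]
  have n0 : NL (smp 0 (-1) 0 h) (gl (1 + s) h 0) :=
    (gl_even (cubic_even hs hh) 0 (by decide)).2 ⟨by linarith, by nlinarith⟩
  have n3 : ∀ i : Fin 6, 3 ≤ i → NL (smp 0 (-1) 0 h) (gl (-2) h i) := fun i hi =>
    (gl_odd (cubic_odd hh) i hi).2 ⟨by norm_num, by rw [hh]; norm_num⟩
  refine T_of_norm rfl ![gl (-2) h 3, gl (-2) h 5, gl (-2) h 4, gl (1 + s) h 0] ![1, -1, 1, -1]
    ?_ ?_ ?_
  · intro i
    fin_cases i <;> simp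
  · intro i
    fin_cases i
    · exact n3 3 le_rfl
    · exact n3 5 (by decide)
    · exact n3 4 (by decide)
    · exact n0
  · intro i j hij
    fin_cases i <;> fin_cases j
    all_goals first
      | exact absurd hij (by decide)
      | (simp [cc, dd, gl, sig]
         constructor <;> linarith)

/-- The left lines for `h = -√6`. -/
noncomputable def gm (s h : ℝ) : Fin 6 → Ln := fun i =>
  if i < 3 then gl (1 + s) (-h) i else gl (-2) (-h) i

/-- The signs of `cc` on pairs of left lines for `h = -√6`. -/
def tC : Fin 6 → Fin 6 → SignType :=
  ![![0, -1, 1, 1, -1, -1], ![1, 0, -1, -1, -1, 1], ![-1, 1, 0, -1, 1, -1],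
    ![-1, 1, 1, 0, 1, -1], ![1, 1, -1, -1, 0, 1], ![1, -1, 1, 1, -1, 0]]

/-- The signs of `dd` on pairs of left lines for `h = -√6`. -/
def tD : Fin 6 → Fin 6 → SignType :=
  ![![0, 1, 1, 1, 1, -1], ![1, 0, 1, 1, -1, 1], ![1, 1, 0, -1, 1, 1],
    ![1, 1, -1, 0, -1, -1], ![1, -1, 1, -1, 0, -1], ![-1, 1, 1, -1, -1, 0]]

lemma signs {s h : ℝ} (hs : s ^ 2 = 3) (hh : h ^ 2 = 6) (h1 : 1.732 < s) (h2 : s < 1.7321)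
    (h3 : 2.449 < h) (h4 : h < 2.4495) (h5 : 4.242 < s * h) (h6 : s * h < 4.243) (i j : Fin 6) :
    SignType.sign (cc (gm s h i) (gm s h j)) = tC i j ∧
    SignType.sign (dd (gm s h i) (gm s h j)) = tD i j := by
  have P : ∀ {x : ℝ}, 0 < x → SignType.sign x = 1 := fun h => sign_pos h
  have N : ∀ {x : ℝ}, x < 0 → SignType.sign x = -1 := fun h => sign_neg h
  fin_cases i <;> fin_cases j <;> simp [cc, dd, gm, gl, tC, tD] <;> constructor
  all_goals first
    | exact P (by linarith)
    | exact N (by linarith)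

/-- No four of the six lines have the signs required by `sig`. -/
lemma no_config : ∀ a b : Fin 6, tC a b * tD a b = 1 → ∀ c, tC b c * tD b c = 1 →
    tC a c * tD a c = -1 → tC a b * tC b c * tC a c = 1 → ∀ d, tC a d * tD a d = 1 →
    tC b d * tD b d = 1 → tC c d * tD c d = -1 → tC a b * tC b d * tC a d = 1 →
    tC b c * tC c d * tC b d = 1 → False := by
  decide

lemma not_T4_g3 : ¬ T 4 sig (smp 0 (-1) 0 (-√6)) := by
  obtain ⟨s, h, hs, hh, e, h1, h2, h3, h4, h5, h6⟩ := sqrt_bounds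
  rw [← e]
  intro hT
  obtain ⟨q, a, hq, hT⟩ := T_norm rfl (fun p v => fst_ne_zero p v) hT
  have H : ∀ i, ∃ j, q i = gm s h j := by
    intro i
    obtain ⟨k, hk, hk3, j, hj, hc⟩ := gl_all (hq i)
    have hf : (k + 2) * ((k - 1 - s) * (k - 1 + s)) = 0 := by
      linear_combination hk + k * hh - (k + 2) * hs
    have hs0 : 1 - s < 0 := by linarith
    refine ⟨j, ?_⟩
    rcases hc with ⟨hj3, hpos⟩ | ⟨hj3, hneg⟩
    · have : k = 1 + s := by
        rcases mul_eq_zero.1 hf with h0 | h0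
        · linarith
        rcases mul_eq_zero.1 h0 with h0 | h0 <;> linarith
      rw [hj, gm, if_pos hj3, this]
    · have : k = -2 := by
        rcases mul_eq_zero.1 hf with h0 | h0
        · linarith
        rcases mul_eq_zero.1 h0 with h0 | h0
        · linarith
        · have : k = 1 - s := by linarith
          subst this
          nlinarith
      rw [hj, gm, if_neg (not_lt.2 hj3), this]
  choose f hf using H
  have S := signs hs hh h1 h2 h3 h4 h5 h6
  simp only [hf] at hT
  have pair : ∀ i j, i < j → ∀ x : SignType, SignType.sign (sig i j) = x →
      tC (f i) (f j) * tD (f i) (f j) = x := by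
    intro i j hij x hx
    obtain ⟨c1, c2⟩ := hT i j hij
    rw [← (S (f i) (f j)).1, ← (S (f i) (f j)).2, ← hx, ← sign_mul]
    have c3 : 0 < sig i j * (cc (gm s h (f i)) (gm s h (f j))
        * dd (gm s h (f i)) (gm s h (f j))) := by
      have := mul_pos c1 c2
      have hne : a i * a j ≠ 0 := by
        intro h0
        rw [h0] at c1
        simp at c1
      have h2 : 0 < (a i * a j) ^ 2 := by positivity
      refine pos_of_mul_pos_right (a := (a i * a j) ^ 2) ?_ h2.le
      linarith
    rcases pos_and_pos_or_neg_and_neg_of_mul_pos c3 with ⟨u, v⟩ | ⟨u, v⟩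
    · rw [sign_pos u, sign_pos v]
    · rw [sign_neg u, sign_neg v]
  have triple : ∀ i j k, i < j → j < k →
      tC (f i) (f j) * tC (f j) (f k) * tC (f i) (f k) = 1 := by
    intro i j k hij hjk
    have c1 := (hT i j hij).1
    have c2 := (hT j k hjk).1
    have c3 := (hT i k (hij.trans hjk)).1
    rw [← (S (f i) (f j)).1, ← (S (f j) (f k)).1, ← (S (f i) (f k)).1, ← sign_mul, ← sign_mul]
    apply sign_pos
    have c4 := mul_pos (mul_pos c1 c2) c3
    refine pos_of_mul_pos_right (a := (a i * a j * a k) ^ 2) ?_ (sq_nonneg _)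
    linarith
  refine no_config (f 0) (f 1) (pair 0 1 (by decide) 1 ?_) (f 2) (pair 1 2 (by decide) 1 ?_)
    (pair 0 2 (by decide) (-1) ?_) (triple 0 1 2 (by decide) (by decide)) (f 3)
    (pair 0 3 (by decide) 1 ?_) (pair 1 3 (by decide) 1 ?_) (pair 2 3 (by decide) (-1) ?_)
    (triple 0 1 3 (by decide) (by decide)) (triple 1 2 3 (by decide) (by decide))
  all_goals simp [sig]

/-! ### Surfaces without left lines -/

lemma not_T1 {l : L8} (h : ∀ p v, ¬ Left l p v) (σ : Fin 1 → Fin 1 → ℝ) : ¬ T 1 σ l := by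
  rintro ⟨L, hL, -⟩
  exact h _ _ (hL 0)

lemma not_T1_of_NL {c b h : ℝ} (hn : ∀ q, ¬ NL (smp c b 0 h) q) (σ : Fin 1 → Fin 1 → ℝ) :
    ¬ T 1 σ (smp c b 0 h) :=
  not_T1 (fun _ _ hL => by
    obtain ⟨q, _, _, hq, -⟩ := hL.norm_form (fst_ne_zero _ _ hL)
    exact hn q hq) σ

lemma not_T1_g0 (σ : Fin 1 → Fin 1 → ℝ) : ¬ T 1 σ (smp 0 1 0 0) := by
  refine not_T1_of_NL ?_ σ
  rintro ⟨⟨y0, z0⟩, y1, z1⟩ hq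
  obtain ⟨⟨h0, h1, h2, h3⟩, -⟩ := (NL_iff _ _ _ _ _ _ _ _).1 hq
  -- each of the three cases forces one of the forms to be constant or a sum of squares to vanish
  have a0 : y0 * z0 * (y0 + z0) = 0 := by linarith
  rw [mul_eq_zero, mul_eq_zero] at a0
  rcases a0 with (rfl | rfl) | e
  · have e : y1 * z0 * (y1 + 2 * z1) = 0 := by linarith
    rw [mul_eq_zero, mul_eq_zero] at e
    rcases e with (rfl | rfl) | e
    · norm_num at h3
    · norm_num at h1
    · obtain rfl : y1 = -2 * z1 := by linarith
      nlinarith [sq_nonneg (z0 * z1), sq_nonneg z0, sq_nonneg z1]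
  · have e : z1 * y0 * (z1 + 2 * y1) = 0 := by linarith
    rw [mul_eq_zero, mul_eq_zero] at e
    rcases e with (rfl | rfl) | e
    · norm_num at h3
    · norm_num at h1
    · obtain rfl : z1 = -2 * y1 := by linarith
      nlinarith [sq_nonneg (y0 * y1), sq_nonneg y0, sq_nonneg y1]
  · obtain rfl : z0 = -y0 := by linarith
    have e : y0 * (z1 - y1) * (z1 + y1) = 0 := by linarith
    rw [mul_eq_zero, mul_eq_zero] at e
    rcases e with (rfl | e) | e
    · norm_num at h1
    · obtain rfl : y1 = z1 := by linarith
      nlinarith [sq_nonneg (y0 * y1), sq_nonneg y0, sq_nonneg y1]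
    · obtain rfl : z1 = -y1 := by linarith
      norm_num at h3

lemma root_unique {x y : ℝ} (hx : x ^ 3 - 3 * x + 5 / 2 = 0) (hy : y ^ 3 - 3 * y + 5 / 2 = 0) :
    x = y := by
  have bd : ∀ t : ℝ, t ^ 3 - 3 * t + 5 / 2 = 0 → t < -2 := by
    intro t ht
    by_contra hc
    push Not at hc
    nlinarith [sq_nonneg (t - 1), mul_nonneg (by linarith : 0 ≤ t + 2) (sq_nonneg (t - 1))]
  have h1 := bd x hx
  have h2 := bd y hy
  have : (x - y) * (x ^ 2 + x * y + y ^ 2 - 3) = 0 := by linear_combination hx - hy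
  rcases mul_eq_zero.1 this with h | h
  · linarith
  · nlinarith

/-- On the surfaces of the spherical samples there are no lines transversal to `x = const`: the
three forms would vanish at the unique root of `x³ - 3 x + 5/2`. -/
lemma not_T1_sph {τ : ℝ} (hτ : τ ^ 2 = 1) (σ : Fin 1 → Fin 1 → ℝ) :
    ¬ T 1 σ (smp (τ * (5 / 2)) (-3) 0 (τ * 3)) := by
  refine not_T1_of_NL ?_ σ
  rintro ⟨⟨y0, z0⟩, y1, z1⟩ hq
  obtain ⟨⟨h0, h1, h2, h3⟩, -⟩ := (NL_iff _ _ _ _ _ _ _ _).1 hq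
  have hτ3 : τ ^ 3 = τ := by linear_combination τ * hτ
  have hτ0 : τ ≠ 0 := by rintro rfl; norm_num at hτ
  have hy : y1 ≠ 0 := by rintro rfl; norm_num at h3
  have hz : z1 ≠ 0 := by rintro rfl; norm_num at h3
  have hs : y1 + z1 ≠ 0 := by intro e; rw [e] at h3; norm_num at h3
  have val : ∀ x : ℝ, (y0 + y1 * x) * (z0 + z1 * x) * (τ * 3 - (y0 + y1 * x) - (z0 + z1 * x))
      = x ^ 3 - 3 * x + τ * (5 / 2) := by
    intro x
    linear_combination -h0 - x * h1 - x ^ 2 * h2 - x ^ 3 * h3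
  have rt : ∀ x : ℝ, x ^ 3 - 3 * x + τ * (5 / 2) = 0 →
      (τ * x) ^ 3 - 3 * (τ * x) + 5 / 2 = 0 := by
    intro x hx
    linear_combination τ * hx + x ^ 3 * hτ3 - 5 / 2 * hτ
  have r1 := rt (-y0 / y1) (by rw [← val, show y0 + y1 * (-y0 / y1) = 0 by field_simp; ring]; ring)
  have r2 := rt (-z0 / z1) (by rw [← val, show z0 + z1 * (-z0 / z1) = 0 by field_simp; ring]; ring)
  obtain ⟨x, hx⟩ : ∃ x, x = (τ * 3 - y0 - z0) / (y1 + z1) := ⟨_, rfl⟩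
  have hx' : x * (y1 + z1) = τ * 3 - y0 - z0 := by rw [hx]; field_simp
  have r3 := rt x (by
    rw [← val, show τ * 3 - (y0 + y1 * x) - (z0 + z1 * x) = 0 by linarith]; ring)
  have e1 := mul_left_cancel₀ hτ0 (root_unique r1 r3)
  have e2 := mul_left_cancel₀ hτ0 (root_unique r2 r3)
  rw [div_eq_iff hy] at e1
  rw [div_eq_iff hz] at e2
  apply hτ0
  linarith

/-! ### The surface `x³ + x + 2 x (y + z) + y z (y + z) = 0` -/

lemma fst_ne_zero_g1 (p v : R3) (hL : Left (smp 0 1 2 0) p v) : v.1 ≠ 0 := by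
  intro hv
  have hw := hL.w2_pos
  have hd := hL.2.2
  have hne := hL.ne_zero
  obtain ⟨h0, h1, h2, h3⟩ := hL.1
  obtain ⟨x, y, z⟩ := p
  obtain ⟨v1, a, b⟩ := v
  simp only at hv
  subst hv
  simp only [w0, w1, w2, det3, fF, fg, fh, fc, dot, smp_0, smp_1, smp_2, smp_3, smp_4, smp_5,
    smp_6, smp_7] at *
  have e : a * b * (a + b) = 0 := by linarith
  rw [mul_eq_zero, mul_eq_zero] at e
  rcases e with (rfl | rfl) | e
  · have hb : b ≠ 0 := by rintro rfl; exact hne rfl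
    have hy : y = 0 := by
      have : b ^ 2 * y = 0 := by linarith
      exact (mul_eq_zero.1 this).resolve_left (pow_ne_zero _ hb)
    subst hy
    have hx : x = 0 := by
      have : b * x = 0 := by linarith
      exact (mul_eq_zero.1 this).resolve_left hb
    subst hx
    have : 0 < b ^ 6 := by positivity
    nlinarith
  · nlinarith [sq_nonneg (a ^ 2)]
  · obtain rfl : b = -a := by linarith
    nlinarith

/-- The left lines of the surface are given by the negative roots of `μ⁶ - 4 μ⁴ + 4` with
`μ⁴ > 3`. -/
lemma g1_line {μ : ℝ} (hμ : μ ≠ 0) (hr : μ ^ 6 - 4 * μ ^ 4 + 4 = 0) :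
    NL (smp 0 1 2 0) ((μ⁻¹, -μ⁻¹), (μ ^ 2 / 2 + μ, μ ^ 2 / 2 - μ)) ↔ μ < 0 ∧ 3 < μ ^ 4 := by
  have key : (0 < -2 * μ⁻¹ ∧ 0 < -2 * μ⁻¹ * (-4 * μ ^ 3 + 6 * μ⁻¹) - (-2 * μ) ^ 2) ↔
      μ < 0 ∧ 3 < μ ^ 4 := by
    refine and_congr ?_ ?_
    · have : 0 < -2 * μ⁻¹ ↔ μ⁻¹ < 0 := by constructor <;> intro h <;> linarith
      rw [this, inv_lt_zero]
    · have e : -2 * μ⁻¹ * (-4 * μ ^ 3 + 6 * μ⁻¹) - (-2 * μ) ^ 2 = 4 * (μ⁻¹) ^ 2 * (μ ^ 4 - 3) := by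
        field_simp; ring
      have : 0 < 4 * (μ⁻¹) ^ 2 := by positivity
      rw [e, mul_pos_iff_of_pos_left this, sub_pos]
  rw [← key]
  refine NL_iff_of ?_ ?_ ?_ ?_ ?_ ?_ ?_
  · ring
  · field_simp; ring
  · field_simp; ring
  · linear_combination hr / 4
  · field_simp; ring
  · field_simp; ring
  · field_simp; linear_combination -12 * hr

lemma g1_all {q : Ln} (hq : NL (smp 0 1 2 0) q) :
    ∃ μ : ℝ, μ < 0 ∧ 3 < μ ^ 4 ∧ μ ^ 6 - 4 * μ ^ 4 + 4 = 0 ∧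
      q = ((μ⁻¹, -μ⁻¹), (μ ^ 2 / 2 + μ, μ ^ 2 / 2 - μ)) := by
  obtain ⟨⟨y0, z0⟩, y1, z1⟩ := q
  obtain ⟨⟨h0, h1, h2, h3⟩, -⟩ := (NL_iff _ _ _ _ _ _ _ _).1 hq
  have hy : y1 ≠ 0 := by rintro rfl; norm_num at h3
  have hz : z1 ≠ 0 := by rintro rfl; norm_num at h3
  have hs : y1 + z1 ≠ 0 := by intro e; rw [e] at h3; norm_num at h3
  -- a form vanishing at `x = 0` together with the surface equation leads to a sum of two squares
  have key : ∀ k z1 z0 : ℝ, k ≠ 0 → 1 + 2 * z0 + k * z0 ^ 2 = 0 →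
      2 * k + 2 * z1 + k * z0 * (k + 2 * z1) = 0 → 1 + k * z1 * (k + z1) = 0 → False := by
    intro k z1 z0 hk e0 e1 e2
    have f1 : (2 + 2 * z0) * z1 = -k := by
      linear_combination -z0 * e1 + (k + 2 * z1) * e0
    have f2 : (2 + 2 * z0) * (k + z1) = (1 + 2 * z0) * k := by linear_combination f1
    have f3 : (k ^ 2 * z0) ^ 2 + (2 + 2 * z0) ^ 2 = 0 := by
      have : (2 + 2 * z0) ^ 2 * (k * z1 * (k + z1)) = k * (-k) * ((1 + 2 * z0) * k) := by
        rw [← f1, ← f2]; ring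
      have f4 : (2 + 2 * z0) ^ 2 * (k * z1 * (k + z1)) = -(2 + 2 * z0) ^ 2 := by
        linear_combination (2 + 2 * z0) ^ 2 * e2
      linear_combination f4 - this + k ^ 3 * e0
    have g1 : k ^ 2 * z0 = 0 := by nlinarith [sq_nonneg (k ^ 2 * z0), sq_nonneg (2 + 2 * z0)]
    have g2 : z0 = 0 := (mul_eq_zero.1 g1).resolve_left (pow_ne_zero _ hk)
    subst g2
    norm_num at e0
  have a0 : y0 * z0 * (y0 + z0) = 0 := by linarith
  rw [mul_eq_zero, mul_eq_zero] at a0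
  rcases a0 with (rfl | rfl) | e
  · exact (key y1 z1 z0 hy (by linarith) (by linarith) (by linarith)).elim
  · exact (key z1 y1 y0 hz (by linarith) (by linarith) (by linarith)).elim
  · obtain rfl : z0 = -y0 := by linarith
    have hy0 : y0 ≠ 0 := by rintro rfl; norm_num at h1
    have e1 : (y1 + z1) * y0 ^ 2 = 1 := by linarith
    have e2 : y0 * (y1 - z1) = 2 := by
      refine mul_left_cancel₀ hs ?_
      linarith
    obtain ⟨μ, hμ⟩ : ∃ μ, μ = y0⁻¹ := ⟨_, rfl⟩
    have hμ0 : μ ≠ 0 := by rw [hμ]; exact inv_ne_zero hy0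
    have hyμ : y0 = μ⁻¹ := by rw [hμ, inv_inv]
    subst hyμ
    have f1 : y1 + z1 = μ ^ 2 := by field_simp at e1; linarith
    have f2 : y1 - z1 = 2 * μ := by field_simp at e2; linarith
    have f3 : y1 = μ ^ 2 / 2 + μ := by linarith
    have f4 : z1 = μ ^ 2 / 2 - μ := by linarith
    subst f3 f4
    have hr : μ ^ 6 - 4 * μ ^ 4 + 4 = 0 := by linear_combination 4 * h3
    have := (g1_line hμ0 hr).1 hq
    exact ⟨μ, this.1, this.2, hr, rfl⟩

lemma g1_unique {ν ν' : ℝ} (h0 : 0 < ν) (h0' : 0 < ν') (h : ν ^ 3 - 4 * ν ^ 2 + 4 = 0)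
    (h' : ν' ^ 3 - 4 * ν' ^ 2 + 4 = 0) (h3 : 3 < ν ^ 2) (h3' : 3 < ν' ^ 2) : ν = ν' := by
  have bd : ∀ t : ℝ, 0 < t → t ^ 3 - 4 * t ^ 2 + 4 = 0 → 3 < t ^ 2 → 3 < t := by
    intro t h0 ht h3
    have h1 : 1.7 < t := by nlinarith
    by_contra hc
    push Not at hc
    nlinarith [mul_nonneg (sub_nonneg.2 h1.le) (sub_nonneg.2 hc),
      mul_nonneg (mul_nonneg (sub_nonneg.2 h1.le) (sub_nonneg.2 hc)) h0.le]
  have b1 := bd ν h0 h h3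
  have b2 := bd ν' h0' h' h3'
  have : (ν - ν') * (ν ^ 2 + ν * ν' + ν' ^ 2 - 4 * (ν + ν')) = 0 := by linear_combination h - h'
  rcases mul_eq_zero.1 this with e | e
  · linarith
  · nlinarith

lemma T1_g1 : T 1 (fun _ _ => 1) (smp 0 1 2 0) := by
  obtain ⟨ν, hν, hr⟩ : ∃ ν ∈ Icc (3 : ℝ) 4, ν ^ 3 - 4 * ν ^ 2 + 4 = 0 := by
    have := intermediate_value_Icc (a := (3 : ℝ)) (b := 4) (by norm_num)
      (f := fun ν => ν ^ 3 - 4 * ν ^ 2 + 4) (by fun_prop)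
    exact this ⟨by norm_num, by norm_num⟩
  have hs : √ν ^ 2 = ν := Real.sq_sqrt (by linarith [hν.1])
  have hp : 0 < √ν := Real.sqrt_pos.2 (by linarith [hν.1])
  refine T1_of_NL ((g1_line (μ := -√ν) (by linarith) ?_).2 ⟨by linarith, ?_⟩)
  · rw [show (-√ν) ^ 6 = (√ν ^ 2) ^ 3 by ring, show (-√ν) ^ 4 = (√ν ^ 2) ^ 2 by ring, hs]
    exact hr
  · rw [show (-√ν) ^ 4 = (√ν ^ 2) ^ 2 by ring, hs]
    nlinarith [hν.1]

lemma not_T2_g1 (σ : Fin 2 → Fin 2 → ℝ) : ¬ T 2 σ (smp 0 1 2 0) := by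
  intro hT
  obtain ⟨q, a, hq, hs⟩ := T_norm rfl fst_ne_zero_g1 hT
  obtain ⟨μ, m1, m2, m3, m4⟩ := g1_all (hq 0)
  obtain ⟨μ', n1, n2, n3, n4⟩ := g1_all (hq 1)
  have hm := m1.ne
  have hn := n1.ne
  have hν : μ ^ 2 = μ' ^ 2 := by
    refine g1_unique (by positivity) (by positivity) ?_ ?_ ?_ ?_
    all_goals ring_nf at *
    all_goals linarith
  have hμ : μ = μ' := by nlinarith
  have := (hs 0 1 (by decide)).1
  rw [m4, n4, hμ] at this
  simp [cc] at this

/-! ### The sample surfaces are nonsingular -/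

lemma smp_mem {c b k h : ℝ} (H : ∀ x y z : ℝ, 3 * x ^ 2 + b + k * y + k * z = 0 →
    2 * y * z + z ^ 2 + k * x - h * z = 0 → y ^ 2 + 2 * y * z + k * x - h * y = 0 →
    x ^ 3 + y ^ 2 * z + y * z ^ 2 + c + b * x + k * (x * y) + k * (x * z) - h * (y * z) ≠ 0) :
    smp c b k h ∈ U := by
  refine ⟨by simp [smp_7], ?_⟩
  rintro ⟨x, y, z⟩ hF hg
  simp only [fF, fg, smp_0, smp_1, smp_2, smp_3, smp_4, smp_5, smp_6, smp_7,
    Prod.mk_eq_zero] at hF hg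
  obtain ⟨h1, h2, h3⟩ := hg
  exact H x y z (by linarith) (by linarith) (by linarith) (by linarith)

/-- The critical points of `y z (y + z - h)`. -/
lemma crit_yz {y z h : ℝ} (h2 : 2 * y * z + z ^ 2 - h * z = 0)
    (h3 : y ^ 2 + 2 * y * z - h * y = 0) :
    (y = 0 ∧ z = 0) ∨ (y = h ∧ z = 0) ∨ (y = 0 ∧ z = h) ∨ (y = h / 3 ∧ z = h / 3) := by
  have e2 : z * (2 * y + z - h) = 0 := by linarith
  have e3 : y * (y + 2 * z - h) = 0 := by linarith
  rcases mul_eq_zero.1 e2 with a | a <;> rcases mul_eq_zero.1 e3 with b | b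
  · exact Or.inl ⟨b, a⟩
  · exact Or.inr (Or.inl ⟨by linarith, a⟩)
  · exact Or.inr (Or.inr (Or.inl ⟨b, by linarith⟩))
  · exact Or.inr (Or.inr (Or.inr ⟨by linarith, by linarith⟩))

lemma mem_g0 : smp 0 1 0 0 ∈ U := smp_mem fun x y z h1 _ _ _ => by nlinarith [sq_nonneg x]

lemma mem_g1 : smp 0 1 2 0 ∈ U := smp_mem fun x y z h1 h2 h3 hF => by
  have e : (y - z) * (y + z) = 0 := by linarith
  rcases mul_eq_zero.1 e with e | e
  · obtain rfl : y = z := by linarith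
    have hx : x = -(3 / 2) * y ^ 2 := by linarith
    -- the Euler relation gives `2 x / 3 + 4 x y / 3 = 0` on the zero level
    have : y ^ 2 * (1 + 2 * y) = 0 := by
      rw [hx] at h1 hF
      linear_combination -hF - (1 / 2 * y ^ 2) * h1
    rcases mul_eq_zero.1 this with h | h
    · have : y = 0 := pow_eq_zero_iff two_ne_zero |>.1 h
      subst this
      norm_num at h1
      nlinarith [sq_nonneg x]
    · obtain rfl : y = -1 / 2 := by linarith
      subst hx
      norm_num at h1
  · nlinarith [sq_nonneg x]

lemma mem_of_neg_one {h : ℝ} (hh : h ^ 2 = 0 ∨ h ^ 2 = 6) : smp 0 (-1) 0 h ∈ U :=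
  smp_mem fun x y z h1 h2 h3 hF => by
  have hx : x ^ 2 = 1 / 3 := by linarith
  have hx3 : x ^ 3 - x = -(2 / 3) * x := by linear_combination x * hx
  have key : y ^ 2 * z + y * z ^ 2 - h * (y * z) = 2 / 3 * x := by linarith
  have key2 : (y ^ 2 * z + y * z ^ 2 - h * (y * z)) ^ 2 = 4 / 27 := by
    rw [key]; linear_combination 4 / 9 * hx
  have h6 : h ^ 6 = 0 ∨ h ^ 6 = 216 := by
    have : h ^ 6 = (h ^ 2) ^ 3 := by ring
    rcases hh with hh | hh
    · left; rw [this, hh]; norm_num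
    · right; rw [this, hh]; norm_num
  rcases crit_yz (h := h) (y := y) (z := z) (by linarith) (by linarith) with
    ⟨rfl, rfl⟩ | ⟨rfl, rfl⟩ | ⟨rfl, rfl⟩ | ⟨rfl, rfl⟩
  · norm_num at key2
  · norm_num at key2
  · norm_num at key2
  · have : h ^ 6 / 729 = 4 / 27 := by linear_combination key2
    rcases h6 with h6 | h6 <;> rw [h6] at this <;> norm_num at this

lemma sq_eq_one {x : ℝ} (h : x ^ 2 = 1) : x = 1 ∨ x = -1 := by
  rcases mul_eq_zero.1 (by linarith : (x - 1) * (x + 1) = 0) with h | h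
  · left; linarith
  · right; linarith

lemma mem_sphm : smp (5 / 2) (-3) 0 3 ∈ U := smp_mem fun x y z h1 h2 h3 hF => by
  have hx := sq_eq_one (x := x) (by linarith)
  rcases crit_yz (h := 3) (y := y) (z := z) (by linarith) (by linarith) with
    ⟨rfl, rfl⟩ | ⟨rfl, rfl⟩ | ⟨rfl, rfl⟩ | ⟨rfl, rfl⟩ <;> rcases hx with rfl | rfl <;>
    norm_num at hF

lemma mem_sphp : smp (-(5 / 2)) (-3) 0 (-3) ∈ U := by
  rw [← sg_smp, sg_eq]
  exact scale_mem (by norm_num) mem_sphm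

/-! ### Ovals of the sample surfaces -/

lemma not_Ep_g0 : ¬ Ep (smp 0 1 0 0) := by
  rintro ⟨⟨x, y, z⟩, hg, -⟩
  simp only [fg, smp_1, smp_4, smp_5, smp_7, Prod.mk_eq_zero] at hg
  nlinarith [sq_nonneg x, hg.1]

lemma Ep_sphm : Ep (smp (5 / 2) (-3) 0 3) := by
  refine ⟨(1, 1, 1), ?_, ?_, ?_⟩
  · simp only [fg, smp_1, smp_2, smp_3, smp_4, smp_5, smp_6, smp_7, Prod.mk_eq_zero]
    norm_num
  · simp only [fF, smp_0, smp_1, smp_2, smp_3, smp_4, smp_5, smp_6, smp_7]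
    norm_num
  rintro ⟨x, u, w⟩ hv
  have eF : fF (smp (5 / 2) (-3) 0 3) (1, 1, 1) = -(1 / 2) := by
    simp only [fF, smp_0, smp_1, smp_2, smp_3, smp_4, smp_5, smp_6, smp_7]
    norm_num
  have eH : qH (smp (5 / 2) (-3) 0 3) (1, 1, 1) (x, u, w) = 3 * x ^ 2 + (u ^ 2 + u * w + w ^ 2) := by
    simp only [qH, fh, dot, smp_4, smp_5, smp_6, smp_7]
    ring
  have eC : qC (smp (5 / 2) (-3) 0 3) (x, u, w) = x ^ 3 + u * w * (u + w) := by
    simp only [qC, fc, dot, smp_7]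
    ring
  rw [eF, eH, eC]
  have hN : 0 ≤ u ^ 2 + u * w + w ^ 2 := by nlinarith [sq_nonneg (u + w), sq_nonneg u, sq_nonneg w]
  have hD : 27 * (u * w * (u + w)) ^ 2 ≤ 4 * (u ^ 2 + u * w + w ^ 2) ^ 3 := by
    nlinarith [sq_nonneg ((u - w) * (2 * u + w) * (u + 2 * w))]
  have hpos : 0 < 3 * x ^ 2 + (u ^ 2 + u * w + w ^ 2) := by
    by_contra hc
    apply hv
    have hx : x = 0 := by nlinarith [sq_nonneg x]
    subst hx
    have hu : u = 0 := by nlinarith [sq_nonneg (u + 2 * w), sq_nonneg u]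
    subst hu
    have hw : w = 0 := by nlinarith [sq_nonneg w]
    subst hw
    rfl
  generalize u ^ 2 + u * w + w ^ 2 = N at *
  generalize u * w * (u + w) = C at *
  have h3 : 0 < (3 * x ^ 2 + N) ^ 3 := by positivity
  -- the two terms of `x³ + C` are estimated separately, using `(a + b)² ≤ 2 a² + 2 b²`
  have : 27 * x ^ 6 + 27 * C ^ 2 ≤ 4 * (3 * x ^ 2 + N) ^ 3 - 81 * x ^ 6 := by
    have : 0 ≤ x ^ 4 * N := by positivity
    have : 0 ≤ x ^ 2 * N ^ 2 := by positivity
    nlinarith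
  have h4 : 27 * (x ^ 3 + C) ^ 2 ≤ 54 * x ^ 6 + 54 * C ^ 2 := by nlinarith [sq_nonneg (x ^ 3 - C)]
  have h5 : 54 * x ^ 6 + 54 * C ^ 2 ≤ 8 * (3 * x ^ 2 + N) ^ 3 := by
    have : 0 ≤ x ^ 6 := by positivity
    nlinarith
  rcases eq_or_ne x 0 with hx | hx
  · subst hx
    have : N ^ 3 > 0 := by nlinarith
    nlinarith
  · have : 0 < x ^ 6 := by positivity
    nlinarith

lemma not_Ep_sphp : ¬ Ep (smp (-(5 / 2)) (-3) 0 (-3)) := by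
  rintro ⟨⟨x, y, z⟩, hg, hF, hv⟩
  simp only [fg, smp_1, smp_2, smp_3, smp_4, smp_5, smp_6, smp_7, Prod.mk_eq_zero] at hg
  obtain ⟨g1, g2, g3⟩ := hg
  -- at each critical point the Hessian is not positive definite
  have bad : ∀ v : R3, v ≠ 0 → 0 < qH (smp (-(5 / 2)) (-3) 0 (-3)) (x, y, z) v := by
    intro v hv0
    have h1 := hv v hv0
    have h2 : 0 ≤ 27 * (-fF (smp (-(5 / 2)) (-3) 0 (-3)) (x, y, z))
      * qC (smp (-(5 / 2)) (-3) 0 (-3)) v ^ 2 := mul_nonneg (by linarith) (sq_nonneg _)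
    by_contra hc
    push Not at hc
    have : qH (smp (-(5 / 2)) (-3) 0 (-3)) (x, y, z) v ^ 3 ≤ 0 := Odd.pow_nonpos (by decide) hc
    linarith
  have b1 := bad (0, 1, -1) (by simp)
  simp only [qH, fh, dot, smp_4, smp_5, smp_6, smp_7] at b1
  rcases crit_yz (h := -3) (y := y) (z := z) (by linarith) (by linarith) with
    ⟨rfl, rfl⟩ | ⟨rfl, rfl⟩ | ⟨rfl, rfl⟩ | ⟨rfl, rfl⟩ <;> norm_num at b1

/-! ### Invariants separating the seven samples -/

/-- A property of parameters which is constant on connected families of nonsingular surfaces. -/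
def Inv (P : L8 → Prop) : Prop :=
  ∀ K, IsPreconnected K → K ⊆ U → ∀ a ∈ K, ∀ b ∈ K, P a ↔ P b

lemma inv_T (k : ℕ) (σ : Fin k → Fin k → ℝ) : Inv (T k σ) :=
  fun _ hK hKU _ ha _ hb => T_const hK hKU ha hb

lemma inv_Ep : Inv Ep := fun _ hK hKU _ ha _ hb => Ep_const hK hKU ha hb

lemma Inv.sg {P : L8 → Prop} (h : Inv P) : Inv (fun l => P (sg l)) := by
  intro K hK hKU a ha b hb
  simp only [sg_eq]
  refine h (scale (-1) '' K) (hK.image _ (by fun_prop)) ?_ _ ⟨a, ha, rfl⟩ _ ⟨b, hb, rfl⟩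
  rintro _ ⟨l, hl, rfl⟩
  exact scale_mem (by norm_num) (hKU hl)

/-- The seven samples. -/
noncomputable def spl : Fin 7 → L8 :=
  ![smp 0 1 0 0, smp 0 1 2 0, smp 0 (-1) 0 0, smp 0 (-1) 0 (√6), smp 0 (-1) 0 (-√6),
    smp (5 / 2) (-3) 0 3, smp (-(5 / 2)) (-3) 0 (-3)]

lemma spl_mem (i : Fin 7) : spl i ∈ U := by
  have h6 : (√6) ^ 2 = (6 : ℝ) := Real.sq_sqrt (by norm_num)
  fin_cases i
  · exact mem_g0
  · exact mem_g1
  · exact mem_of_neg_one (Or.inl (by norm_num))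
  · exact mem_of_neg_one (Or.inr h6)
  · exact mem_of_neg_one (Or.inr (by rw [neg_sq, h6]))
  · exact mem_sphm
  · exact mem_sphp

lemma spl_seven (i : Fin 7) : spl i 7 = 0 := by
  fin_cases i <;> rfl

/-- The propositional part of `spl_sep`: the truth values of six properties listed here
distinguish the samples. -/
lemma sep_aux {A B C D E F : L8 → Prop} (a0 : ¬ A (spl 0)) (a1 : A (spl 1)) (a2 : A (spl 2))
    (a3 : A (spl 3)) (a4 : A (spl 4)) (a5 : ¬ A (spl 5)) (a6 : ¬ A (spl 6)) (b1 : ¬ B (spl 1))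
    (b2 : B (spl 2)) (b3 : B (spl 3)) (b4 : B (spl 4)) (c2 : ¬ C (spl 2)) (c3 : C (spl 3))
    (c4 : ¬ C (spl 4)) (d2 : ¬ D (spl 2)) (d4 : D (spl 4)) (e0 : ¬ E (spl 0))
    (e5 : E (spl 5)) (e6 : ¬ E (spl 6)) (f0 : ¬ F (spl 0)) (f6 : F (spl 6))
    (i j : Fin 7) (HA : A (spl i) ↔ A (spl j)) (HB : B (spl i) ↔ B (spl j))
    (HC : C (spl i) ↔ C (spl j)) (HD : D (spl i) ↔ D (spl j)) (HE : E (spl i) ↔ E (spl j))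
    (HF : F (spl i) ↔ F (spl j)) : i = j := by
  generalize spl = s at *
  fin_cases i <;> fin_cases j <;> first | rfl | (exfalso; simp_all)

lemma spl_sep (i j : Fin 7) (H : ∀ P, Inv P → (P (spl i) ↔ P (spl j))) : i = j := by
  have h6 : (√6) ^ 2 = (6 : ℝ) := Real.sq_sqrt (by norm_num)
  have H1 := H _ (inv_T 1 fun _ _ => 1)
  have H2 := H _ (inv_T 2 fun _ _ => 1)
  have H3 := H _ (inv_T 4 sig)
  have H4 := H _ (inv_T 4 sig).sg
  have H5 := H _ inv_Ep
  have H6 := H _ inv_Ep.sg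
  clear H
  -- existence of a left line
  have a0 := not_T1_g0 fun _ _ => 1
  have a1 := T1_g1
  have b2 : T 2 (fun _ _ => 1) (smp 0 (-1) 0 0) := by
    obtain ⟨k, hk, hk3⟩ := exists_root4
    exact T2_gl (k := k) (by rw [hk3]; ring) hk (by nlinarith)
  have b3 := T2_g3 h6
  have b4 := T2_g3 (h := -√6) (by rw [neg_sq, h6])
  have a2 := T1_of_T2 b2
  have a3 := T1_of_T2 b3
  have a4 := T1_of_T2 b4
  have a5 : ¬ T 1 (fun _ _ => 1) (smp (5 / 2) (-3) 0 3) := by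
    simpa using not_T1_sph (τ := 1) (by norm_num) fun _ _ => 1
  have a6 : ¬ T 1 (fun _ _ => 1) (smp (-(5 / 2)) (-3) 0 (-3)) := by
    simpa using not_T1_sph (τ := -1) (by norm_num) fun _ _ => 1
  -- existence of two left lines of positive sign
  have b1 := not_T2_g1 fun _ _ => 1
  -- existence of a quadruple of left lines of the type `sig`
  have c2 := not_T4_g2 sig
  have c3 := T4_g3
  have c4 := not_T4_g3
  have d2 : ¬ T 4 sig (sg (smp 0 (-1) 0 0)) := by rw [sg_smp, neg_zero]; exact c2
  have d4 : T 4 sig (sg (smp 0 (-1) 0 (-√6))) := by rw [sg_smp, neg_zero, neg_neg]; exact c3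
  -- existence of an oval containing negative values
  have e0 := not_Ep_g0
  have e5 := Ep_sphm
  have e6 := not_Ep_sphp
  have f0 : ¬ Ep (sg (smp 0 1 0 0)) := by rw [sg_smp, neg_zero]; exact e0
  have f6 : Ep (sg (smp (-(5 / 2)) (-3) 0 (-3))) := by rw [sg_smp, neg_neg, neg_neg]; exact e5
  have s0 : spl 0 = smp 0 1 0 0 := rfl
  have s1 : spl 1 = smp 0 1 2 0 := rfl
  have s2 : spl 2 = smp 0 (-1) 0 0 := rfl
  have s3 : spl 3 = smp 0 (-1) 0 (√6) := rfl
  have s4 : spl 4 = smp 0 (-1) 0 (-√6) := rfl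
  have s5 : spl 5 = smp (5 / 2) (-3) 0 3 := rfl
  have s6 : spl 6 = smp (-(5 / 2)) (-3) 0 (-3) := rfl
  rw [← s0] at a0 e0 f0
  rw [← s1] at a1 b1
  rw [← s2] at a2 b2 c2 d2
  rw [← s3] at a3 b3 c3
  rw [← s4] at a4 b4 c4 d4
  rw [← s5] at a5 e5
  rw [← s6] at a6 e6 f6
  exact sep_aux (D := fun l => T 4 sig (sg l)) (F := fun l => Ep (sg l)) a0 a1 a2 a3 a4 a5 a6
    b1 b2 b3 b4 c2 c3 c4 d2 d4 e0 e5 e6 f0 f6 i j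
    H1 H2 H3 H4 H5 H6

/-! ### From the local discriminant to the space of nonsingular surfaces -/

/-- The triple of coordinates of a point of Euclidean space. -/
noncomputable def co (p : EuclideanSpace ℝ (Fin 3)) : R3 := (p 0, p 1, p 2)

lemma P81Def_eq (p : EuclideanSpace ℝ (Fin 3)) (l : EuclideanSpace ℝ (Fin 8)) :
    P81Def p l = fF l.ofLp (co p) := rfl

lemma fderiv_P81Def (p d : EuclideanSpace ℝ (Fin 3)) (l : EuclideanSpace ℝ (Fin 8)) :
    fderiv ℝ (fun q => P81Def q l) p d = dot (fg l.ofLp (co p)) (co d) := by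
  refine deriv_along (by unfold P81Def; fun_prop) (cubic_deriv fun s => ?_)
  have e : ∀ s : ℝ, P81Def (p + s • d) l = fF l.ofLp (co p) + s * dot (fg l.ofLp (co p)) (co d)
      + s ^ 2 * (dot (fh l.ofLp (co p) (co d)) (co d) / 2)
      + s ^ 3 * (dot (fc l.ofLp (co d)) (co d) / 3) := fun s => by
    rw [← fF_line, P81Def_eq]
    rfl
  simp only [e]
  ring

lemma fderiv_eq_zero_iff (p : EuclideanSpace ℝ (Fin 3)) (l : EuclideanSpace ℝ (Fin 8)) :
    fderiv ℝ (fun q => P81Def q l) p = 0 ↔ fg l.ofLp (co p) = 0 := by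
  constructor
  · intro h
    refine eq_zero_of_dot fun w => ?_
    have := fderiv_P81Def p !₂[w.1, w.2.1, w.2.2] l
    rw [h] at this
    exact this.symm
  · intro h
    ext d
    rw [fderiv_P81Def, h]
    simp [dot]

lemma not_mem_disc {l : EuclideanSpace ℝ (Fin 8)} (h : l.ofLp ∈ U) (ε δ : ℝ) :
    l ∉ P81Disc ε δ := by
  rintro ⟨-, p, -, hp, hd⟩
  exact h.2 (co p) hp ((fderiv_eq_zero_iff p l).1 hd)

lemma abs_coord_le {n : ℕ} (l : EuclideanSpace ℝ (Fin n)) (i : Fin n) : |l i| ≤ ‖l‖ := by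
  simpa using PiLp.norm_apply_le l i

/-- For small parameters all critical points are close to the origin, so that the complement of
the local discriminant consists of nonsingular surfaces. -/
lemma exists_delta {ε : ℝ} (hε : 0 < ε) : ∃ δ : ℝ, 0 < δ ∧
    ∀ l : EuclideanSpace ℝ (Fin 8), ‖l‖ < δ → l ∉ P81Disc ε δ → l.ofLp ∈ U := by
  obtain ⟨R, hR⟩ := crit_bound 1
  obtain ⟨t, ht0, ht1, htR⟩ : ∃ t : ℝ, 0 < t ∧ t ≤ 1 ∧ 3 * (t * R) ≤ ε := by
    refine ⟨min 1 (ε / (3 * (|R| + 1))), by positivity, min_le_left _ _, ?_⟩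
    have h1 : min 1 (ε / (3 * (|R| + 1))) * (3 * (|R| + 1)) ≤ ε := by
      rw [← le_div_iff₀ (by positivity)]; exact min_le_right _ _
    have h2 : 0 < min 1 (ε / (3 * (|R| + 1))) := by positivity
    nlinarith [le_abs_self R]
  refine ⟨t ^ 3, by positivity, fun l hl hn => ?_⟩
  have hc : ∀ i, |l i| < t ^ 3 := fun i => (abs_coord_le l i).trans_lt hl
  have t32 : t ^ 3 ≤ t ^ 2 := pow_le_pow_of_le_one ht0.le ht1 (by norm_num)
  have t31 : t ^ 3 ≤ t := by simpa using pow_le_pow_of_le_one ht0.le ht1 (show 1 ≤ 3 by norm_num)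
  have t30 : t ^ 3 ≤ 1 := pow_le_one₀ ht0.le ht1
  have h7 : |l.ofLp 7| < 1 := (hc 7).trans_le t30
  refine ⟨h7, fun p hF hg => hn ?_⟩
  -- the parameters rescaled by `t` have norm at most `1`
  have hs : scale t (scale t⁻¹ l.ofLp) = l.ofLp := by
    funext i
    fin_cases i <;> simp [scale] <;> field_simp
  have hb : ‖scale t⁻¹ l.ofLp‖ ≤ 1 := by
    rw [pi_norm_le_iff_of_nonneg zero_le_one]
    have key : ∀ (n : ℕ) (i : Fin 8), t ^ 3 ≤ t ^ n → |t⁻¹ ^ n * l i| ≤ 1 := by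
      intro n i hn
      rw [abs_mul, inv_pow, abs_inv, abs_of_pos (pow_pos ht0 n), inv_mul_le_iff₀ (pow_pos ht0 n),
        mul_one]
      exact (hc i).le.trans hn
    intro i
    rw [Real.norm_eq_abs]
    fin_cases i
    · exact key 3 0 le_rfl
    · exact key 2 1 t32
    · exact key 2 2 t32
    · exact key 2 3 t32
    · simpa [scale] using key 1 4 (by simpa using t31)
    · simpa [scale] using key 1 5 (by simpa using t31)
    · simpa [scale] using key 1 6 (by simpa using t31)
    · exact h7.le
  have hp : ‖t⁻¹ • p‖ ≤ R := by
    refine hR (scale t⁻¹ l.ofLp) _ hb h7.le ?_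
    rw [fg_scale, hg, smul_zero]
  rw [norm_smul, norm_inv, Real.norm_eq_abs, abs_of_pos ht0, inv_mul_le_iff₀ ht0] at hp
  refine ⟨hl, !₂[p.1, p.2.1, p.2.2], ?_, hF, ?_⟩
  · have a1 : |p.1| ≤ ‖p‖ := norm_fst_le p
    have a2 : |p.2.1| ≤ ‖p‖ := (norm_fst_le p.2).trans (norm_snd_le p)
    have a3 : |p.2.2| ≤ ‖p‖ := (norm_snd_le p.2).trans (norm_snd_le p)
    have h0 : 0 ≤ ‖p‖ := norm_nonneg p
    refine le_trans ?_ htR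
    refine le_trans ?_ (mul_le_mul_of_nonneg_left hp (by norm_num : (0 : ℝ) ≤ 3))
    rw [EuclideanSpace.norm_eq, Real.sqrt_le_left (by positivity), Fin.sum_univ_three]
    simp only [Real.norm_eq_abs]
    change |p.1| ^ 2 + |p.2.1| ^ 2 + |p.2.2| ^ 2 ≤ _
    nlinarith [abs_nonneg p.1, abs_nonneg p.2.1, abs_nonneg p.2.2]
  · exact (fderiv_eq_zero_iff _ l).2 hg

lemma exists_small {δ : ℝ} (hδ : 0 < δ) : ∃ t : ℝ, 0 < t ∧
    ∀ i, ‖WithLp.toLp 2 (scale t (spl i))‖ < δ := by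
  have h : ∀ i, ∀ᶠ t in 𝓝[>] (0 : ℝ), ‖WithLp.toLp 2 (scale t (spl i))‖ < δ := by
    intro i
    have hc : Continuous fun t : ℝ => ‖WithLp.toLp 2 (scale t (spl i))‖ := by
      have : Continuous fun t : ℝ => scale t (spl i) := by fun_prop
      fun_prop
    have h0 : scale 0 (spl i) = 0 := by
      have h7 := spl_seven i
      funext j
      fin_cases j <;> simp [scale, h7]
    refine (hc.tendsto 0).mono_left nhdsWithin_le_nhds |>.eventually_lt_const ?_
    rw [h0]
    simpa using hδ
  obtain ⟨t, ht, ht0⟩ := ((eventually_all.2 h).and self_mem_nhdsWithin).exists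
  exact ⟨t, ht0, ht⟩

end P81

/-- The complement of the local discriminant of the `P₈¹` singularity has at least 7
connected components. -/
theorem P81_discriminant_complement_components :
    ∃ ε₀ : ℝ, 0 < ε₀ ∧ ∀ ε : ℝ, 0 < ε → ε ≤ ε₀ → ∃ δ : ℝ, 0 < δ ∧
      ∃ pts : Fin 7 → EuclideanSpace ℝ (Fin 8),
        (∀ i, pts i ∈ ({l : EuclideanSpace ℝ (Fin 8) | ‖l‖ < δ} \ P81Disc ε δ)) ∧
        Function.Injective (fun i =>
          connectedComponentIn ({l : EuclideanSpace ℝ (Fin 8) | ‖l‖ < δ} \ P81Disc ε δ)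
            (pts i)) := by
  refine ⟨1, one_pos, fun ε hε _ => ?_⟩
  obtain ⟨δ, hδ, hU⟩ := P81.exists_delta hε
  obtain ⟨t, ht, hsmall⟩ := P81.exists_small hδ
  have hmem : ∀ i, WithLp.toLp 2 (P81.scale t (P81.spl i)) ∈
      ({l : EuclideanSpace ℝ (Fin 8) | ‖l‖ < δ} \ P81Disc ε δ) := fun i =>
    ⟨hsmall i, P81.not_mem_disc (P81.scale_mem ht.ne' (P81.spl_mem i)) ε δ⟩
  refine ⟨δ, hδ, fun i => WithLp.toLp 2 (P81.scale t (P81.spl i)), hmem, fun i j hij => ?_⟩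
  refine P81.spl_sep i j fun P hP => ?_
  rw [← P81.isPreconnected_scale hP (P81.spl_mem i) ht,
    ← P81.isPreconnected_scale hP (P81.spl_mem j) ht]
  -- a common component would be mapped to a connected family of nonsingular surfaces
  refine hP (WithLp.ofLp '' connectedComponentIn
    ({l : EuclideanSpace ℝ (Fin 8) | ‖l‖ < δ} \ P81Disc ε δ)
    (WithLp.toLp 2 (P81.scale t (P81.spl i)))) ?_ ?_ _ ?_ _ ?_
  · exact isPreconnected_connectedComponentIn.image _ (by fun_prop)
  · rintro _ ⟨l, hl, rfl⟩
    have := connectedComponentIn_subset _ _ hl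
    exact hU l this.1 this.2
  · exact ⟨_, mem_connectedComponentIn (hmem i), rfl⟩
  · refine ⟨WithLp.toLp 2 (P81.scale t (P81.spl j)), ?_, rfl⟩
    simp only at hij
    rw [hij]
    exact mem_connectedComponentIn (hmem j)
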